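/- arXiv:2507.15196 — 2 statements merged into one kernel-verified Lean document; each statement's English description precedes it below -/
import Mathlib

section
/- Let 1/2 < s < 1 and C, R > 0. Let W be a (2s, C)-Frostman random variable with values in the ball B(0,R) ⊂ ℝ², and let W' be an independent copy of W. Then there exist a constant ε₀ = ε₀(s) > 0, an absolute constant A > 0, and a constant B_s > 0 depending only on s, such that for all n ∈ ℕ, Hₙ(|W − W'|²) ≥ n(s + ε₀) − A·log₊C − A·log₊R − B_s. -/
open MeasureTheory ProbabilityTheory Real

/-- The dyadic discretization map `D_n(x) = 2^{-n} ⌊2^n x⌋`. -/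
noncomputable def Dn (n : ℕ) (x : ℝ) : ℝ := (⌊(2 : ℝ) ^ n * x⌋ : ℝ) / (2 : ℝ) ^ n

/-- Shannon entropy (base 2) of the discrete random variable `f` under `P`. -/
noncomputable def entOf {Ω : Type*} [MeasurableSpace Ω] {S : Type*}
    (P : Measure Ω) (f : Ω → S) : ℝ :=
  ∑' s : S, -((P (f ⁻¹' {s})).toReal * Real.logb 2 (P (f ⁻¹' {s})).toReal)

/-- `H_n(X)`: entropy of `D_n(X)`. -/
noncomputable def Hn {Ω : Type*} [MeasurableSpace Ω] (P : Measure Ω) (n : ℕ) (X : Ω → ℝ) : ℝ :=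
  entOf P (fun ω => Dn n (X ω))

/-- `X` is `(s,C)`-Frostman: `P(X ∈ B(z,r)) ≤ C r^s` for every ball. -/
def Frostman {Ω : Type*} [MeasurableSpace Ω] {E : Type*} [PseudoMetricSpace E]
    (P : Measure Ω) (X : Ω → E) (s C : ℝ) : Prop :=
  ∀ (z : E) (r : ℝ), 0 < r → (P (X ⁻¹' Metric.ball z r)).toReal ≤ C * r ^ s

/-- `log₊ x = max (log₂ x) 0`. -/
noncomputable def logPlus (x : ℝ) : ℝ := max (Real.logb 2 x) 0


noncomputable def bJ (x : ℝ) : ℝ := ∫ θ in (0:ℝ)..(2 * π), Real.cos (x * Real.cos θ)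

lemma bJ_eq (x : ℝ) : bJ x = 4 * ∫ θ in (0:ℝ)..(π / 2), Real.cos (x * Real.cos θ) := by
  have hc : Continuous (fun θ : ℝ => Real.cos (x * Real.cos θ)) := by fun_prop
  have hi : ∀ a b : ℝ, IntervalIntegrable (fun θ : ℝ => Real.cos (x * Real.cos θ)) volume a b :=
    fun a b => hc.intervalIntegrable a b
  have h1 : ∫ θ in π..(2 * π), Real.cos (x * Real.cos θ)
      = ∫ θ in (0:ℝ)..π, Real.cos (x * Real.cos θ) := by
    have := intervalIntegral.integral_comp_add_right (a := 0) (b := π)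
      (fun θ : ℝ => Real.cos (x * Real.cos θ)) π
    rw [show (2 * π) = π + π by ring]
    rw [zero_add] at this
    rw [← this]
    simp [Real.cos_add_pi]
  have h2 : ∫ θ in (π / 2)..π, Real.cos (x * Real.cos θ)
      = ∫ θ in (0:ℝ)..(π / 2), Real.cos (x * Real.cos θ) := by
    have := intervalIntegral.integral_comp_sub_left (a := 0) (b := π / 2)
      (fun θ : ℝ => Real.cos (x * Real.cos θ)) π
    rw [sub_zero, show π - π / 2 = π / 2 by ring] at this
    rw [← this]
    simp [Real.cos_pi_sub]
  have e1 := intervalIntegral.integral_add_adjacent_intervals (hi 0 π) (hi π (2 * π))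
  have e2 := intervalIntegral.integral_add_adjacent_intervals (hi 0 (π / 2)) (hi (π / 2) π)
  unfold bJ
  linarith

lemma bJ_abs_le (x : ℝ) : |bJ x| ≤ 2 * π := by
  have := intervalIntegral.norm_integral_le_of_norm_le_const (a := 0) (b := 2 * π) (C := 1)
    (f := fun θ : ℝ => Real.cos (x * Real.cos θ)) (fun θ _ => Real.abs_cos_le_one _)
  rw [sub_zero, one_mul, abs_of_pos (by positivity)] at this
  exact this

lemma vdc_aux (x a : ℝ) (hx : 0 < x) (ha : 0 < a) (ha2 : a ≤ π / 2) :
    |∫ θ in a..(π / 2), Real.cos (x * Real.cos θ)| ≤ 3 / (x * Real.sin a) := by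
  have hsin : ∀ θ ∈ Set.uIcc a (π / 2), 0 < Real.sin θ := by
    intro θ hθ
    rw [Set.uIcc_of_le ha2] at hθ
    exact Real.sin_pos_of_pos_of_lt_pi (by linarith [hθ.1]) (by linarith [hθ.2, Real.pi_pos])
  have hsina : 0 < Real.sin a := hsin a Set.left_mem_uIcc
  set u : ℝ → ℝ := fun θ => -(1 / (x * Real.sin θ)) with hu
  set u' : ℝ → ℝ := fun θ => Real.cos θ / (x * Real.sin θ ^ 2) with hu'
  set v : ℝ → ℝ := fun θ => Real.sin (x * Real.cos θ) with hv
  set v' : ℝ → ℝ := fun θ => Real.cos (x * Real.cos θ) * (x * (- Real.sin θ)) with hv'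
  have hud : ∀ θ ∈ Set.uIcc a (π / 2), HasDerivAt u (u' θ) θ := by
    intro θ hθ
    have h0 := hsin θ hθ
    have := (((Real.hasDerivAt_sin θ).const_mul x).inv (by positivity)).neg
    simp only [hu, hu', one_div]
    convert! this using 1
    field_simp
  have hvd : ∀ θ ∈ Set.uIcc a (π / 2), HasDerivAt v (v' θ) θ := by
    intro θ hθ
    exact ((Real.hasDerivAt_cos θ).const_mul x).sin
  have hu'c : ContinuousOn u' (Set.uIcc a (π / 2)) := by
    apply ContinuousOn.div (by fun_prop) (by fun_prop)
    intro θ hθ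
    have := hsin θ hθ
    positivity
  have hu'i : IntervalIntegrable u' volume a (π / 2) := hu'c.intervalIntegrable
  have hv'i : IntervalIntegrable v' volume a (π / 2) := by
    apply Continuous.intervalIntegrable
    fun_prop
  have key := intervalIntegral.integral_mul_deriv_eq_deriv_mul hud hvd hu'i hv'i
  have e1 : ∫ θ in a..(π / 2), u θ * v' θ = ∫ θ in a..(π / 2), Real.cos (x * Real.cos θ) := by
    apply intervalIntegral.integral_congr
    intro θ hθ
    have := hsin θ hθ
    simp only [hu, hv']
    field_simp
  have e2 : ∫ θ in a..(π / 2), u' θ = u (π / 2) - u a :=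
    intervalIntegral.integral_eq_sub_of_hasDerivAt hud hu'i
  have e3 : |∫ θ in a..(π / 2), u' θ * v θ| ≤ ∫ θ in a..(π / 2), u' θ := by
    rw [← Real.norm_eq_abs]
    apply intervalIntegral.norm_integral_le_of_norm_le ha2 _ hu'i
    filter_upwards with θ hθ
    have h0 := hsin θ (by rw [Set.uIcc_of_le ha2]; exact ⟨hθ.1.le, hθ.2⟩)
    have h1 : 0 ≤ u' θ := by
      have : 0 ≤ Real.cos θ := Real.cos_nonneg_of_neg_pi_div_two_le_of_le
        (by linarith [hθ.1, Real.pi_pos]) hθ.2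
      simp only [hu']; positivity
    rw [norm_mul, Real.norm_of_nonneg h1]
    exact mul_le_of_le_one_right h1 (Real.abs_sin_le_one _)
  have hvb : ∀ θ, |v θ| ≤ 1 := fun θ => Real.abs_sin_le_one _
  have hpi : v (π / 2) = 0 := by simp [hv]
  have hq : 0 < 1 / (x * Real.sin a) := by positivity
  have e4 : |u a * v a| ≤ 1 / (x * Real.sin a) := by
    rw [abs_mul]
    have : |u a| = 1 / (x * Real.sin a) := by
      simp only [hu]; rw [abs_neg, abs_of_pos hq]
    rw [this]
    exact mul_le_of_le_one_right hq.le (hvb a)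
  have e5 : u (π / 2) - u a ≤ 1 / (x * Real.sin a) := by
    simp only [hu, Real.sin_pi_div_two]
    have : 0 < 1 / (x * 1) := by positivity
    linarith
  rw [← e1, key, hpi]
  have : (3:ℝ) / (x * Real.sin a) = 3 * (1 / (x * Real.sin a)) := by ring
  rw [this]
  rw [abs_le] at *
  constructor <;> linarith [e3.1, e3.2, e4.1, e4.2]

lemma bJ_decay (x : ℝ) (hx : 0 < x) : |bJ x| ≤ 40 * x ^ (-(1/2) : ℝ) := by
  by_cases h1 : x ≤ 1
  · have h2 : 1 ≤ x ^ (-(1/2) : ℝ) :=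
      Real.one_le_rpow_of_pos_of_le_one_of_nonpos hx h1 (by norm_num)
    have := bJ_abs_le x
    nlinarith [Real.pi_lt_d2]
  · push Not at h1
    set a := x ^ (-(1/2) : ℝ) with ha
    have ha0 : 0 < a := Real.rpow_pos_of_pos hx _
    have ha1 : a ≤ 1 := Real.rpow_le_one_of_one_le_of_nonpos h1.le (by norm_num)
    have ha2 : a ≤ π / 2 := by linarith [Real.pi_gt_three]
    have hxa : x * a * a = 1 := by
      rw [mul_assoc, ha, ← Real.rpow_add hx]
      norm_num
      rw [Real.rpow_neg_one]; field_simp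
    have hsa : a / 2 ≤ Real.sin a := by
      have := Real.mul_le_sin ha0.le ha2
      have h3 : 1 / 2 ≤ 2 / π := by
        rw [div_le_div_iff₀ (by norm_num) Real.pi_pos]; linarith [Real.pi_le_four]
      nlinarith
    have hv := vdc_aux x a hx ha0 ha2
    have hb : 3 / (x * Real.sin a) ≤ 6 * a := by
      have : 0 < Real.sin a := by linarith
      rw [div_le_iff₀ (by positivity)]
      nlinarith [mul_le_mul_of_nonneg_left hsa (by positivity : 0 ≤ 6 * a * x)]
    have hi : ∀ c d : ℝ, IntervalIntegrable (fun θ : ℝ => Real.cos (x * Real.cos θ)) volume c d := by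
      intro c d; apply Continuous.intervalIntegrable; fun_prop
    have e := intervalIntegral.integral_add_adjacent_intervals (hi 0 a) (hi a (π / 2))
    have h0 := intervalIntegral.norm_integral_le_of_norm_le_const (a := 0) (b := a) (C := 1)
      (f := fun θ : ℝ => Real.cos (x * Real.cos θ)) (fun θ _ => Real.abs_cos_le_one _)
    rw [sub_zero, one_mul, abs_of_pos ha0, Real.norm_eq_abs] at h0
    rw [bJ_eq, ← e, abs_mul, abs_of_pos (by norm_num : (0:ℝ) < 4)]
    have := abs_add_le (∫ θ in (0:ℝ)..a, Real.cos (x * Real.cos θ))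
      (∫ θ in a..(π / 2), Real.cos (x * Real.cos θ))
    linarith

/-- dyadic decomposition -/
lemma bJ_dyadic (K : ℕ) (x : ℝ) (hx : 0 ≤ x) :
    Real.exp (-((1/4:ℝ) ^ K * x ^ 2)) * |bJ x| ≤
      200 * ∑ k ∈ Finset.range (K + 1), ((1/2:ℝ) ^ k) ^ (1/2:ℝ) * Real.exp (-((1/4:ℝ) ^ k * x ^ 2)) := by
  have hnn : ∀ k ∈ Finset.range (K + 1),
      0 ≤ ((1/2:ℝ) ^ k) ^ (1/2:ℝ) * Real.exp (-((1/4:ℝ) ^ k * x ^ 2)) := by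
    intro k _; positivity
  have hsum : ∀ k, k ≤ K → ((1/2:ℝ) ^ k) ^ (1/2:ℝ) * Real.exp (-((1/4:ℝ) ^ k * x ^ 2)) ≤
      ∑ k ∈ Finset.range (K + 1), ((1/2:ℝ) ^ k) ^ (1/2:ℝ) * Real.exp (-((1/4:ℝ) ^ k * x ^ 2)) := by
    intro k hk
    exact Finset.single_le_sum hnn (Finset.mem_range.mpr (by omega))
  have hdec : ∀ k : ℕ, (2:ℝ) ^ k ≤ x → |bJ x| ≤ 40 * ((1/2:ℝ) ^ k) ^ (1/2:ℝ) := by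
    intro k hk
    have hx0 : 0 < x := lt_of_lt_of_le (by positivity) hk
    refine (bJ_decay x hx0).trans ?_
    have : x ^ (-(1/2) : ℝ) ≤ ((2:ℝ) ^ k) ^ (-(1/2) : ℝ) :=
      Real.rpow_le_rpow_of_nonpos (by positivity) hk (by norm_num)
    have e : ((2:ℝ) ^ k) ^ (-(1/2) : ℝ) = ((1/2:ℝ) ^ k) ^ (1/2:ℝ) := by
      rw [Real.rpow_neg (by positivity), ← Real.inv_rpow (by positivity)]
      congr 1; simp
    rw [← e]; linarith
  by_cases hK : (2:ℝ) ^ K ≤ x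
  · have h1 := hdec K hK
    have h2 := hsum K le_rfl
    have h3 := Real.exp_pos (-((1/4:ℝ) ^ K * x ^ 2))
    have h4 : 0 ≤ ((1/2:ℝ) ^ K) ^ (1/2:ℝ) * Real.exp (-((1/4:ℝ) ^ K * x ^ 2)) := by positivity
    nlinarith [mul_le_mul_of_nonneg_left h1 h3.le]
  · push Not at hK
    have hex : ∃ k : ℕ, x < (2:ℝ) ^ k := ⟨K, hK⟩
    classical
    set k := Nat.find hex with hk
    have hk1 : x < (2:ℝ) ^ k := Nat.find_spec hex
    have hkK : k ≤ K := Nat.find_min' hex hK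
    have hexp : (1/3:ℝ) ≤ Real.exp (-((1/4:ℝ) ^ k * x ^ 2)) := by
      have : (1/4:ℝ) ^ k * x ^ 2 ≤ 1 := by
        have : x ^ 2 ≤ ((2:ℝ) ^ k) ^ 2 := by gcongr
        calc (1/4:ℝ) ^ k * x ^ 2 ≤ (1/4:ℝ) ^ k * ((2:ℝ) ^ k) ^ 2 := by gcongr
          _ = 1 := by
            rw [← pow_mul, mul_comm k 2, pow_mul, ← mul_pow]; norm_num
      calc (1/3:ℝ) ≤ Real.exp (-1) := by
            rw [Real.exp_neg, one_div]
            apply inv_anti₀ (Real.exp_pos _)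
            linarith [Real.exp_one_lt_d9]
        _ ≤ _ := Real.exp_le_exp.mpr (by linarith)
    have hle1 : Real.exp (-((1/4:ℝ) ^ K * x ^ 2)) ≤ 1 := by
      apply Real.exp_le_one_iff.mpr
      have : 0 ≤ (1/4:ℝ) ^ K * x ^ 2 := by positivity
      linarith
    have hJ : |bJ x| ≤ 60 * ((1/2:ℝ) ^ k) ^ (1/2:ℝ) := by
      rcases Nat.eq_zero_or_pos k with h0 | h0
      · rw [h0]; simp only [pow_zero, Real.one_rpow]
        linarith [bJ_abs_le x, Real.pi_le_four]
      · have hm : ¬ x < (2:ℝ) ^ (k - 1) := Nat.find_min hex (by omega)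
        push Not at hm
        have h1 := hdec (k - 1) hm
        have h2 : ((1/2:ℝ) ^ (k - 1)) ^ (1/2:ℝ) ≤ 3/2 * ((1/2:ℝ) ^ k) ^ (1/2:ℝ) := by
          have : ((1/2:ℝ) ^ (k - 1)) = 2 * (1/2:ℝ) ^ k := by
            conv_rhs => rw [show k = (k - 1) + 1 by omega, pow_succ]
            ring
          rw [this, Real.mul_rpow (by norm_num) (by positivity)]
          have h3 : (2:ℝ) ^ (1/2:ℝ) ≤ 3/2 := by
            rw [← Real.sqrt_eq_rpow]
            rw [Real.sqrt_le_left (by norm_num)]; norm_num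
          gcongr
        linarith
    have h2 := hsum k hkK
    set q := ((1/2:ℝ) ^ k) ^ (1/2:ℝ) with hq
    have hq0 : 0 ≤ q := by positivity
    have h5 : q * (1/3) ≤ q * Real.exp (-((1/4:ℝ) ^ k * x ^ 2)) := by gcongr
    have h6 := mul_le_of_le_one_left (abs_nonneg (bJ x)) hle1
    linarith

abbrev Pl := EuclideanSpace ℝ (Fin 2)

lemma gauss_integrable (t : ℝ) (ht : 0 < t) :
    Integrable (fun ξ : Pl => Real.exp (-(t * ‖ξ‖ ^ 2))) := by
  have h := GaussianFourier.integrable_cexp_neg_mul_sq_norm_add (V := Pl) (b := (t : ℂ))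
    (by simpa using ht) 0 0
  have := h.norm
  refine this.congr ?_
  filter_upwards with ξ
  rw [Complex.norm_exp]
  congr 1
  have : (-(t:ℂ) * (‖ξ‖:ℂ) ^ 2 + 0 * ((inner ℝ (0 : Pl) ξ : ℝ) : ℂ)) = ((-(t * ‖ξ‖ ^ 2) : ℝ) : ℂ) := by
    push_cast; ring
  rw [this, Complex.ofReal_re]

lemma gauss_fourier (t : ℝ) (ht : 0 < t) (z : Pl) :
    ∫ ξ : Pl, Real.exp (-(t * ‖ξ‖ ^ 2)) * Real.cos (inner ℝ z ξ)
      = π / t * Real.exp (-(‖z‖ ^ 2 / (4 * t))) := by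
  have h := GaussianFourier.integral_cexp_neg_mul_sq_norm_add (V := Pl) (b := (t : ℂ))
    (by simpa using ht) Complex.I z
  have hi := GaussianFourier.integrable_cexp_neg_mul_sq_norm_add (V := Pl) (b := (t : ℂ))
    (by simpa using ht) Complex.I z
  have e1 := integral_re hi
  rw [h] at e1
  have e2 : ∀ ξ : Pl, RCLike.re (Complex.exp (-(t:ℂ) * (‖ξ‖:ℂ) ^ 2 + Complex.I * ((inner ℝ z ξ : ℝ) : ℂ)))
      = Real.exp (-(t * ‖ξ‖ ^ 2)) * Real.cos (inner ℝ z ξ) := by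
    intro ξ
    rw [show RCLike.re (Complex.exp (-(t:ℂ) * (‖ξ‖:ℂ) ^ 2 + Complex.I * ((inner ℝ z ξ : ℝ) : ℂ)))
      = (Complex.exp (-(t:ℂ) * (‖ξ‖:ℂ) ^ 2 + Complex.I * ((inner ℝ z ξ : ℝ) : ℂ))).re from rfl]
    rw [Complex.exp_re]
    have : (-(t:ℂ) * (‖ξ‖:ℂ) ^ 2) = ((-(t * ‖ξ‖ ^ 2) : ℝ) : ℂ) := by push_cast; ring
    rw [this]
    generalize -(t * ‖ξ‖ ^ 2) = c
    simp
  simp_rw [e2] at e1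
  rw [e1]
  have e3 : ((π:ℂ) / t) ^ ((Module.finrank ℝ Pl : ℂ) / 2) * Complex.exp (Complex.I ^ 2 * (‖z‖:ℂ) ^ 2 / (4 * t))
      = ((π / t * Real.exp (-(‖z‖ ^ 2 / (4 * t))) : ℝ) : ℂ) := by
    rw [finrank_euclideanSpace_fin]
    push_cast
    rw [div_self (by norm_num), Complex.cpow_one, Complex.I_sq]
    congr 2; ring
  rw [e3]
  exact Complex.ofReal_re _

/-- The hypothesis package on the law of the difference. -/
structure Good (η : Measure Pl) (s C : ℝ) : Prop where
  prob : IsProbabilityMeasure η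
  frost : ∀ r : ℝ, 0 < r → η.real (Metric.ball 0 r) ≤ C * r ^ (2 * s)
  pos : ∀ ξ : Pl, 0 ≤ ∫ z, Real.cos (inner ℝ z ξ) ∂η

lemma fub (η : Measure Pl) [IsProbabilityMeasure η] (g : Pl → ℝ) (hg : Integrable g) :
    ∫ z, (∫ ξ, g ξ * Real.cos (inner ℝ z ξ)) ∂η = ∫ ξ, g ξ * ∫ z, Real.cos (inner ℝ z ξ) ∂η := by
  rw [integral_integral_swap]
  · simp_rw [integral_const_mul]
  · have h1 : Integrable (fun p : Pl × Pl => g p.2) (η.prod volume) := hg.comp_snd η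
    have : Continuous (fun p : Pl × Pl => Real.cos (inner ℝ p.1 p.2)) := by fun_prop
    refine Integrable.mul_bdd (c := 1) h1 this.aestronglyMeasurable ?_
    filter_upwards with p
    exact Real.abs_cos_le_one _

lemma M_integrable (η : Measure Pl) [IsProbabilityMeasure η] (g : Pl → ℝ) (hg : Integrable g) :
    Integrable (fun ξ => g ξ * ∫ z, Real.cos (inner ℝ z ξ) ∂η) := by
  have : Continuous (fun p : Pl × Pl => Real.cos (inner ℝ p.2 p.1)) := by fun_prop
  have hm : StronglyMeasurable (fun ξ : Pl => ∫ z, Real.cos (inner ℝ z ξ) ∂η) :=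
    this.stronglyMeasurable.integral_prod_right (ν := η) (f := fun ξ z => Real.cos (inner ℝ z ξ))
  refine Integrable.mul_bdd (c := 1) hg hm.aestronglyMeasurable ?_
  filter_upwards with ξ
  have := norm_integral_le_of_norm_le_const (μ := η) (C := 1)
    (f := fun z : Pl => Real.cos (inner ℝ z ξ)) (by filter_upwards with z; exact Real.abs_cos_le_one _)
  simpa using this

lemma gauss_M (η : Measure Pl) [IsProbabilityMeasure η] (t : ℝ) (ht : 0 < t) :
    ∫ ξ : Pl, Real.exp (-(t * ‖ξ‖ ^ 2)) * ∫ z, Real.cos (inner ℝ z ξ) ∂η =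
      π / t * ∫ z, Real.exp (-(‖z‖ ^ 2 / (4 * t))) ∂η := by
  rw [← fub η _ (gauss_integrable t ht)]
  simp_rw [gauss_fourier t ht]
  rw [integral_const_mul]

/-- Constant in the Gaussian energy bound. -/
noncomputable def gK : ℝ := 4 * ∑' j : ℕ, Real.exp (-(j:ℝ)) * ((j:ℝ) + 1)

lemma gK_summable : Summable (fun j : ℕ => Real.exp (-(j:ℝ)) * ((j:ℝ) + 1)) := by
  have h1 : Summable (fun j : ℕ => (j:ℝ) ^ 1 * Real.exp (-(j:ℝ))) := by
    simpa using Real.summable_pow_mul_exp_neg_nat_mul 1 (r := 1) one_pos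
  have h0 : Summable (fun j : ℕ => (j:ℝ) ^ 0 * Real.exp (-(j:ℝ))) := by
    simpa using Real.summable_pow_mul_exp_neg_nat_mul 0 (r := 1) one_pos
  refine (h1.add h0).congr ?_
  intro j; ring

lemma gK_pos : 0 < gK := by
  unfold gK
  have := gK_summable.tsum_pos (fun j => by positivity) 0 (by simp)
  linarith

lemma gauss_frost (η : Measure Pl) (s C : ℝ) (hs1 : s < 1) (hC : 0 < C)
    (h : Good η s C) (t : ℝ) (ht : 0 < t) :
    ∫ z, Real.exp (-(‖z‖ ^ 2 / (4 * t))) ∂η ≤ gK * C * t ^ s := by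
  have := h.prob
  have hball : ∀ j : ℕ, η.real {z | ‖z‖ ^ 2 / (4 * t) < (j:ℝ) + 1} ≤ C * (4 * t ^ s * ((j:ℝ) + 1)) := by
    intro j
    have hr : 0 < Real.sqrt (4 * t * ((j:ℝ) + 1)) := by positivity
    have e : {z : Pl | ‖z‖ ^ 2 / (4 * t) < (j:ℝ) + 1} = Metric.ball 0 (Real.sqrt (4 * t * ((j:ℝ) + 1))) := by
      ext z
      simp only [Set.mem_ofPred_eq, mem_ball_zero_iff]
      rw [div_lt_iff₀ (by positivity), Real.lt_sqrt (norm_nonneg _)]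
      ring_nf
    rw [e]
    refine (h.frost _ hr).trans ?_
    gcongr
    rw [Real.sqrt_eq_rpow, ← Real.rpow_mul (by positivity)]
    rw [show (1 / 2 * (2 * s)) = s by ring, Real.mul_rpow (by positivity) (by positivity),
      Real.mul_rpow (by positivity) (by positivity)]
    have h4 : (4:ℝ) ^ s ≤ 4 := by
      calc (4:ℝ) ^ s ≤ (4:ℝ) ^ (1:ℝ) := Real.rpow_le_rpow_of_exponent_le (by norm_num) hs1.le
        _ = 4 := by norm_num
    have h5 : ((j:ℝ) + 1) ^ s ≤ (j:ℝ) + 1 := by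
      calc ((j:ℝ) + 1) ^ s ≤ ((j:ℝ) + 1) ^ (1:ℝ) :=
            Real.rpow_le_rpow_of_exponent_le (by linarith [Nat.cast_nonneg (α := ℝ) j]) hs1.le
        _ = (j:ℝ) + 1 := by norm_num
    gcongr
  -- lintegral
  have hmeas : ∀ j : ℕ, MeasurableSet {z : Pl | ‖z‖ ^ 2 / (4 * t) < (j:ℝ) + 1} := by
    intro j
    exact measurableSet_lt (by fun_prop) measurable_const
  rw [integral_eq_lintegral_of_nonneg_ae (by filter_upwards with z; positivity)
    (by apply Continuous.aestronglyMeasurable; fun_prop)]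
  apply ENNReal.toReal_le_of_le_ofReal (by have := gK_pos; positivity)
  calc ∫⁻ z, ENNReal.ofReal (Real.exp (-(‖z‖ ^ 2 / (4 * t)))) ∂η
      ≤ ∫⁻ z, ∑' j : ℕ, ({z : Pl | ‖z‖ ^ 2 / (4 * t) < (j:ℝ) + 1}).indicator
          (fun _ => ENNReal.ofReal (Real.exp (-(j:ℝ)))) z ∂η := by
        apply lintegral_mono
        intro z
        set X := ‖z‖ ^ 2 / (4 * t) with hX
        have hX0 : 0 ≤ X := by positivity
        refine le_trans ?_ (ENNReal.le_tsum ⌊X⌋₊)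
        rw [Set.indicator_of_mem (by exact Nat.lt_floor_add_one X)]
        apply ENNReal.ofReal_le_ofReal
        apply Real.exp_le_exp.mpr
        have := Nat.floor_le hX0
        linarith
    _ = ∑' j : ℕ, ENNReal.ofReal (Real.exp (-(j:ℝ))) * η {z : Pl | ‖z‖ ^ 2 / (4 * t) < (j:ℝ) + 1} := by
        rw [lintegral_tsum]
        · congr 1; ext j
          rw [lintegral_indicator_const (hmeas j)]
        · intro j
          exact (measurable_const.indicator (hmeas j)).aemeasurable
    _ ≤ ∑' j : ℕ, ENNReal.ofReal (Real.exp (-(j:ℝ)) * (C * (4 * t ^ s * ((j:ℝ) + 1)))) := by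
        apply ENNReal.tsum_le_tsum
        intro j
        rw [ENNReal.ofReal_mul (by positivity)]
        gcongr
        rw [← ofReal_measureReal]
        exact ENNReal.ofReal_le_ofReal (hball j)
    _ = ENNReal.ofReal (gK * C * t ^ s) := by
        have e : (fun j : ℕ => Real.exp (-(j:ℝ)) * (C * (4 * t ^ s * ((j:ℝ) + 1)))) =
          fun j : ℕ => (4 * C * t ^ s) * (Real.exp (-(j:ℝ)) * ((j:ℝ) + 1)) := by
          ext j; ring
        rw [← ENNReal.ofReal_tsum_of_nonneg (fun j => by positivity)
          (by rw [e]; exact gK_summable.mul_left _)]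
        congr 1
        rw [e, tsum_mul_left]
        unfold gK; ring

/-- points on the circle -/
noncomputable def cpt (θ : ℝ) : Pl := !₂[Real.cos θ, Real.sin θ]

lemma cpt_cont : Continuous cpt := by
  unfold cpt
  fun_prop

lemma exists_polar (z : Pl) : ∃ φ : ℝ, z = ‖z‖ • cpt φ := by
  set w : ℂ := ⟨z 0, z 1⟩ with hw
  have hn : ‖z‖ = ‖w‖ := by
    rw [EuclideanSpace.norm_eq, Complex.norm_def, Complex.normSq_apply]
    simp [Fin.sum_univ_two, hw, sq]
  refine ⟨Complex.arg w, ?_⟩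
  ext i
  fin_cases i
  · simp [cpt, hn, Complex.norm_mul_cos_arg, hw]
  · simp [cpt, hn, Complex.norm_mul_sin_arg, hw]

lemma inner_cpt (a b : ℝ) : inner ℝ (cpt a) (cpt b) = Real.cos (a - b) := by
  simp [cpt, PiLp.inner_apply, Fin.sum_univ_two, Real.cos_sub]
  try ring

lemma circ_int (c x φ : ℝ) :
    ∫ θ in (0:ℝ)..(2 * π), Real.cos (c - x * Real.cos (θ - φ)) = Real.cos c * bJ x := by
  have hs : ∫ θ in (0:ℝ)..(2 * π), Real.cos (c - x * Real.cos (θ - φ)) =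
      ∫ θ in (0:ℝ)..(2 * π), Real.cos (c - x * Real.cos θ) := by
    have hp : Function.Periodic (fun θ : ℝ => Real.cos (c - x * Real.cos θ)) (2 * π) := by
      intro θ; simp
    rw [intervalIntegral.integral_comp_sub_right (fun θ : ℝ => Real.cos (c - x * Real.cos θ)) φ]
    have := hp.intervalIntegral_add_eq (0 - φ) 0
    rw [zero_add] at this
    rw [← this]
    congr 1; ring
  have hsin : ∫ θ in (0:ℝ)..(2 * π), Real.sin (x * Real.cos θ) = 0 := by
    have hp : Function.Periodic (fun θ : ℝ => Real.sin (x * Real.cos θ)) (2 * π) := by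
      intro θ; simp
    have h1 := hp.intervalIntegral_add_eq π 0
    rw [zero_add] at h1
    have h2 := intervalIntegral.integral_comp_add_right (a := 0) (b := 2 * π)
      (fun θ : ℝ => Real.sin (x * Real.cos θ)) π
    rw [zero_add, add_comm (2 * π) π, h1] at h2
    simp [Real.cos_add_pi] at h2
    linarith
  rw [hs]
  simp_rw [Real.cos_sub c]
  rw [intervalIntegral.integral_add, intervalIntegral.integral_const_mul,
    intervalIntegral.integral_const_mul, hsin]
  · simp [bJ]
  · apply Continuous.intervalIntegrable; fun_prop
  · apply Continuous.intervalIntegrable; fun_prop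

lemma circ_fourier (ρ t : ℝ) (ht : 0 < t) (z : Pl) :
    ∫ θ in (0:ℝ)..(2 * π), Real.exp (-(‖z - ρ • cpt θ‖ ^ 2 / (4 * t))) =
      t / π * ∫ ξ : Pl, (Real.exp (-(t * ‖ξ‖ ^ 2)) * bJ (ρ * ‖ξ‖)) * Real.cos (inner ℝ z ξ) := by
  have h1 : ∀ θ, Real.exp (-(‖z - ρ • cpt θ‖ ^ 2 / (4 * t))) =
      t / π * ∫ ξ : Pl, Real.exp (-(t * ‖ξ‖ ^ 2)) * Real.cos (inner ℝ (z - ρ • cpt θ) ξ) := by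
    intro θ
    rw [gauss_fourier t ht]
    have := Real.pi_pos
    field_simp
  simp_rw [h1]
  rw [intervalIntegral.integral_const_mul]
  congr 1
  rw [intervalIntegral.integral_of_le (by positivity)]
  rw [integral_integral_swap]
  · congr 1
    ext ξ
    rw [integral_const_mul, mul_assoc]
    congr 1
    rw [← intervalIntegral.integral_of_le (by positivity)]
    obtain ⟨φ, hφ⟩ := exists_polar ξ
    have : ∀ θ, inner ℝ (z - ρ • cpt θ) ξ = inner ℝ z ξ - (ρ * ‖ξ‖) * Real.cos (θ - φ) := by
      intro θ
      rw [inner_sub_left, inner_smul_left]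
      congr 1
      conv_lhs => rw [hφ]
      rw [inner_smul_right, inner_cpt]
      simp
      ring
    simp_rw [this]
    rw [circ_int]
    ring
  · have h1 : Integrable (fun p : ℝ × Pl => Real.exp (-(t * ‖p.2‖ ^ 2)))
        ((volume.restrict (Set.Ioc 0 (2 * π))).prod volume) := (gauss_integrable t ht).comp_snd _
    have : Continuous (fun p : ℝ × Pl => Real.cos (inner ℝ (z - ρ • cpt p.1) p.2)) := by
      have := cpt_cont
      fun_prop
    refine Integrable.mul_bdd (c := 1) h1 this.aestronglyMeasurable ?_
    filter_upwards with p
    exact Real.abs_cos_le_one _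

lemma norm_cpt_sub (a b : ℝ) : ‖cpt a - cpt b‖ ≤ |a - b| := by
  have h : ‖cpt a - cpt b‖ ^ 2 ≤ |a - b| ^ 2 := by
    rw [@norm_sub_sq_real]
    have e : ∀ c, ‖cpt c‖ ^ 2 = 1 := by
      intro c
      rw [← real_inner_self_eq_norm_sq, inner_cpt]; simp
    rw [e, e, inner_cpt, sq_abs]
    have := Real.one_sub_sq_div_two_le_cos (x := a - b)
    linarith
  exact (pow_le_pow_iff_left₀ (norm_nonneg _) (abs_nonneg _) two_ne_zero).mp h

lemma circ_lower (ρ a : ℝ) (hρ : 0 < ρ) (ha : 0 < a) (ha1 : a ≤ 1) (z : Pl)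
    (hz1 : ρ ≤ ‖z‖) (hz2 : ‖z‖ ≤ ρ + ρ * a) :
    a / 3 ≤ ∫ θ in (0:ℝ)..(2 * π), Real.exp (-(‖z - ρ • cpt θ‖ ^ 2 / (4 * (ρ * a) ^ 2))) := by
  obtain ⟨φ, hφ⟩ := exists_polar z
  set f : ℝ → ℝ := fun θ => Real.exp (-(‖z - ρ • cpt θ‖ ^ 2 / (4 * (ρ * a) ^ 2))) with hf
  have hfc : Continuous f := by
    have := cpt_cont
    simp only [hf]
    fun_prop
  have hp : Function.Periodic f (2 * π) := by
    intro θ; simp [hf, cpt]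
  have h1 := hp.intervalIntegral_add_eq 0 φ
  rw [zero_add] at h1
  rw [h1]
  have hsub : ∫ θ in φ..(φ + a), f θ ≤ ∫ θ in φ..(φ + 2 * π), f θ := by
    apply intervalIntegral.integral_mono_interval le_rfl (by linarith) (by linarith [Real.pi_gt_three])
    · filter_upwards with θ
      simp only [hf]; positivity
    · exact hfc.intervalIntegrable _ _
  refine le_trans ?_ hsub
  have hlow : ∫ θ in φ..(φ + a), (1/3 : ℝ) ≤ ∫ θ in φ..(φ + a), f θ := by
    apply intervalIntegral.integral_mono_on (by linarith) (by simp) (hfc.intervalIntegrable _ _)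
    intro θ hθ
    have hd : ‖z - ρ • cpt θ‖ ≤ 2 * (ρ * a) := by
      have e : z - ρ • cpt θ = (‖z‖ - ρ) • cpt φ + ρ • (cpt φ - cpt θ) := by
        conv_lhs => rw [hφ]
        module
      rw [e]
      refine (norm_add_le _ _).trans ?_
      rw [norm_smul, norm_smul]
      have hc : ‖cpt φ‖ = 1 := by
        have : ‖cpt φ‖ ^ 2 = 1 := by
          rw [← real_inner_self_eq_norm_sq, inner_cpt]; simp
        nlinarith [norm_nonneg (cpt φ)]
      rw [hc, Real.norm_of_nonneg (by linarith : (0:ℝ) ≤ ‖z‖ - ρ), Real.norm_of_nonneg hρ.le]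
      have h2 : ‖cpt φ - cpt θ‖ ≤ a := by
        refine (norm_cpt_sub _ _).trans ?_
        rw [abs_le]; constructor <;> linarith [hθ.1, hθ.2]
      nlinarith
    have hq : ‖z - ρ • cpt θ‖ ^ 2 / (4 * (ρ * a) ^ 2) ≤ 1 := by
      rw [div_le_one (by positivity)]
      calc ‖z - ρ • cpt θ‖ ^ 2 ≤ (2 * (ρ * a)) ^ 2 := by gcongr
        _ = _ := by ring
    calc (1/3:ℝ) ≤ Real.exp (-1) := by
          rw [Real.exp_neg, one_div]
          apply inv_anti₀ (Real.exp_pos _)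
          linarith [Real.exp_one_lt_d9]
      _ ≤ _ := Real.exp_le_exp.mpr (by linarith)
  simp at hlow
  linarith

lemma bJ_cont : Continuous bJ := by
  unfold bJ
  apply intervalIntegral.continuous_parametric_intervalIntegral_of_continuous'
  fun_prop

lemma gaussJ_integrable (ρ t : ℝ) (ht : 0 < t) :
    Integrable (fun ξ : Pl => Real.exp (-(t * ‖ξ‖ ^ 2)) * bJ (ρ * ‖ξ‖)) := by
  have hc : Continuous (fun ξ : Pl => bJ (ρ * ‖ξ‖)) := by
    have := bJ_cont
    fun_prop
  refine Integrable.mul_bdd (c := 2 * π) (gauss_integrable t ht) hc.aestronglyMeasurable ?_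
  filter_upwards with ξ
  exact bJ_abs_le _

lemma circ_integrable (η : Measure Pl) [IsProbabilityMeasure η] (ρ t : ℝ) (ht : 0 < t) :
    Integrable (fun z : Pl =>
      ∫ θ in (0:ℝ)..(2 * π), Real.exp (-(‖z - ρ • cpt θ‖ ^ 2 / (4 * t)))) η := by
  have hc : Continuous (fun z : Pl =>
      ∫ θ in (0:ℝ)..(2 * π), Real.exp (-(‖z - ρ • cpt θ‖ ^ 2 / (4 * t)))) := by
    apply intervalIntegral.continuous_parametric_intervalIntegral_of_continuous'
    have := cpt_cont
    fun_prop
  refine Integrable.of_bound hc.aestronglyMeasurable (2 * π) ?_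
  filter_upwards with z
  have := intervalIntegral.norm_integral_le_of_norm_le_const (a := 0) (b := 2 * π) (C := 1)
    (f := fun θ : ℝ => Real.exp (-(‖z - ρ • cpt θ‖ ^ 2 / (4 * t)))) (fun θ _ => by
      rw [Real.norm_of_nonneg (Real.exp_pos _).le]
      apply Real.exp_le_one_iff.mpr
      have : 0 ≤ ‖z - ρ • cpt θ‖ ^ 2 / (4 * t) := by positivity
      linarith)
  rw [sub_zero, one_mul, abs_of_pos (by positivity)] at this
  exact this

lemma circ_upper (η : Measure Pl) (s C : ℝ) (hs1 : s < 1) (hC : 0 < C)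
    (h : Good η s C) (ρ : ℝ) (hρ : 0 < ρ) (K : ℕ) :
    ∫ z, (∫ θ in (0:ℝ)..(2 * π),
        Real.exp (-(‖z - ρ • cpt θ‖ ^ 2 / (4 * (ρ * (1/2:ℝ) ^ K) ^ 2)))) ∂η ≤
      (ρ * (1/2:ℝ) ^ K) ^ 2 * (200 * ∑ k ∈ Finset.range (K + 1), ((1/2:ℝ) ^ k) ^ (1/2:ℝ) *
        (gK * C * ((1/4:ℝ) ^ k * ρ ^ 2) ^ (s - 1))) := by
  have := h.prob
  set t := (ρ * (1/2:ℝ) ^ K) ^ 2 with ht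
  have ht0 : 0 < t := by positivity
  have hteq : t = (1/4:ℝ) ^ K * ρ ^ 2 := by
    rw [ht, mul_pow, ← pow_mul, mul_comm K 2, pow_mul]; norm_num; ring
  have hpi := Real.pi_pos
  simp_rw [circ_fourier ρ t ht0]
  rw [integral_const_mul, fub η _ (gaussJ_integrable ρ t ht0)]
  set M : Pl → ℝ := fun ξ => ∫ z, Real.cos (inner ℝ z ξ) ∂η with hM
  have hMint : ∀ u : ℝ, 0 < u → Integrable (fun ξ : Pl => Real.exp (-(u * ‖ξ‖ ^ 2)) * M ξ) :=
    fun u hu => M_integrable η _ (gauss_integrable u hu)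
  have hb : ∫ ξ : Pl, (Real.exp (-(t * ‖ξ‖ ^ 2)) * bJ (ρ * ‖ξ‖)) * M ξ ≤
      ∫ ξ : Pl, 200 * ∑ k ∈ Finset.range (K + 1), ((1/2:ℝ) ^ k) ^ (1/2:ℝ) *
        (Real.exp (-(((1/4:ℝ) ^ k * ρ ^ 2) * ‖ξ‖ ^ 2)) * M ξ) := by
    apply integral_mono
    · exact M_integrable η _ (gaussJ_integrable ρ t ht0)
    · apply Integrable.const_mul
      apply integrable_finsetSum
      intro k _
      apply Integrable.const_mul
      exact hMint _ (by positivity)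
    · intro ξ
      have hd := bJ_dyadic K (ρ * ‖ξ‖) (by positivity)
      have hMp : 0 ≤ M ξ := h.pos ξ
      have e1 : Real.exp (-(t * ‖ξ‖ ^ 2)) * bJ (ρ * ‖ξ‖) ≤
          Real.exp (-((1/4:ℝ) ^ K * (ρ * ‖ξ‖) ^ 2)) * |bJ (ρ * ‖ξ‖)| := by
        rw [hteq, mul_pow, ← mul_assoc]
        gcongr
        exact le_abs_self _
      have e2 := mul_le_mul_of_nonneg_right (e1.trans hd) hMp
      refine e2.trans (le_of_eq ?_)
      rw [mul_assoc, Finset.sum_mul]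
      simp only []
      congr 1
      apply Finset.sum_congr rfl
      intro k _
      rw [mul_pow]
      ring_nf
  have hE : ∀ k : ℕ, ∫ ξ : Pl, Real.exp (-(((1/4:ℝ) ^ k * ρ ^ 2) * ‖ξ‖ ^ 2)) * M ξ ≤
      π * (gK * C * ((1/4:ℝ) ^ k * ρ ^ 2) ^ (s - 1)) := by
    intro k
    have hu : 0 < (1/4:ℝ) ^ k * ρ ^ 2 := by positivity
    set u := (1/4:ℝ) ^ k * ρ ^ 2
    rw [hM, gauss_M η u hu]
    have := gauss_frost η s C hs1 hC h u hu
    calc π / u * ∫ z, Real.exp (-(‖z‖ ^ 2 / (4 * u))) ∂η ≤ π / u * (gK * C * u ^ s) := by gcongr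
      _ = π * (gK * C * u ^ (s - 1)) := by
        rw [Real.rpow_sub_one hu.ne']; field_simp
  calc t / π * ∫ ξ : Pl, (Real.exp (-(t * ‖ξ‖ ^ 2)) * bJ (ρ * ‖ξ‖)) * M ξ
      ≤ t / π * ∫ ξ : Pl, 200 * ∑ k ∈ Finset.range (K + 1), ((1/2:ℝ) ^ k) ^ (1/2:ℝ) *
        (Real.exp (-(((1/4:ℝ) ^ k * ρ ^ 2) * ‖ξ‖ ^ 2)) * M ξ) := by gcongr
    _ = t / π * (200 * ∑ k ∈ Finset.range (K + 1), ((1/2:ℝ) ^ k) ^ (1/2:ℝ) *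
        ∫ ξ : Pl, (Real.exp (-(((1/4:ℝ) ^ k * ρ ^ 2) * ‖ξ‖ ^ 2)) * M ξ)) := by
        rw [integral_const_mul, integral_finsetSum]
        · simp_rw [integral_const_mul]
        · intro k _
          apply Integrable.const_mul
          exact hMint _ (by positivity)
    _ ≤ t / π * (200 * ∑ k ∈ Finset.range (K + 1), ((1/2:ℝ) ^ k) ^ (1/2:ℝ) *
        (π * (gK * C * ((1/4:ℝ) ^ k * ρ ^ 2) ^ (s - 1)))) := by
        gcongr with k _
        exact hE k
    _ = _ := by
        have : ∀ k : ℕ, ((1/2:ℝ) ^ k) ^ (1/2:ℝ) * (π * (gK * C * ((1/4:ℝ) ^ k * ρ ^ 2) ^ (s - 1)))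
          = π * (((1/2:ℝ) ^ k) ^ (1/2:ℝ) * ((gK * C * ((1/4:ℝ) ^ k * ρ ^ 2) ^ (s - 1)))) := by
          intro k; ring
        have hx : ∀ X : ℝ, t / π * (200 * (π * X)) = t * (200 * X) := by
          intro X; field_simp
        simp_rw [this, ← Finset.mul_sum]
        exact hx _

noncomputable def Dc (τ : ℝ) : ℝ := 600 * gK * ((2:ℝ) ^ τ / ((2:ℝ) ^ τ - 1))

lemma Dc_pos (τ : ℝ) (hτ : 0 < τ) : 0 < Dc τ := by
  have : 1 < (2:ℝ) ^ τ := Real.one_lt_rpow (by norm_num) hτ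
  have h2 : 0 < (2:ℝ) ^ τ - 1 := by linarith
  have := gK_pos
  unfold Dc
  positivity

lemma shell_bound (η : Measure Pl) (s C τ : ℝ) (hs1 : s < 1) (hC : 0 < C)
    (h : Good η s C) (hτ : 0 < τ) (hτs : 3 / 2 - 2 * s ≤ τ) (ρ : ℝ) (hρ : 0 < ρ) (K : ℕ) :
    η.real {z | ρ ≤ ‖z‖ ∧ ‖z‖ ≤ ρ + ρ * (1/2:ℝ) ^ K} ≤
      Dc τ * C * ρ ^ (2 * s) * ((1/2:ℝ) * (2:ℝ) ^ τ) ^ K := by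
  have := h.prob
  set a : ℝ := (1/2:ℝ) ^ K with ha
  have ha0 : 0 < a := by positivity
  have ha1 : a ≤ 1 := pow_le_one₀ (by norm_num) (by norm_num)
  have hup := circ_upper η s C hs1 hC h ρ hρ K
  have ht0 : 0 < (ρ * a) ^ 2 := by positivity
  have hlow : a / 3 * η.real {z | ρ ≤ ‖z‖ ∧ ‖z‖ ≤ ρ + ρ * a} ≤
      ∫ z, (∫ θ in (0:ℝ)..(2 * π),
        Real.exp (-(‖z - ρ • cpt θ‖ ^ 2 / (4 * (ρ * a) ^ 2)))) ∂η := by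
    refine le_trans ?_ (mul_meas_ge_le_integral_of_nonneg (ε := a / 3) ?_
      (circ_integrable η ρ _ ht0))
    · refine mul_le_mul_of_nonneg_left ?_ (by positivity)
      exact measureReal_mono (fun z hz => circ_lower ρ a hρ ha0 ha1 z hz.1 hz.2) (by finiteness)
    · filter_upwards with z
      apply intervalIntegral.integral_nonneg (by positivity)
      intro θ _; positivity
  have hgK := gK_pos
  set b : ℝ := (2:ℝ) ^ τ with hb
  have hb1 : 1 < b := Real.one_lt_rpow (by norm_num) hτ
  have hterm : ∀ k : ℕ, ((1/2:ℝ) ^ k) ^ (1/2:ℝ) * (gK * C * ((1/4:ℝ) ^ k * ρ ^ 2) ^ (s - 1)) ≤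
      gK * C * ρ ^ (2 * s - 2) * b ^ k := by
    intro k
    have e1 : ((1/4:ℝ) ^ k * ρ ^ 2) ^ (s - 1) = (2:ℝ) ^ ((k:ℝ) * (2 - 2 * s)) * ρ ^ (2 * s - 2) := by
      rw [Real.mul_rpow (by positivity) (by positivity)]
      congr 1
      · rw [show (1/4:ℝ) = (2:ℝ) ^ (-2:ℝ) by rw [Real.rpow_neg (by norm_num)]; norm_num]
        rw [← Real.rpow_natCast, ← Real.rpow_mul (by norm_num), ← Real.rpow_mul (by norm_num)]
        congr 1; ring
      · rw [← Real.rpow_natCast, ← Real.rpow_mul hρ.le]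
        congr 1; push_cast; ring
    have e2 : ((1/2:ℝ) ^ k) ^ (1/2:ℝ) = (2:ℝ) ^ (-(k:ℝ) / 2) := by
      rw [show (1/2:ℝ) ^ k = ((2:ℝ) ^ (-1:ℝ)) ^ k by rw [Real.rpow_neg (by norm_num)]; norm_num]
      rw [← Real.rpow_natCast, ← Real.rpow_mul (by norm_num), ← Real.rpow_mul (by norm_num)]
      congr 1; ring
    have e3 : (2:ℝ) ^ (-(k:ℝ) / 2) * (2:ℝ) ^ ((k:ℝ) * (2 - 2 * s)) ≤ b ^ k := by
      rw [← Real.rpow_add (by norm_num), hb, ← Real.rpow_natCast, ← Real.rpow_mul (by norm_num)]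
      apply Real.rpow_le_rpow_of_exponent_le (by norm_num)
      nlinarith [mul_le_mul_of_nonneg_left hτs (Nat.cast_nonneg (α := ℝ) k)]
    rw [e1, e2]
    calc _ = gK * C * ρ ^ (2 * s - 2) * ((2:ℝ) ^ (-(k:ℝ) / 2) * (2:ℝ) ^ ((k:ℝ) * (2 - 2 * s))) := by ring
      _ ≤ _ := by gcongr
  have hgeo : ∑ k ∈ Finset.range (K + 1), b ^ k ≤ b ^ K * (b / (b - 1)) := by
    rw [geom_sum_eq hb1.ne']
    have : 0 < b - 1 := by linarith
    rw [← mul_div_assoc, ← pow_succ]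
    gcongr
    linarith
  have hsum : ∑ k ∈ Finset.range (K + 1), ((1/2:ℝ) ^ k) ^ (1/2:ℝ) *
        (gK * C * ((1/4:ℝ) ^ k * ρ ^ 2) ^ (s - 1)) ≤
      gK * C * ρ ^ (2 * s - 2) * (b ^ K * (b / (b - 1))) := by
    refine (Finset.sum_le_sum (fun k _ => hterm k)).trans ?_
    rw [← Finset.mul_sum]
    gcongr
  have hfin : a / 3 * η.real {z | ρ ≤ ‖z‖ ∧ ‖z‖ ≤ ρ + ρ * a} ≤
      (ρ * a) ^ 2 * (200 * (gK * C * ρ ^ (2 * s - 2) * (b ^ K * (b / (b - 1))))) := by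
    refine (hlow.trans hup).trans ?_
    gcongr
  have e : (ρ * a) ^ 2 * (200 * (gK * C * ρ ^ (2 * s - 2) * (b ^ K * (b / (b - 1))))) =
      a / 3 * (Dc τ * C * ρ ^ (2 * s) * ((1/2:ℝ) * b) ^ K) := by
    have : ρ ^ (2 * s) = ρ ^ (2 * s - 2) * ρ ^ 2 := by
      rw [← Real.rpow_natCast, ← Real.rpow_add hρ]; congr 1; push_cast; ring
    rw [this, mul_pow (1/2:ℝ) b, ← ha]
    unfold Dc
    rw [← hb]
    ring
  rw [e] at hfin
  exact le_of_mul_le_mul_left hfin (by positivity)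

def binS (n i : ℕ) : Set Pl := {z | ⌊(2:ℝ) ^ n * ‖z‖ ^ 2⌋ = (i:ℤ)}

lemma binS_meas (n i : ℕ) : MeasurableSet (binS n i) := by
  have : Measurable (fun z : Pl => ⌊(2:ℝ) ^ n * ‖z‖ ^ 2⌋) := by fun_prop
  exact this (measurableSet_singleton _)

lemma mem_binS (n i : ℕ) (z : Pl) (hz : z ∈ binS n i) :
    (i:ℝ) ≤ (2:ℝ) ^ n * ‖z‖ ^ 2 ∧ (2:ℝ) ^ n * ‖z‖ ^ 2 < i + 1 := by
  have := Int.floor_eq_iff.mp hz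
  simpa using this

lemma bin_bound (η : Measure Pl) (s C τ : ℝ) (hs : 1 / 2 < s) (hs1 : s < 1) (hC : 0 < C)
    (h : Good η s C) (hτ : 0 < τ) (hτs : 3 / 2 - 2 * s ≤ τ) (n i : ℕ) (hi : i ≠ 0) :
    η.real (binS n i) ≤
      2 * Dc τ * C * (2:ℝ) ^ (-(n * s)) * (2:ℝ) ^ (-((1 - s - τ) * (Nat.log 2 i : ℝ))) := by
  have := h.prob
  set K := Nat.log 2 i with hK
  have hi1 : 1 ≤ i := Nat.one_le_iff_ne_zero.mpr hi
  have hiR : (1:ℝ) ≤ i := by exact_mod_cast hi1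
  have hKl : (2:ℝ) ^ K ≤ i := by exact_mod_cast Nat.pow_log_le_self 2 hi
  have hKu : (i:ℝ) ≤ (2:ℝ) ^ (K + 1) := by
    exact_mod_cast (Nat.lt_pow_succ_log_self (by norm_num) i).le
  have h2n : (0:ℝ) < 2 ^ n := by positivity
  set ρ := Real.sqrt (i / 2 ^ n) with hρ
  have hρ0 : 0 < ρ := by positivity
  have hρ2 : ρ ^ 2 = i / 2 ^ n := Real.sq_sqrt (by positivity)
  have hsub : binS n i ⊆ {z | ρ ≤ ‖z‖ ∧ ‖z‖ ≤ ρ + ρ * (1/2:ℝ) ^ K} := by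
    intro z hz
    obtain ⟨h1, h2⟩ := mem_binS n i z hz
    have ha : 1 / (i:ℝ) ≤ (1/2:ℝ) ^ K := by
      rw [one_div_pow]
      exact one_div_le_one_div_of_le (by positivity) hKl
    constructor
    · rw [hρ, Real.sqrt_le_left (norm_nonneg _), div_le_iff₀ h2n]
      linarith
    · refine (pow_le_pow_iff_left₀ (norm_nonneg _) (by positivity) two_ne_zero).mp ?_
      · have h3 : ‖z‖ ^ 2 ≤ ρ ^ 2 * (1 + 1 / i) := by
          rw [hρ2]
          have : (i:ℝ) / 2 ^ n * (1 + 1 / i) = (i + 1) / 2 ^ n := by field_simp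
          rw [this, le_div_iff₀ h2n]
          linarith
        have h4 : ρ ^ 2 * (1 + 1 / i) ≤ ρ ^ 2 * (1 + (1/2:ℝ) ^ K) := by gcongr
        have h5 : 0 ≤ ρ ^ 2 * (1/2:ℝ) ^ K := by positivity
        have h6 : 0 ≤ (ρ * (1/2:ℝ) ^ K) ^ 2 := by positivity
        nlinarith
  have hb := (measureReal_mono hsub (by finiteness)).trans
    (shell_bound η s C τ hs1 hC h hτ hτs ρ hρ0 K)
  refine hb.trans ?_
  have hD := Dc_pos τ hτ
  have e1 : ρ ^ (2 * s) ≤ 2 * (2:ℝ) ^ ((K:ℝ) * s) * (2:ℝ) ^ (-(n * s)) := by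
    have : ρ ^ (2 * s) = ((i:ℝ) / 2 ^ n) ^ s := by
      rw [← hρ2, ← Real.rpow_natCast, ← Real.rpow_mul hρ0.le]; norm_num
    rw [this]
    calc ((i:ℝ) / 2 ^ n) ^ s ≤ ((2:ℝ) ^ (K + 1) / 2 ^ n) ^ s := by
          apply Real.rpow_le_rpow (by positivity) _ (by linarith)
          gcongr
      _ = (2:ℝ) ^ s * (2:ℝ) ^ ((K:ℝ) * s) * (2:ℝ) ^ (-(n * s)) := by
          rw [← Real.rpow_natCast, ← Real.rpow_natCast, ← Real.rpow_sub (by norm_num),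
            ← Real.rpow_mul (by norm_num), ← Real.rpow_add (by norm_num), ← Real.rpow_add (by norm_num)]
          congr 1; push_cast; ring
      _ ≤ _ := by
          gcongr
          calc (2:ℝ) ^ s ≤ (2:ℝ) ^ (1:ℝ) := Real.rpow_le_rpow_of_exponent_le (by norm_num) hs1.le
            _ = 2 := by norm_num
  have e2 : ((1/2:ℝ) * (2:ℝ) ^ τ) ^ K = (2:ℝ) ^ ((K:ℝ) * (τ - 1)) := by
    have : (1/2:ℝ) * (2:ℝ) ^ τ = (2:ℝ) ^ (τ - 1) := by
      rw [Real.rpow_sub_one (by norm_num)]; ring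
    rw [this, ← Real.rpow_natCast, ← Real.rpow_mul (by norm_num)]
    congr 1; ring
  calc Dc τ * C * ρ ^ (2 * s) * ((1/2:ℝ) * (2:ℝ) ^ τ) ^ K
      ≤ Dc τ * C * (2 * (2:ℝ) ^ ((K:ℝ) * s) * (2:ℝ) ^ (-(n * s))) * ((1/2:ℝ) * (2:ℝ) ^ τ) ^ K := by
        gcongr
    _ = 2 * Dc τ * C * (2:ℝ) ^ (-(n * s)) * ((2:ℝ) ^ ((K:ℝ) * s) * (2:ℝ) ^ ((K:ℝ) * (τ - 1))) := by
        rw [e2]; ring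
    _ = _ := by
        rw [← Real.rpow_add (by norm_num)]
        congr 2; ring

lemma ent_lower (N : ℕ) (p : ℕ → ℝ) (hp : ∀ i, 0 ≤ p i) (h1 : ∑ i ∈ Finset.range N, p i = 1)
    (Q : ℝ) (hQ : 0 < Q) (h2 : ∑ i ∈ Finset.range N, p i ^ 2 ≤ Q) :
    -Real.logb 2 Q ≤ ∑ i ∈ Finset.range N, -(p i * Real.logb 2 (p i)) := by
  have hl2 : 0 < Real.log 2 := Real.log_pos (by norm_num)
  have hterm : ∀ i, p i * (-Real.log Q) - (p i ^ 2 / Q - p i) ≤ -(p i * Real.log (p i)) := by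
    intro i
    rcases (hp i).eq_or_lt with h0 | h0
    · rw [← h0]; simp
    · have := Real.log_le_sub_one_of_pos (div_pos h0 hQ)
      rw [Real.log_div h0.ne' hQ.ne'] at this
      have h3 := mul_le_mul_of_nonneg_left this h0.le
      have : p i * (p i / Q - 1) = p i ^ 2 / Q - p i := by ring
      nlinarith
  have hs := Finset.sum_le_sum (fun i (_ : i ∈ Finset.range N) => hterm i)
  rw [Finset.sum_sub_distrib, Finset.sum_sub_distrib, ← Finset.sum_mul, ← Finset.sum_div, h1] at hs
  have h3 : (∑ i ∈ Finset.range N, p i ^ 2) / Q ≤ 1 := (div_le_one hQ).mpr h2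
  have e : ∑ i ∈ Finset.range N, -(p i * Real.logb 2 (p i)) =
      (∑ i ∈ Finset.range N, -(p i * Real.log (p i))) / Real.log 2 := by
    rw [Finset.sum_div]
    apply Finset.sum_congr rfl
    intro i _
    rw [Real.logb]; ring
  rw [e, Real.logb, ← neg_div]
  gcongr
  linarith

lemma sum_sq_bound (η : Measure Pl) (s C τ : ℝ) (hs : 1 / 2 < s) (hs1 : s < 1) (hC : 0 < C)
    (h : Good η s C) (hτ : 0 < τ) (hτs : 3 / 2 - 2 * s ≤ τ) (hτ1 : τ < 1 - s) (n N : ℕ)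
    (hsum : ∑ i ∈ Finset.range N, η.real (binS n i) = 1) :
    ∑ i ∈ Finset.range N, η.real (binS n i) ^ 2 ≤
      (8 * Dc τ + 2) * (max C 1) ^ 2 * (2:ℝ) ^ (-(n * (s + (1 - s - τ) / 2))) := by
  have := h.prob
  have hD := Dc_pos τ hτ
  set κ := 1 - s - τ with hκ
  have hκ0 : 0 < κ := by linarith
  set m : ℝ := (2:ℝ) ^ ((n:ℝ) / 2) with hm
  have hm1 : 1 ≤ m := Real.one_le_rpow (by norm_num) (by positivity)
  have hmm : (2:ℝ) ^ n = m * m := by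
    rw [hm, ← Real.rpow_add (by norm_num), ← Real.rpow_natCast]; congr 1; ring
  -- ball estimate
  have hball : ∀ r : ℝ, 0 < r → ∀ A : Set Pl, (∀ z ∈ A, (2:ℝ) ^ n * ‖z‖ ^ 2 < r) →
      η.real A ≤ C * (r / 2 ^ n) ^ s := by
    intro r hr A hA
    have hq : 0 < Real.sqrt (r / 2 ^ n) := by positivity
    have hsub : A ⊆ Metric.ball 0 (Real.sqrt (r / 2 ^ n)) := by
      intro z hz
      rw [mem_ball_zero_iff, Real.lt_sqrt (norm_nonneg _), lt_div_iff₀ (by positivity)]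
      linarith [hA z hz]
    refine ((measureReal_mono hsub (by finiteness)).trans (h.frost _ hq)).trans (le_of_eq ?_)
    rw [Real.sqrt_eq_rpow, ← Real.rpow_mul (by positivity)]
    congr 2; ring
  have hp0 : ∀ i, 0 ≤ η.real (binS n i) := fun i => measureReal_nonneg
  have hall : ∀ i, η.real (binS n i) ≤ (2 * Dc τ + 1) * C * (2:ℝ) ^ (-(n * s)) := by
    intro i
    have hP : 0 < (2:ℝ) ^ (-(n * s)) := by positivity
    rcases Nat.eq_zero_or_pos i with h0 | h0
    · have := hball 1 one_pos (binS n i) (fun z hz => by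
        have := (mem_binS n i z hz).2
        rw [h0] at this; simpa using this)
      have e : ((1:ℝ) / 2 ^ n) ^ s = (2:ℝ) ^ (-(n * s)) := by
        rw [one_div, Real.inv_rpow (by positivity), ← Real.rpow_natCast,
          ← Real.rpow_mul (by norm_num), ← Real.rpow_neg (by norm_num)]
      rw [e] at this
      have h3 : 0 ≤ 2 * Dc τ * C * (2:ℝ) ^ (-(n * s)) := by positivity
      linarith
    · have h4 := bin_bound η s C τ hs hs1 hC h hτ hτs n i (by omega)
      have h5 : (2:ℝ) ^ (-((1 - s - τ) * (Nat.log 2 i : ℝ))) ≤ 1 := by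
        apply Real.rpow_le_one_of_one_le_of_nonpos (by norm_num)
        have : 0 ≤ (1 - s - τ) * (Nat.log 2 i : ℝ) := by positivity
        linarith
      have h6 := mul_le_of_le_one_right (by positivity : 0 ≤ 2 * Dc τ * C * (2:ℝ) ^ (-(n * s))) h5
      have h7 : 0 < C * (2:ℝ) ^ (-(n * s)) := by positivity
      linarith
  have hbig : ∀ i : ℕ, m ≤ i → η.real (binS n i) ≤
      4 * Dc τ * C * (2:ℝ) ^ (-(n * s)) * (2:ℝ) ^ (-(n * (κ / 2))) := by
    intro i hi
    have hi0 : i ≠ 0 := by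
      rintro rfl
      simp at hi; linarith
    have h4 := bin_bound η s C τ hs hs1 hC h hτ hτs n i hi0
    have hKu : (i:ℝ) ≤ (2:ℝ) ^ (Nat.log 2 i + 1) := by
      exact_mod_cast (Nat.lt_pow_succ_log_self (by norm_num) i).le
    have hlog : (n:ℝ) / 2 ≤ (Nat.log 2 i : ℝ) + 1 := by
      have : (2:ℝ) ^ ((n:ℝ) / 2) ≤ (2:ℝ) ^ ((Nat.log 2 i : ℝ) + 1) := by
        refine (hi.trans hKu).trans (le_of_eq ?_)
        rw [← Real.rpow_natCast]; push_cast; rfl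
      exact (Real.rpow_le_rpow_left_iff (by norm_num)).mp this
    have h5 : (2:ℝ) ^ (-((1 - s - τ) * (Nat.log 2 i : ℝ))) ≤ 2 * (2:ℝ) ^ (-(n * (κ / 2))) := by
      have e : 2 * (2:ℝ) ^ (-(n * (κ / 2))) = (2:ℝ) ^ (1 + -(n * (κ / 2))) := by
        rw [Real.rpow_add (by norm_num), Real.rpow_one]
      rw [e]
      apply Real.rpow_le_rpow_of_exponent_le (by norm_num)
      rw [← hκ]
      nlinarith
    calc _ ≤ _ := h4
      _ ≤ 2 * Dc τ * C * (2:ℝ) ^ (-(n * s)) * (2 * (2:ℝ) ^ (-(n * (κ / 2)))) := by gcongr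
      _ = _ := by ring
  have hsmall : ∑ i ∈ (Finset.range N).filter (fun i : ℕ => (i:ℝ) < m), η.real (binS n i) ≤
      2 * C * (2:ℝ) ^ (-(n * (κ / 2))) := by
    rw [← measureReal_biUnion_finset]
    · have := hball (2 * m) (by positivity)
        (⋃ i ∈ (Finset.range N).filter (fun i : ℕ => (i:ℝ) < m), binS n i) (by
          intro z hz
          simp only [Set.mem_iUnion, Finset.mem_filter] at hz
          obtain ⟨i, ⟨_, hi⟩, hz⟩ := hz
          have := (mem_binS n i z hz).2
          linarith)
      refine this.trans ?_
      rw [mul_comm 2 C, mul_assoc]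
      gcongr
      have e : (2 * m / 2 ^ n) = (2:ℝ) ^ (1 + -((n:ℝ) / 2)) := by
        rw [Real.rpow_add (by norm_num), Real.rpow_one, Real.rpow_neg (by norm_num), ← hm, hmm]
        field_simp
      have e' : 2 * (2:ℝ) ^ (-(n * (κ / 2))) = (2:ℝ) ^ (1 + -(n * (κ / 2))) := by
        rw [Real.rpow_add (by norm_num), Real.rpow_one]
      rw [e, e', ← Real.rpow_mul (by norm_num)]
      apply Real.rpow_le_rpow_of_exponent_le (by norm_num)
      have : (n:ℝ) * κ ≤ n * s := by gcongr; linarith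
      nlinarith
    · intro i _ j _ hij
      apply Set.disjoint_left.mpr
      intro z hz hz'
      have : (i:ℤ) = j := hz.symm.trans hz'
      exact hij (by exact_mod_cast this)
    · intro i _; exact binS_meas n i
  set X := (2:ℝ) ^ (-(n * s)) with hX
  set Y := (2:ℝ) ^ (-(n * (κ / 2))) with hY
  have hX0 : 0 < X := by positivity
  have hY0 : 0 < Y := by positivity
  have hXY : (2:ℝ) ^ (-(n * (s + κ / 2))) = X * Y := by
    rw [hX, hY, ← Real.rpow_add (by norm_num)]; congr 1; ring
  rw [hXY]
  have hsplit := Finset.sum_filter_add_sum_filter_not (Finset.range N) (fun i : ℕ => (i:ℝ) < m)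
    (fun i => η.real (binS n i) ^ 2)
  rw [← hsplit]
  have hA : ∑ i ∈ (Finset.range N).filter (fun i : ℕ => (i:ℝ) < m), η.real (binS n i) ^ 2 ≤
      (2 * Dc τ + 1) * C * X * (2 * C * Y) := by
    calc _ ≤ ∑ i ∈ (Finset.range N).filter (fun i : ℕ => (i:ℝ) < m),
          (2 * Dc τ + 1) * C * X * η.real (binS n i) := by
          apply Finset.sum_le_sum
          intro i _
          rw [sq]
          exact mul_le_mul_of_nonneg_right (hall i) (hp0 i)
      _ ≤ _ := by
          rw [← Finset.mul_sum]
          gcongr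
  have hB : ∑ i ∈ (Finset.range N).filter (fun i : ℕ => ¬ (i:ℝ) < m), η.real (binS n i) ^ 2 ≤
      4 * Dc τ * C * X * Y := by
    calc _ ≤ ∑ i ∈ (Finset.range N).filter (fun i : ℕ => ¬ (i:ℝ) < m),
          4 * Dc τ * C * X * Y * η.real (binS n i) := by
          apply Finset.sum_le_sum
          intro i hi
          rw [sq]
          exact mul_le_mul_of_nonneg_right
            (hbig i (not_lt.mp (Finset.mem_filter.mp hi).2)) (hp0 i)
      _ ≤ 4 * Dc τ * C * X * Y * ∑ i ∈ Finset.range N, η.real (binS n i) := by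
          rw [← Finset.mul_sum]
          gcongr
          exact Finset.filter_subset _ _
      _ = _ := by rw [hsum, mul_one]
  have hC1 : C ≤ max C 1 := le_max_left _ _
  have h11 : 1 ≤ max C 1 := le_max_right _ _
  set C1 := max C 1
  have hCC : C * C ≤ C1 ^ 2 := by nlinarith
  have hCC' : C ≤ C1 ^ 2 := by nlinarith
  have hXY0 : 0 < X * Y := by positivity
  calc _ ≤ (2 * Dc τ + 1) * C * X * (2 * C * Y) + 4 * Dc τ * C * X * Y := add_le_add hA hB
    _ = (4 * Dc τ + 2) * (C * C) * (X * Y) + 4 * Dc τ * C * (X * Y) := by ring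
    _ ≤ (4 * Dc τ + 2) * (C1 ^ 2) * (X * Y) + 4 * Dc τ * C1 ^ 2 * (X * Y) := by gcongr
    _ = _ := by ring
lemma good_of_indep {Ω : Type} {mΩ : MeasurableSpace Ω} (P : Measure Ω) [IsProbabilityMeasure P]
    (W W' : Ω → Pl) (hW : Measurable W) (hW' : Measurable W') (s C : ℝ) (hC : 0 < C)
    (hF : Frostman P W (2 * s) C) (hI : IndepFun W W' P)
    (hE : Measure.map W P = Measure.map W' P) :
    Good (Measure.map (fun ω => W ω - W' ω) P) s C := by
  have hm : Measurable (fun ω => W ω - W' ω) := hW.sub hW'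
  refine ⟨Measure.isProbabilityMeasure_map hm.aemeasurable, ?_, ?_⟩
  · intro r hr
    rw [measureReal_def, Measure.map_apply hm measurableSet_ball]
    have hS : MeasurableSet {q : Pl × Pl | q.1 - q.2 ∈ Metric.ball (0 : Pl) r} :=
      (measurable_fst.sub measurable_snd) measurableSet_ball
    have e : P ((fun ω => W ω - W' ω) ⁻¹' Metric.ball 0 r) =
        (P.map (fun ω => (W ω, W' ω))) {q : Pl × Pl | q.1 - q.2 ∈ Metric.ball (0 : Pl) r} := by
      rw [Measure.map_apply (hW.prodMk hW') hS]; rfl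
    have hpr : IsProbabilityMeasure (P.map W) := Measure.isProbabilityMeasure_map hW.aemeasurable
    have hpr' : IsProbabilityMeasure (P.map W') := Measure.isProbabilityMeasure_map hW'.aemeasurable
    rw [e, (indepFun_iff_map_prod_eq_prod_map_map hW.aemeasurable hW'.aemeasurable).mp hI,
      Measure.prod_apply hS]
    apply ENNReal.toReal_le_of_le_ofReal (by positivity)
    calc ∫⁻ x, (P.map W') (Prod.mk x ⁻¹' {q : Pl × Pl | q.1 - q.2 ∈ Metric.ball (0 : Pl) r}) ∂(P.map W)
        ≤ ∫⁻ x, ENNReal.ofReal (C * r ^ (2 * s)) ∂(P.map W) := by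
          apply lintegral_mono
          intro x
          have : (Prod.mk x ⁻¹' {q : Pl × Pl | q.1 - q.2 ∈ Metric.ball (0 : Pl) r}) =
              Metric.ball x r := by
            ext y
            simp only [Set.mem_preimage, Set.mem_ofPred_eq, mem_ball_iff_norm, sub_zero]
            rw [norm_sub_rev]
          simp only [this]
          rw [← hE, Measure.map_apply hW measurableSet_ball]
          have h1 := hF x r hr
          rw [← ENNReal.ofReal_toReal (measure_ne_top P (W ⁻¹' Metric.ball x r))]
          exact ENNReal.ofReal_le_ofReal h1
      _ = _ := by simp
  · intro ξ
    rw [integral_map hm.aemeasurable (by apply Continuous.aestronglyMeasurable; fun_prop)]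
    have hc : Measurable (fun z : Pl => Real.cos (inner ℝ z ξ)) := by fun_prop
    have hs : Measurable (fun z : Pl => Real.sin (inner ℝ z ξ)) := by fun_prop
    have hbd : ∀ (X Y : Ω → Pl), Measurable X → Measurable Y →
        Integrable (fun ω => Real.cos (inner ℝ (X ω) ξ) * Real.cos (inner ℝ (Y ω) ξ)) P ∧
        Integrable (fun ω => Real.sin (inner ℝ (X ω) ξ) * Real.sin (inner ℝ (Y ω) ξ)) P := by
      intro X Y hX hY
      constructor
      · refine Integrable.of_bound (((hc.comp hX).mul (hc.comp hY)).aestronglyMeasurable) 1 ?_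
        filter_upwards with ω
        rw [norm_mul]
        exact mul_le_one₀ (Real.abs_cos_le_one _) (norm_nonneg _) (Real.abs_cos_le_one _)
      · refine Integrable.of_bound (((hs.comp hX).mul (hs.comp hY)).aestronglyMeasurable) 1 ?_
        filter_upwards with ω
        rw [norm_mul]
        exact mul_le_one₀ (Real.abs_sin_le_one _) (norm_nonneg _) (Real.abs_sin_le_one _)
    obtain ⟨i1, i2⟩ := hbd W W' hW hW'
    simp_rw [inner_sub_left, Real.cos_sub]
    rw [integral_add i1 i2]
    have c1 := (hI.comp hc hc).integral_fun_mul_eq_mul_integral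
      (hc.comp hW).aestronglyMeasurable (hc.comp hW').aestronglyMeasurable
    have c2 := (hI.comp hs hs).integral_fun_mul_eq_mul_integral
      (hs.comp hW).aestronglyMeasurable (hs.comp hW').aestronglyMeasurable
    have d1 : ∫ ω, Real.cos (inner ℝ (W ω) ξ) ∂P = ∫ ω, Real.cos (inner ℝ (W' ω) ξ) ∂P := by
      rw [← integral_map (f := fun z : Pl => Real.cos (inner ℝ z ξ)) hW.aemeasurable
        hc.aestronglyMeasurable, hE, integral_map hW'.aemeasurable hc.aestronglyMeasurable]
    have d2 : ∫ ω, Real.sin (inner ℝ (W ω) ξ) ∂P = ∫ ω, Real.sin (inner ℝ (W' ω) ξ) ∂P := by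
      rw [← integral_map (f := fun z : Pl => Real.sin (inner ℝ z ξ)) hW.aemeasurable
        hs.aestronglyMeasurable, hE, integral_map hW'.aemeasurable hs.aestronglyMeasurable]
    simp only [Function.comp_def] at c1 c2
    rw [c1, c2, d1, d2]
    exact add_nonneg (mul_self_nonneg _) (mul_self_nonneg _)

lemma Hn_eq {Ω : Type} {mΩ : MeasurableSpace Ω} (P : Measure Ω) [IsProbabilityMeasure P]
    (Z : Ω → Pl) (hZ : Measurable Z) (T : ℝ) (hT : 0 < T) (hb : ∀ᵐ ω ∂P, ‖Z ω‖ < T) (n : ℕ) :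
    ∃ N : ℕ, ∑ i ∈ Finset.range N, (Measure.map Z P).real (binS n i) = 1 ∧
      Hn P n (fun ω => ‖Z ω‖ ^ 2) = ∑ i ∈ Finset.range N,
        -((Measure.map Z P).real (binS n i) * Real.logb 2 ((Measure.map Z P).real (binS n i))) := by
  have hpr : IsProbabilityMeasure (P.map Z) := Measure.isProbabilityMeasure_map hZ.aemeasurable
  have h2n : (0:ℝ) < 2 ^ n := by positivity
  set N := ⌈(2:ℝ) ^ n * T ^ 2⌉₊ with hN
  have hidx : ∀ z : Pl, ‖z‖ < T → ∃ i < N, z ∈ binS n i := by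
    intro z hz
    have h0 : 0 ≤ (2:ℝ) ^ n * ‖z‖ ^ 2 := by positivity
    refine ⟨⌊(2:ℝ) ^ n * ‖z‖ ^ 2⌋₊, ?_, ?_⟩
    · rw [Nat.floor_lt h0]
      have h1 : (2:ℝ) ^ n * ‖z‖ ^ 2 < (2:ℝ) ^ n * T ^ 2 := by gcongr
      exact h1.trans_le (Nat.le_ceil _)
    · change ⌊(2:ℝ) ^ n * ‖z‖ ^ 2⌋ = _
      rw [Int.natCast_floor_eq_floor h0]
  refine ⟨N, ?_, ?_⟩
  · rw [← measureReal_biUnion_finset]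
    · have : (⋃ i ∈ Finset.range N, binS n i) =ᵐ[P.map Z] Set.univ := by
        rw [Filter.eventuallyEq_univ]
        change ∀ᵐ z ∂(P.map Z), z ∈ (⋃ i ∈ Finset.range N, binS n i)
        rw [ae_map_iff (p := fun z => z ∈ ⋃ i ∈ Finset.range N, binS n i) hZ.aemeasurable
          (Finset.measurableSet_biUnion _ (fun i _ => binS_meas n i))]
        filter_upwards [hb] with ω hω
        obtain ⟨i, hi, hz⟩ := hidx _ hω
        simp only [Set.mem_iUnion, Finset.mem_range]
        exact ⟨i, hi, hz⟩
      rw [measureReal_congr this]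
      simp
    · intro i _ j _ hij
      apply Set.disjoint_left.mpr
      intro z hz hz'
      have : (i:ℤ) = j := hz.symm.trans hz'
      exact hij (by exact_mod_cast this)
    · intro i _; exact binS_meas n i
  · have hpre : ∀ i : ℕ, (fun ω => Dn n (‖Z ω‖ ^ 2)) ⁻¹' {(i:ℝ) / 2 ^ n} = Z ⁻¹' binS n i := by
      intro i
      ext ω
      simp only [Set.mem_preimage, Set.mem_singleton_iff, Dn, binS]
      rw [div_left_inj' h2n.ne']
      constructor
      · intro h
        have : ((⌊(2:ℝ) ^ n * ‖Z ω‖ ^ 2⌋ : ℤ) : ℝ) = ((i:ℤ) : ℝ) := by simpa using h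
        exact_mod_cast this
      · intro h
        have h' : ⌊(2:ℝ) ^ n * ‖Z ω‖ ^ 2⌋ = (i:ℤ) := h
        rw [h']; simp
    have hinj : Function.Injective (fun i : ℕ => (i:ℝ) / 2 ^ n) := by
      intro i j hij
      have := (div_left_inj' h2n.ne').mp hij
      exact_mod_cast this
    unfold Hn entOf
    rw [tsum_eq_sum (s := (Finset.range N).image (fun i : ℕ => (i:ℝ) / 2 ^ n))]
    · rw [Finset.sum_image (fun i _ j _ hij => hinj hij)]
      apply Finset.sum_congr rfl
      intro i _
      rw [hpre i, measureReal_def, Measure.map_apply hZ (binS_meas n i)]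
    · intro x hx
      have : P ((fun ω => Dn n (‖Z ω‖ ^ 2)) ⁻¹' {x}) = 0 := by
        rw [← compl_compl ((fun ω => Dn n (‖Z ω‖ ^ 2)) ⁻¹' {x}), ← mem_ae_iff]
        filter_upwards [hb] with ω hω hx'
        obtain ⟨i, hi, hz⟩ := hidx _ hω
        apply hx
        have h1 : ω ∈ (fun ω => Dn n (‖Z ω‖ ^ 2)) ⁻¹' {(i:ℝ) / 2 ^ n} := by
          rw [hpre i]; exact hz
        have h2 : Dn n (‖Z ω‖ ^ 2) = (i:ℝ) / 2 ^ n := h1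
        have h3 : Dn n (‖Z ω‖ ^ 2) = x := hx'
        rw [Finset.mem_image]
        exact ⟨i, Finset.mem_range.mpr hi, by rw [← h3, h2]⟩
      rw [this]; simp

/-- Theorem (entropy of the squared distance, large dimension): there is an absolute `A > 0`
such that for each `1/2 < s < 1` there are `ε₀ = ε₀(s) > 0` and `B = B(s) > 0` with:
whenever `C, R > 0`, `W` is a `(2s,C)`-Frostman random variable with values in
`B(0,R) ⊂ ℝ²`, and `W'` is an independent copy of `W`, then for all `n`,
`Hₙ(|W − W'|²) ≥ n(s + ε₀) − A log₊C − A log₊R − B`. -/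
theorem entropy_distance_squared :
    ∃ A : ℝ, 0 < A ∧
      ∀ s : ℝ, 1 / 2 < s → s < 1 →
        ∃ ε₀ B : ℝ, 0 < ε₀ ∧ 0 < B ∧
          ∀ (C R : ℝ), 0 < C → 0 < R →
            ∀ (Ω : Type) (mΩ : MeasurableSpace Ω) (P : Measure Ω),
              IsProbabilityMeasure P →
              ∀ (W W' : Ω → EuclideanSpace ℝ (Fin 2)), Measurable W → Measurable W' →
                Frostman P W (2 * s) C →
                (∀ ω, W ω ∈ Metric.ball (0 : EuclideanSpace ℝ (Fin 2)) R) →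
                IndepFun W W' P →
                Measure.map W P = Measure.map W' P →
                ∀ n : ℕ,
                  (n : ℝ) * (s + ε₀) - A * logPlus C - A * logPlus R - B ≤
                    Hn P n (fun ω => dist (W ω) (W' ω) ^ 2) := by
  refine ⟨2, by norm_num, ?_⟩
  intro s hs hs1
  set τ := max (3 / 2 - 2 * s) ((1 - s) / 2) with hτd
  have hτ : 0 < τ := lt_of_lt_of_le (by linarith) (le_max_right _ _)
  have hτs : 3 / 2 - 2 * s ≤ τ := le_max_left _ _
  have hτ1 : τ < 1 - s := max_lt (by linarith) (by linarith)
  have hD := Dc_pos τ hτ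
  have hBl : 0 ≤ Real.logb 2 (8 * Dc τ + 2) := Real.logb_nonneg (by norm_num) (by linarith)
  refine ⟨(1 - s - τ) / 2, Real.logb 2 (8 * Dc τ + 2) + 1, by linarith, by linarith, ?_⟩
  intro C R hC hR Ω mΩ P hP W W' hW hW' hF hball hI hE n
  have hG := good_of_indep P W W' hW hW' s C hC hF hI hE
  have hb' : ∀ᵐ ω ∂P, ‖W' ω‖ < R := by
    have h1 : ∀ᵐ z ∂(P.map W), z ∈ Metric.ball (0 : Pl) R := by
      rw [ae_map_iff (p := fun z => z ∈ Metric.ball (0 : Pl) R) hW.aemeasurable measurableSet_ball]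
      exact Filter.Eventually.of_forall hball
    rw [hE, ae_map_iff (p := fun z => z ∈ Metric.ball (0 : Pl) R) hW'.aemeasurable measurableSet_ball] at h1
    filter_upwards [h1] with ω hω
    simpa using hω
  have hb : ∀ᵐ ω ∂P, ‖W ω - W' ω‖ < 2 * R := by
    filter_upwards [hb'] with ω hω
    have h2 : ‖W ω‖ < R := by simpa using hball ω
    have := norm_sub_le (W ω) (W' ω)
    linarith
  obtain ⟨N, hN1, hN2⟩ := Hn_eq P (fun ω => W ω - W' ω) (hW.sub hW') (2 * R) (by positivity) hb n
  simp_rw [dist_eq_norm]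
  rw [hN2]
  have hQ := sum_sq_bound _ s C τ hs hs1 hC hG hτ hτs hτ1 n N hN1
  have hC1 : 0 < max C 1 := lt_of_lt_of_le one_pos (le_max_right _ _)
  have hent := ent_lower N _ (fun i => measureReal_nonneg) hN1 _ (by positivity) hQ
  refine le_trans ?_ hent
  have hlogC : Real.logb 2 (max C 1) = logPlus C := by
    unfold logPlus
    rcases le_total C 1 with h | h
    · rw [max_eq_right h, Real.logb_one, max_eq_right]
      exact Real.logb_nonpos (by norm_num) hC.le h
    · rw [max_eq_left h, max_eq_left]
      exact Real.logb_nonneg (by norm_num) h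
  have hR0 : 0 ≤ logPlus R := le_max_right _ _
  rw [Real.logb_mul (by positivity) (by positivity), Real.logb_mul (by positivity) (by positivity),
    Real.logb_pow, hlogC, Real.logb_rpow (by norm_num) (by norm_num)]
  push_cast
  linarith
end

section
/- Let α, β be nonzero real numbers, 1/2 < s < 1, C₁, C₂ > 0 and 0 < c₂ < c₁. There exist a constant ε₁ = ε₁(s) > 0, an absolute constant A > 0, and a constant B = B(α, β, s) > 0 such that the following holds. Let X and Y be independent real random variables whose essential ranges are contained in [-c₁, -c₂] ∪ [c₂, c₁], where X is (s₁, C₁)-Frostman, Y is (s₂, C₂)-Frostman, 0 ≤ s₁, s₂ ≤ 1 and s₁ + s₂ ≥ 2s. Then for all n ∈ ℕ, max{ Hₙ(X + Y), Hₙ(αX² + βY²) } ≥ n(s + ε₁) − A·(log₊(C₁C₂) + log₊ c₁ + log₊(1/c₂)) − B. -/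
open MeasureTheory ProbabilityTheory Real

def Fr (ρ : Measure ℝ) (s Q : ℝ) : Prop := ∀ (z r : ℝ), 0 < r → ρ (Metric.ball z r) ≤ ENNReal.ofReal (Q * r ^ s)

lemma exp_le_tsum (u : ℝ) : ENNReal.ofReal (Real.exp (-u^2/2)) ≤
    ∑' j : ℕ, ENNReal.ofReal (8 * (1/4:ℝ)^j) * (Set.indicator (Metric.ball (0:ℝ) (2^j)) 1 u) := by
  have key : ∃ j : ℕ, |u| < 2^j ∧ Real.exp (-u^2/2) ≤ 8 * (1/4:ℝ)^j := by
    by_cases h : |u| < 1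
    · refine ⟨0, by simpa using h, ?_⟩
      have : Real.exp (-u^2/2) ≤ 1 := Real.exp_le_one_iff.2 (by nlinarith [sq_nonneg u])
      norm_num; linarith
    · push Not at h
      obtain ⟨j, hj1, hj2⟩ := exists_nat_pow_near h (by norm_num : (1:ℝ) < 2)
      refine ⟨j+1, hj2, ?_⟩
      have h1 : u^2/2 + 1 ≤ Real.exp (u^2/2) := Real.add_one_le_exp _
      have h2 : (4:ℝ)^j ≤ u^2 := by
        rw [← sq_abs u, show (4:ℝ) = 2^2 by norm_num, ← pow_mul, mul_comm, pow_mul]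
        gcongr
      have h4 : (0:ℝ) < 4^j := by positivity
      rw [show -u^2/2 = -(u^2/2) by ring, Real.exp_neg, one_div, inv_pow, pow_succ (4:ℝ) j]
      rw [← div_eq_mul_inv, inv_eq_one_div, div_le_div_iff₀ (by positivity) (by positivity)]
      linarith
  obtain ⟨j, hj, he⟩ := key
  refine le_trans ?_ (ENNReal.le_tsum j)
  rw [Set.indicator_of_mem (by simpa using hj)]
  simpa using ENNReal.ofReal_le_ofReal he

lemma gauss_frost_s11 (ρ : Measure ℝ) {s Q r : ℝ} (hρ : Fr ρ s Q) (hQ : 0 ≤ Q) (hs1 : s ≤ 1)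
    (hr : 0 < r) (z : ℝ) :
    ∫⁻ y, ENNReal.ofReal (Real.exp (-((y-z)/r)^2/2)) ∂ρ ≤ ENNReal.ofReal (16 * Q * r ^ s) := by
  calc ∫⁻ y, ENNReal.ofReal (Real.exp (-((y-z)/r)^2/2)) ∂ρ
      ≤ ∫⁻ y, ∑' j : ℕ, ENNReal.ofReal (8 * (1/4:ℝ)^j) * (Set.indicator (Metric.ball z (r*2^j)) 1 y) ∂ρ := by
        refine lintegral_mono fun y => (exp_le_tsum _).trans (le_of_eq ?_)
        congr 1; ext j; congr 1
        simp only [Set.indicator, Metric.mem_ball, Real.dist_eq, sub_zero, abs_div, abs_of_pos hr, div_lt_iff₀ hr]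
        simp [mul_comm]
    _ = ∑' j : ℕ, ENNReal.ofReal (8 * (1/4:ℝ)^j) * ρ (Metric.ball z (r*2^j)) := by
        rw [lintegral_tsum]
        · congr 1; ext j
          rw [lintegral_const_mul _ (by
            exact (measurable_one.indicator measurableSet_ball)), lintegral_indicator_one measurableSet_ball]
        · intro j
          exact (Measurable.const_mul (measurable_one.indicator measurableSet_ball) _).aemeasurable
    _ ≤ ∑' j : ℕ, ENNReal.ofReal ((16 * Q * r^s) * ((1/2)^(j+1))) := by
        refine ENNReal.tsum_le_tsum fun j => ?_
        refine (mul_le_mul_right (hρ z (r*2^j) (by positivity)) _).trans ?_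
        rw [← ENNReal.ofReal_mul (by positivity)]
        apply ENNReal.ofReal_le_ofReal
        rw [Real.mul_rpow hr.le (by positivity)]
        have h1 : ((2:ℝ)^j)^s ≤ 2^j := by
          conv_rhs => rw [← Real.rpow_one ((2:ℝ)^j)]
          exact Real.rpow_le_rpow_of_exponent_le (one_le_pow₀ (by norm_num)) hs1
        have h2 : (1/4:ℝ)^j * 2^j = (1/2)^j := by rw [← mul_pow]; norm_num
        have : 0 ≤ r^s := by positivity
        calc 8 * (1/4:ℝ)^j * (Q * (r^s * (2^j)^s)) ≤ 8 * (1/4:ℝ)^j * (Q * (r^s * (2^j))) := by gcongr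
          _ = 8 * Q * r^s * ((1/4:ℝ)^j * 2^j) := by ring
          _ = _ := by rw [h2]; ring
    _ = ENNReal.ofReal (16 * Q * r ^ s) := by
        have hsum : HasSum (fun j : ℕ => (16 * Q * r^s) * ((1/2:ℝ)^(j+1))) (16*Q*r^s) := by
          have := (hasSum_geometric_two).mul_left (16*Q*r^s/2)
          have e : (fun j : ℕ => (16 * Q * r^s) * ((1/2:ℝ)^(j+1))) =
              fun j : ℕ => 16*Q*r^s/2 * (1/2:ℝ)^j := by
            funext j; rw [pow_succ]; ring
          rw [e]
          rwa [show 16*Q*r^s/2*2 = 16*Q*r^s by ring] at this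
        rw [← ENNReal.ofReal_tsum_of_nonneg (fun j => by positivity) hsum.summable, hsum.tsum_eq]

lemma gauss_frost' (ρ : Measure ℝ) [IsFiniteMeasure ρ] {s Q r : ℝ} (hρ : Fr ρ s Q) (hQ : 0 ≤ Q) (hs1 : s ≤ 1)
    (hr : 0 < r) (z : ℝ) :
    ∫ y, (Real.exp (-((y-z)/r)^2/2)) ∂ρ ≤ 16 * Q * r ^ s := by
  rw [integral_eq_lintegral_of_nonneg_ae (.of_forall fun _ => by positivity) (by fun_prop)]
  exact ENNReal.toReal_le_of_le_ofReal (by positivity) (gauss_frost_s11 ρ hρ hQ hs1 hr z)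


lemma charFun_gauss_shift (Z : Measure ℝ) [IsFiniteMeasure Z] (η : ℝ) (v : NNReal) :
    ∫ g, charFun Z g ∂(gaussianReal η v) =
      ∫ z, Complex.exp (η * z * Complex.I) * ((Real.exp (-(v*z^2)/2) : ℝ) : ℂ) ∂Z := by
  simp_rw [charFun_apply_real]
  rw [integral_integral_swap]
  · congr 1; ext z
    have := charFun_gaussianReal (μ := η) (v := v) z
    rw [charFun_apply_real] at this
    rw [Complex.ofReal_exp, ← Complex.exp_add]
    convert this using 1
    · congr 1; ext g; congr 1; ring
    · push_cast; congr 1; ring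
  · refine Integrable.of_bound (C := 1) (by fun_prop) (.of_forall fun p => ?_)
    simp only [Function.uncurry]
    rw [← Complex.ofReal_mul, Complex.norm_exp_ofReal_mul_I]

lemma charFun_gauss (Z : Measure ℝ) [IsFiniteMeasure Z] (v : NNReal) :
    ∫ g, charFun Z g ∂(gaussianReal 0 v) = ((∫ z, Real.exp (-(v*z^2)/2) ∂Z : ℝ) : ℂ) := by
  rw [charFun_gauss_shift, ← integral_complex_ofReal]
  simp

lemma charFun_map' {α : Type*} [MeasurableSpace α] (m : Measure α) (f : α → ℝ) (hf : Measurable f)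
    (u : ℝ) : charFun (m.map f) u = ∫ p, Complex.exp (u * f p * Complex.I) ∂m := by
  rw [charFun_apply_real, integral_map hf.aemeasurable (by fun_prop)]

lemma charFun_neg_int (ρ : Measure ℝ) (u : ℝ) :
    ∫ x, Complex.exp (-(u * x * Complex.I)) ∂ρ = (starRingEnd ℂ) (charFun ρ u) := by
  rw [← charFun_neg, charFun_apply_real]; congr 1; ext x; congr 1; push_cast; ring

lemma charFun_sub (ρ : Measure ℝ) [IsFiniteMeasure ρ] (u : ℝ) :
    charFun ((ρ.prod ρ).map (fun p => p.1 - p.2)) u = ((‖charFun ρ u‖^2 : ℝ) : ℂ) := by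
  rw [charFun_map' _ _ (by fun_prop)]
  have : ∀ p : ℝ × ℝ, Complex.exp (u * ((p.1 - p.2 : ℝ):ℂ) * Complex.I) =
      Complex.exp (u * p.1 * Complex.I) * Complex.exp (-(u * p.2 * Complex.I)) := by
    intro p; rw [← Complex.exp_add]; congr 1; push_cast; ring
  simp_rw [this]
  rw [integral_prod_mul (fun x : ℝ => Complex.exp (u * x * Complex.I))
    (fun x : ℝ => Complex.exp (-(u * x * Complex.I))), charFun_neg_int, ← charFun_apply_real,
    Complex.mul_conj, Complex.normSq_eq_norm_sq]

lemma meas_charFun (ρ : Measure ℝ) [IsFiniteMeasure ρ] : Measurable (charFun ρ) := measurable_charFun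

lemma integrable_charFun_sq (ρ : Measure ℝ) [IsFiniteMeasure ρ] (G : Measure ℝ) [IsFiniteMeasure G] :
    Integrable (fun u => ‖charFun ρ u‖^2) G := by
  refine Integrable.of_bound (C := (ρ.real Set.univ)^2)
    (((meas_charFun ρ).norm.pow_const 2).aestronglyMeasurable) (.of_forall fun u => ?_)
  rw [Real.norm_eq_abs, abs_of_nonneg (by positivity)]
  gcongr
  exact norm_charFun_le u

lemma L2_gauss (ρ : Measure ℝ) [IsFiniteMeasure ρ] (v : NNReal) :
    ∫ u, ‖charFun ρ u‖^2 ∂(gaussianReal 0 v) =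
      ∫ x, ∫ y, Real.exp (-(v*(x-y)^2)/2) ∂ρ ∂ρ := by
  have h := charFun_gauss ((ρ.prod ρ).map (fun p => p.1 - p.2)) v
  simp_rw [charFun_sub] at h
  rw [integral_complex_ofReal] at h
  have h := Complex.ofReal_injective h
  rw [h, integral_map (by fun_prop) (by fun_prop), integral_prod]
  refine Integrable.of_bound (C := 1) (by fun_prop) (.of_forall fun p => ?_)
  rw [Real.norm_eq_abs, abs_of_nonneg (by positivity), Real.exp_le_one_iff]
  have : 0 ≤ (v:ℝ) * (p.1-p.2)^2 := by positivity
  linarith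

lemma sq_integral_le' {α : Type*} [MeasurableSpace α] (m : Measure α) [IsProbabilityMeasure m]
    (f : α → ℝ) (hf : Integrable f m) (hf2 : Integrable (fun x => f x ^ 2) m) :
    (∫ x, f x ∂m)^2 ≤ ∫ x, f x ^ 2 ∂m := by
  set c := ∫ x, f x ∂m
  have h : 0 ≤ ∫ x, (f x - c)^2 ∂m := integral_nonneg fun x => sq_nonneg _
  have e : ∀ x, (f x - c)^2 = f x ^ 2 - (2 * c) * f x + c^2 := fun x => by ring
  simp_rw [e] at h
  have hs : Integrable (fun x => f x ^ 2 - (2*c) * f x) m := hf2.sub (hf.const_mul _)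
  rw [integral_add hs (integrable_const _),
    integral_sub hf2 (hf.const_mul _), integral_const_mul] at h
  simp only [integral_const, probReal_univ, one_smul] at h
  change 0 ≤ _ - 2 * c * c + c^2 at h
  nlinarith

/-- weight -/
noncomputable def wt (Q x : ℝ) : ℝ := min (Real.exp ((x/Q)^2/2)) 2

lemma meas_wt (Q : ℝ) : Measurable (wt Q) := by unfold wt; fun_prop
lemma wt_pos (Q x : ℝ) : 0 ≤ wt Q x := le_min (by positivity) (by norm_num)
lemma wt_le (Q x : ℝ) : wt Q x ≤ 2 := min_le_right _ _

noncomputable def wm (Q : ℝ) (μ : Measure ℝ) : Measure ℝ := μ.withDensity (fun x => ENNReal.ofReal (wt Q x))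

lemma wm_le (Q : ℝ) (μ : Measure ℝ) : wm Q μ ≤ (2:ENNReal) • μ := by
  rw [← withDensity_const]
  apply withDensity_mono (.of_forall fun x => ?_)
  have := ENNReal.ofReal_le_ofReal (wt_le Q x)
  simpa using this

instance (Q : ℝ) (μ : Measure ℝ) [IsFiniteMeasure μ] : IsFiniteMeasure (wm Q μ) := by
  have := wm_le Q μ
  constructor
  refine (this Set.univ).trans_lt ?_
  simp only [Measure.smul_apply, smul_eq_mul]
  exact ENNReal.mul_lt_top (by norm_num) (measure_lt_top _ _)

lemma charFun_wm (μ : Measure ℝ) [IsProbabilityMeasure μ] (Q : ℝ) (hQ : 0 < Q)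
    (hμ : ∀ᵐ x ∂μ, |x| ≤ Q) (η : ℝ) (v : NNReal) (hv : (v:ℝ) = 1/Q^2) :
    charFun μ η = ∫ u, charFun (wm Q μ) u ∂(gaussianReal η v) := by
  rw [charFun_gauss_shift, wm, integral_withDensity_eq_integral_toReal_smul
    ((meas_wt Q).ennreal_ofReal) (by simp), charFun_apply_real]
  refine integral_congr_ae ?_
  filter_upwards [hμ] with x hx
  have h1 : wt Q x = Real.exp ((x/Q)^2/2) := by
    apply min_eq_left
    have : (x/Q)^2 ≤ 1 := by
      rw [div_pow, div_le_one (by positivity), ← sq_abs x]; gcongr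
    have h2 : (x/Q)^2/2 ≤ 1/2 := by linarith
    have h3 : Real.exp (1/2) ≤ 2 := by
      have := Real.exp_one_lt_d9
      have h4 : Real.exp (1/2) * Real.exp (1/2) = Real.exp 1 := by rw [← Real.exp_add]; norm_num
      nlinarith [Real.exp_pos (1/2:ℝ)]
    exact (Real.exp_le_exp.2 h2).trans h3
  rw [ENNReal.toReal_ofReal (wt_pos Q x), h1, Complex.real_smul, mul_left_comm, ← Complex.ofReal_mul _ (Real.exp (-(v * x^2)/2)),
    ← Real.exp_add, hv, show (x/Q)^2/2 + -(1/Q^2 * x^2)/2 = 0 by ring]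
  simp

lemma D1 (μ : Measure ℝ) [IsProbabilityMeasure μ] (Q : ℝ) (hQ : 0 < Q)
    (hμ : ∀ᵐ x ∂μ, |x| ≤ Q) (η : ℝ) (v : NNReal) (hv : (v:ℝ) = 1/Q^2) :
    ‖charFun μ η‖^2 ≤ ∫ u, ‖charFun (wm Q μ) u‖^2 ∂(gaussianReal η v) := by
  have hi : Integrable (fun u => ‖charFun (wm Q μ) u‖) (gaussianReal η v) := by
    refine Integrable.of_bound (C := ((wm Q μ).real Set.univ))
      (((meas_charFun _).norm).aestronglyMeasurable) (.of_forall fun u => ?_)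
    rw [norm_norm]
    exact norm_charFun_le u
  refine le_trans ?_ (sq_integral_le' _ _ hi (integrable_charFun_sq _ _))
  rw [charFun_wm μ Q hQ hμ η v hv]
  gcongr
  exact norm_integral_le_integral_norm _

lemma D2 (μ : Measure ℝ) [IsProbabilityMeasure μ] (Q : ℝ) (hQ : 1 ≤ Q) (s : ℝ) (hs1 : s ≤ 1)
    (hF : Fr μ s Q) (R : ℝ) (hR : 0 < R) (v : NNReal) (hv : (v:ℝ) = (2*R)^2) :
    ∫ u, ‖charFun (wm Q μ) u‖^2 ∂(gaussianReal 0 v) ≤ 64 * Q * (1/(2*R))^s := by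
  rw [L2_gauss]
  have hF2 : Fr (wm Q μ) s (2*Q) := by
    intro z r hr
    refine (wm_le Q μ _).trans ?_
    simp only [Measure.smul_apply, smul_eq_mul]
    rw [mul_assoc, ENNReal.ofReal_mul (by norm_num)]
    simpa using mul_le_mul_right (hF z r hr) 2
  have hm : (wm Q μ).real Set.univ ≤ 2 := by
    apply ENNReal.toReal_le_of_le_ofReal (by norm_num)
    refine (wm_le Q μ _).trans ?_
    simp
  have hb : ∀ x, ∫ y, Real.exp (-(v*(x-y)^2)/2) ∂(wm Q μ) ≤ 32 * Q * (1/(2*R))^s := by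
    intro x
    have := gauss_frost' (wm Q μ) hF2 (by positivity) hs1 (r := 1/(2*R)) (by positivity) x
    calc _ = ∫ y, Real.exp (-((y-x)/(1/(2*R)))^2/2) ∂(wm Q μ) := by
          congr 1; ext y; congr 1; rw [hv]; field_simp; ring
      _ ≤ _ := this
      _ = _ := by ring
  have h0 : 0 ≤ 32 * Q * (1/(2*R))^s := by positivity
  calc _ ≤ ∫ x, 32 * Q * (1/(2*R))^s ∂(wm Q μ) := by
        apply integral_mono_of_nonneg (.of_forall fun x => integral_nonneg fun y => by positivity) (integrable_const _)
        exact .of_forall hb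
    _ = (wm Q μ).real Set.univ * (32 * Q * (1/(2*R))^s) := by simp
    _ ≤ 2 * (32 * Q * (1/(2*R))^s) := by gcongr
    _ = _ := by ring

lemma pdf_bound (Q lam z y u : ℝ) (hQ : 1 ≤ Q) (hl : 1 ≤ |lam|) (hz : |z| ≤ Q) (hy : |y| ≤ Q)
    (v v' : NNReal) (hv : (v:ℝ) = 1/Q^2) (hv' : (v':ℝ) = (4*Q*lam)^2) :
    gaussianPDFReal (lam*(y-z)) v u ≤
      (40 * Q^2 * |lam| * gaussianPDFReal 0 v' u) * Real.exp (-((y-(z+u/lam))/(2/(|lam| * Q)))^2/2) := by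
  have hl0 : lam ≠ 0 := by intro h; simp [h] at hl; linarith
  unfold gaussianPDFReal
  rw [hv, hv']
  have hpi := Real.pi_gt_three
  have hpi4 := Real.pi_lt_four
  have e1 : (√(2*π*(1/Q^2)))⁻¹ ≤ Q := by
    rw [inv_le_comm₀ (by positivity) (by positivity)]
    apply Real.le_sqrt_of_sq_le
    rw [inv_pow, ← one_div]
    have : 0 < 1/Q^2 := by positivity
    nlinarith
  have e2 : 1 ≤ (16 * Q * |lam|) * (√(2*π*(4*Q*lam)^2))⁻¹ := by
    rw [← div_eq_mul_inv, le_div_iff₀ (by positivity), one_mul]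
    apply Real.sqrt_le_iff.2 ⟨by positivity, ?_⟩
    rw [mul_pow, mul_pow, mul_pow, mul_pow, sq_abs]
    have : 0 < Q^2 * lam^2 := by positivity
    nlinarith
  have e3 : Real.exp (1/2) ≤ 2 := by
      have := Real.exp_one_lt_d9
      have h4 : Real.exp (1/2) * Real.exp (1/2) = Real.exp 1 := by rw [← Real.exp_add]; norm_num
      nlinarith [Real.exp_pos (1/2:ℝ)]
  set w := u - lam*(y-z) with hw
  have e4 : Real.exp (-w^2/(2*(1/Q^2))) ≤ 2 * (Real.exp (-(u-0)^2/(2*(4*Q*lam)^2)) *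
      Real.exp (-((y-(z+u/lam))/(2/(|lam| * Q)))^2/2)) := by
    refine le_trans ?_ (mul_le_mul_of_nonneg_right e3 (by positivity))
    rw [← Real.exp_add, ← Real.exp_add, Real.exp_le_exp]
    have f1 : ((y-(z+u/lam))/(2/(|lam| * Q)))^2 = w^2*Q^2/4 := by
      rw [div_pow, div_pow, mul_pow, sq_abs, hw]; field_simp; ring
    rw [f1]
    have hT : (lam*(y-z))^2 ≤ (2*Q*lam)^2 := by
      rw [mul_pow, mul_pow _ lam, mul_comm]
      have : |y - z| ≤ 2*Q := (abs_sub _ _).trans (by linarith)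
      have := sq_le_sq' (abs_le.1 this).1 (abs_le.1 this).2
      gcongr
    have hu : u^2 ≤ 2*w^2 + 2*(2*Q*lam)^2 := by
      have : u = w + lam*(y-z) := by rw [hw]; ring
      nlinarith [sq_nonneg (w - lam*(y-z))]
    have hl2 : 1 ≤ lam^2 := by rw [← sq_abs]; nlinarith
    have hQ2 : 1 ≤ Q^2 := by nlinarith
    have g1 : (u-0)^2/(2*(4*Q*lam)^2) ≤ w^2*Q^2/4 + 1/2 := by
      rw [div_le_iff₀ (by positivity), sub_zero]
      have a1 : 1 ≤ Q^2 * lam^2 := one_le_mul_of_one_le_of_one_le hQ2 hl2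
      have a2 : w^2 ≤ w^2 * Q^2 * (Q^2*lam^2) := by
        rw [mul_assoc]; exact le_mul_of_one_le_right (sq_nonneg _) (one_le_mul_of_one_le_of_one_le hQ2 a1)
      nlinarith
    have g2 : -w^2/(2*(1/Q^2)) = -(w^2*Q^2)/2 := by field_simp
    rw [g2, neg_div (2*(4*Q*lam)^2)]
    have g3 : 0 ≤ w^2*Q^2 := by positivity
    linarith
  set E := Real.exp (-(u-0)^2/(2*(4*Q*lam)^2)) * Real.exp (-((y-(z+u/lam))/(2/(|lam| * Q)))^2/2) with hE
  have hE0 : 0 ≤ E := by positivity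
  calc _ ≤ Q * (2 * E) := by gcongr
    _ ≤ Q * (2 * E) * ((16 * Q * |lam|) * (√(2*π*(4*Q*lam)^2))⁻¹) := le_mul_of_one_le_right (by positivity) e2
    _ = (32 * Q^2 * |lam| * (√(2*π*(4*Q*lam)^2))⁻¹) * E := by ring
    _ ≤ (40 * Q^2 * |lam| * (√(2*π*(4*Q*lam)^2))⁻¹) * E := by gcongr; norm_num
    _ = _ := by rw [hE]; ring

lemma D_bound (μ ν : Measure ℝ) [IsProbabilityMeasure μ] [IsProbabilityMeasure ν] (Q : ℝ) (hQ : 1 ≤ Q)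
    (hμ : ∀ᵐ x ∂μ, |x| ≤ Q) (hν : ∀ᵐ x ∂ν, |x| ≤ Q) (s₁ s₂ : ℝ) (h1 : 0 ≤ s₁) (h1' : s₁ ≤ 1)
    (h2 : 0 ≤ s₂) (h2' : s₂ ≤ 1) (hF : Fr μ s₁ Q) (hF2 : Fr ν s₂ Q) (z : ℝ) (hz : |z| ≤ Q)
    (lam : ℝ) (hl : 1 ≤ |lam|) :
    ∫ y, ‖charFun μ (lam * (y - z))‖^2 ∂ν ≤ 100000 * Q^4 * |lam| ^ (1 - s₁ - s₂) := by
  have hQ0 : 0 < Q := by linarith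
  have hl0 : lam ≠ 0 := by intro h; simp [h] at hl; linarith
  have hlp : 0 < |lam| := by positivity
  obtain ⟨v, hv⟩ : ∃ v : NNReal, (v:ℝ) = 1/Q^2 := ⟨⟨1/Q^2, by positivity⟩, rfl⟩
  obtain ⟨v', hv'⟩ : ∃ v : NNReal, (v:ℝ) = (4*Q*lam)^2 := ⟨⟨(4*Q*lam)^2, by positivity⟩, rfl⟩
  have hv0 : v ≠ 0 := by
    intro h; rw [h] at hv
    have : 0 < 1/Q^2 := by positivity
    rw [← hv] at this; simp at this
  have hv0' : v' ≠ 0 := by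
    intro h; rw [h] at hv'
    have : 0 < (4*Q*lam)^2 := by positivity
    rw [← hv'] at this; simp at this
  set F : ℝ → ENNReal := fun u => ENNReal.ofReal (‖charFun (wm Q μ) u‖^2) with hFdef
  have hFm : Measurable F := ((meas_charFun _).norm.pow_const 2).ennreal_ofReal
  have step1 : ∀ η, ENNReal.ofReal (‖charFun μ η‖^2) ≤
      ∫⁻ u, ENNReal.ofReal (gaussianPDFReal η v u) * F u := by
    intro η
    refine (ENNReal.ofReal_le_ofReal (D1 μ Q hQ0 hμ η v hv)).trans ?_
    rw [ofReal_integral_eq_lintegral_ofReal (integrable_charFun_sq _ _) (.of_forall fun _ => by positivity),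
      gaussianReal_of_var_ne_zero _ hv0, lintegral_withDensity_eq_lintegral_mul _ (measurable_gaussianPDF _ _) hFm]
    rfl
  have step2 : ∫⁻ u, F u ∂(gaussianReal 0 v') ≤ ENNReal.ofReal (64 * Q * (1/(4*Q*|lam|))^s₁) := by
    rw [hFdef, ← ofReal_integral_eq_lintegral_ofReal (integrable_charFun_sq _ _) (.of_forall fun _ => by positivity)]
    apply ENNReal.ofReal_le_ofReal
    have := D2 μ Q hQ s₁ h1' hF (2*Q*|lam|) (by positivity) v' (by rw [hv']; simp only [mul_pow, sq_abs]; ring)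
    rwa [show 2 * (2*Q*|lam|) = 4*Q*|lam| by ring] at this
  set r := 2/(|lam| * Q) with hr
  have hr0 : 0 < r := by positivity
  have step3 : ∫⁻ y, ENNReal.ofReal (‖charFun μ (lam * (y - z))‖^2) ∂ν ≤
      ENNReal.ofReal (40 * Q^2 * |lam| * (16 * Q * r ^ s₂) * (64 * Q * (1/(4*Q*|lam|))^s₁)) := by
    calc _ ≤ ∫⁻ y, (∫⁻ u, ENNReal.ofReal (gaussianPDFReal (lam * (y-z)) v u) * F u) ∂ν :=
          lintegral_mono fun y => step1 _
      _ = ∫⁻ u, ∫⁻ y, ENNReal.ofReal (gaussianPDFReal (lam * (y-z)) v u) * F u ∂ν := by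
          rw [lintegral_lintegral_swap]
          apply Measurable.aemeasurable
          unfold Function.uncurry
          apply Measurable.mul _ (hFm.comp measurable_snd)
          apply Measurable.ennreal_ofReal
          unfold gaussianPDFReal
          fun_prop
      _ ≤ ∫⁻ u, ENNReal.ofReal (40 * Q^2 * |lam| * (16 * Q * r ^ s₂)) * (ENNReal.ofReal (gaussianPDFReal 0 v' u) * F u) := by
          refine lintegral_mono fun u => ?_
          calc _ ≤ ∫⁻ y, ENNReal.ofReal (40 * Q^2 * |lam| * gaussianPDFReal 0 v' u) * F u * ENNReal.ofReal (Real.exp (-((y-(z+u/lam))/r)^2/2)) ∂ν := by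
                apply lintegral_mono_ae
                filter_upwards [hν] with y hy
                rw [mul_right_comm, ← ENNReal.ofReal_mul (mul_nonneg (by positivity) (gaussianPDFReal_nonneg 0 v' u))]
                gcongr
                exact pdf_bound Q lam z y u hQ hl hz hy v v' hv hv'
            _ = ENNReal.ofReal (40 * Q^2 * |lam| * gaussianPDFReal 0 v' u) * F u * ∫⁻ y, ENNReal.ofReal (Real.exp (-((y-(z+u/lam))/r)^2/2)) ∂ν := by
                rw [lintegral_const_mul _ (by fun_prop)]
            _ ≤ ENNReal.ofReal (40 * Q^2 * |lam| * gaussianPDFReal 0 v' u) * F u * ENNReal.ofReal (16 * Q * r ^ s₂) := by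
                gcongr
                exact gauss_frost_s11 ν hF2 hQ0.le h2' hr0 _
            _ = _ := by
                rw [ENNReal.ofReal_mul (by positivity), ENNReal.ofReal_mul (p := 40 * Q^2 * |lam|) (by positivity)]
                ring
      _ = ENNReal.ofReal (40 * Q^2 * |lam| * (16 * Q * r ^ s₂)) * ∫⁻ u, F u ∂(gaussianReal 0 v') := by
          rw [lintegral_const_mul, gaussianReal_of_var_ne_zero _ hv0', lintegral_withDensity_eq_lintegral_mul _ (measurable_gaussianPDF _ _) hFm]
          · rfl
          · exact (measurable_gaussianPDFReal _ _).ennreal_ofReal.mul hFm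
      _ ≤ _ := by
          rw [ENNReal.ofReal_mul (q := 64 * Q * (1/(4*Q*|lam|))^s₁) (by positivity)]
          gcongr
  have hmeas : AEStronglyMeasurable (fun y => ‖charFun μ (lam * (y - z))‖^2) ν :=
    ((((meas_charFun μ).comp (show Measurable fun y => lam * (y - z) by fun_prop)).norm.pow_const 2).aestronglyMeasurable)
  rw [integral_eq_lintegral_of_nonneg_ae (.of_forall fun _ => by positivity) hmeas]
  refine ENNReal.toReal_le_of_le_ofReal (by positivity) (step3.trans (ENNReal.ofReal_le_ofReal ?_))
  have a1 : r ^ s₂ ≤ 2 * |lam| ^ (-s₂) := by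
    have : r ≤ 2 * |lam|⁻¹ := by
      rw [hr, div_eq_mul_inv, mul_inv]
      have : Q⁻¹ ≤ 1 := inv_le_one_of_one_le₀ hQ
      have h3 : |lam|⁻¹ * Q⁻¹ ≤ |lam|⁻¹ := mul_le_of_le_one_right (by positivity) this
      linarith
    calc r ^ s₂ ≤ (2 * |lam|⁻¹)^s₂ := Real.rpow_le_rpow hr0.le this h2
      _ = 2^s₂ * |lam| ^ (-s₂) := by rw [Real.mul_rpow (by norm_num) (by positivity), Real.inv_rpow hlp.le, Real.rpow_neg hlp.le]
      _ ≤ 2 * |lam| ^ (-s₂) := by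
        gcongr
        calc (2:ℝ)^s₂ ≤ 2^(1:ℝ) := Real.rpow_le_rpow_of_exponent_le (by norm_num) h2'
          _ = 2 := by simp
  have a2 : (1/(4*Q*|lam|))^s₁ ≤ |lam| ^ (-s₁) := by
    rw [Real.rpow_neg hlp.le, ← Real.inv_rpow hlp.le]
    apply Real.rpow_le_rpow (by positivity) _ h1
    rw [one_div]
    apply inv_anti₀ hlp
    nlinarith
  have a3 : |lam| ^ (1 - s₁ - s₂) = |lam| * |lam| ^ (-s₁) * |lam| ^ (-s₂) := by
    rw [show 1 - s₁ - s₂ = 1 + (-s₁) + (-s₂) by ring, Real.rpow_add hlp, Real.rpow_add hlp, Real.rpow_one]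
  rw [a3]
  calc _ ≤ 40 * Q^2 * |lam| * (16 * Q * (2 * |lam| ^ (-s₂))) * (64 * Q * |lam| ^ (-s₁)) := by gcongr
    _ = 81920 * Q^4 * (|lam| * |lam| ^ (-s₁) * |lam| ^ (-s₂)) := by ring
    _ ≤ _ := by gcongr; norm_num

/-- L² bound for the squared variable. -/
lemma psi_bound (ν : Measure ℝ) [IsProbabilityMeasure ν] (Q : ℝ) (hQ : 1 ≤ Q)
    (hν : ∀ᵐ x ∂ν, 1/Q ≤ |x|) (s₂ : ℝ) (h2 : 0 ≤ s₂) (h2' : s₂ ≤ 1) (hF2 : Fr ν s₂ Q) (b : ℝ) (hb : b ≠ 0)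
    (d : ℝ) (hd : 0 < d) (v : NNReal) (hv : (v:ℝ) = 1/d^2) :
    ∫ u, ‖charFun (ν.map (fun y => b * y^2)) u‖^2 ∂(gaussianReal 0 v) ≤
      32 * Q^2 * max 1 (1/|b|) * d ^ s₂ := by
  have hQ0 : 0 < Q := by linarith
  have hb0 : 0 < |b| := by positivity
  have : IsProbabilityMeasure (ν.map (fun y => b * y^2)) := Measure.isProbabilityMeasure_map (by fun_prop)
  rw [L2_gauss]
  set r := d * Q / |b| with hr
  have hr0 : 0 < r := by positivity
  have inner : ∀ x, 1/Q ≤ |x| → ∫ y, Real.exp (-(v*(b*x^2 - b*y^2)^2)/2) ∂ν ≤ 32 * Q * r ^ s₂ := by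
    intro x hx
    have i1 : ∀ z, Integrable (fun y => Real.exp (-((y-z)/r)^2/2)) ν := by
      intro z
      refine Integrable.of_bound (C := 1) (by fun_prop) (.of_forall fun p => ?_)
      rw [Real.norm_eq_abs, abs_of_nonneg (by positivity), Real.exp_le_one_iff]
      have : 0 ≤ ((p-z)/r)^2 := by positivity
      linarith
    calc _ ≤ ∫ y, (Real.exp (-((y-x)/r)^2/2) + Real.exp (-((y-(-x))/r)^2/2)) ∂ν := by
          apply integral_mono_of_nonneg (.of_forall fun x => by positivity) ((i1 x).add (i1 (-x)))
          filter_upwards [hν] with y hy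
          have k : ∀ z, (y-z)^2 / Q^2 ≤ (x^2-y^2)^2 → Real.exp (-(v*(b*x^2 - b*y^2)^2)/2) ≤ Real.exp (-((y-z)/r)^2/2) := by
            intro z hz
            rw [Real.exp_le_exp, hv, hr]
            have e : ((y-z)/(d*Q/|b|))^2 = (b^2/d^2) * ((y-z)^2/Q^2) := by
              simp only [div_pow, mul_pow, sq_abs]; field_simp
            rw [e]
            have := mul_le_mul_of_nonneg_left hz (show 0 ≤ b^2/d^2 by positivity)
            have e2 : 1/d^2 * (b*x^2 - b*y^2)^2 = b^2/d^2 * (x^2-y^2)^2 := by ring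
            rw [e2]; linarith
          have hx2 : (1/Q)^2 ≤ x^2 := by rw [← sq_abs x]; gcongr
          have hy2 : (1/Q)^2 ≤ y^2 := by rw [← sq_abs y]; gcongr
          have e0 : ∀ t : ℝ, t / Q^2 = t * (1/Q)^2 := fun t => by ring
          rcases le_total 0 (x*y) with hxy | hxy
          · have := k x (by rw [e0, show (x^2-y^2)^2 = (y-x)^2 * (x+y)^2 by ring]; exact mul_le_mul_of_nonneg_left (by nlinarith) (sq_nonneg _))
            have : 0 < Real.exp (-((y-(-x))/r)^2/2) := by positivity
            simp only [Pi.add_apply]; linarith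
          · have := k (-x) (by rw [e0, show (x^2-y^2)^2 = (y-(-x))^2 * (x-y)^2 by ring]; exact mul_le_mul_of_nonneg_left (by nlinarith) (sq_nonneg _))
            have : 0 < Real.exp (-((y-x)/r)^2/2) := by positivity
            simp only [Pi.add_apply]; linarith
      _ = _ := integral_add (i1 x) (i1 (-x))
      _ ≤ 16 * Q * r ^ s₂ + 16 * Q * r ^ s₂ := add_le_add (gauss_frost' ν hF2 hQ0.le h2' hr0 _) (gauss_frost' ν hF2 hQ0.le h2' hr0 _)
      _ = _ := by ring
  have e : ∫ x, ∫ y, Real.exp (-(v*(x-y)^2)/2) ∂(ν.map (fun y => b * y^2)) ∂(ν.map (fun y => b * y^2)) =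
      ∫ x, ∫ y, Real.exp (-(v*(b*x^2 - b*y^2)^2)/2) ∂ν ∂ν := by
    rw [integral_map (by fun_prop)]
    · congr 1; ext x
      rw [integral_map (by fun_prop) (by fun_prop)]
    · apply StronglyMeasurable.aestronglyMeasurable
      apply StronglyMeasurable.integral_prod_right
      fun_prop
  rw [e]
  have h3 : ∫ x, ∫ y, Real.exp (-(v*(b*x^2 - b*y^2)^2)/2) ∂ν ∂ν ≤ ∫ x, 32 * Q * r ^ s₂ ∂ν := by
    apply integral_mono_of_nonneg (.of_forall fun x => integral_nonneg fun y => by positivity) (integrable_const _)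
    filter_upwards [hν] with x hx using inner x hx
  refine h3.trans ?_
  simp only [integral_const, probReal_univ, one_smul]
  have h4 : r ^ s₂ ≤ Q * max 1 (1/|b|) * d^s₂ := by
    have hM : 1 ≤ Q * max 1 (1/|b|) := one_le_mul_of_one_le_of_one_le hQ (le_max_left _ _)
    calc r ^ s₂ ≤ (Q * max 1 (1/|b|) * d)^s₂ := by
          apply Real.rpow_le_rpow hr0.le _ h2
          rw [hr, show d * Q/|b| = Q * (1/|b|) * d by ring]
          gcongr
          exact le_max_right _ _
      _ = (Q * max 1 (1/|b|))^s₂ * d^s₂ := by rw [Real.mul_rpow (by positivity) hd.le]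
      _ ≤ (Q * max 1 (1/|b|))^(1:ℝ) * d^s₂ := by gcongr
      _ = _ := by simp
  calc _ ≤ 32 * Q * (Q * max 1 (1/|b|) * d^s₂) := by gcongr
    _ = _ := by ring

/-- the phase -/
noncomputable def Zf (a b : ℝ) (p : ((ℝ × ℝ) × ℝ) × (ℝ × ℝ)) : ℝ :=
  a * ((p.1.1.1 - p.2.1)^2 + 2 * p.1.2 * (p.1.1.1 - p.2.1)) - b * p.1.1.2^2 + b * p.2.2^2

lemma meas_Zf (a b : ℝ) : Measurable (Zf a b) := by unfold Zf; fun_prop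

lemma charFun_Z (μ ν : Measure ℝ) [IsProbabilityMeasure μ] [IsProbabilityMeasure ν] (a b ξ : ℝ) :
    ‖charFun ((((ν.prod ν).prod μ).prod (ν.prod ν)).map (Zf a b)) ξ‖ ≤
      (∫ y', ∫ y, ‖charFun μ (2*a*ξ*(y - y'))‖ ∂ν ∂ν) * ‖charFun (ν.map (fun y => b * y^2)) ξ‖^2 := by
  rw [charFun_map' _ _ (meas_Zf a b), integral_prod_symm]
  swap
  · refine Integrable.of_bound (C := 1) (by unfold Zf; fun_prop) (.of_forall fun p => ?_)
    rw [← Complex.ofReal_mul, Complex.norm_exp_ofReal_mul_I]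
  set e : ℝ → ℂ := fun w => Complex.exp (ξ * ((b * w^2 : ℝ):ℂ) * Complex.I) with he
  set e' : ℝ → ℂ := fun w => Complex.exp (-(ξ * ((b * w^2 : ℝ):ℂ) * Complex.I)) with he'
  set V : ℝ → ℝ → ℂ := fun y' y => ∫ x, Complex.exp (ξ * ((a * ((y - y')^2 + 2 * x * (y - y')) : ℝ) : ℂ) * Complex.I) ∂μ with hV
  have hVn : ∀ y' y, ‖V y' y‖ = ‖charFun μ (2*a*ξ*(y - y'))‖ := by
    intro y' y
    have : V y' y = Complex.exp ((ξ * (a * (y-y')^2) : ℝ) * Complex.I) * charFun μ (2*a*ξ*(y - y')) := by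
      rw [charFun_apply_real, ← integral_const_mul, hV]
      simp only
      congr 1; ext x
      rw [← Complex.exp_add]; congr 1; push_cast; ring
    rw [this, norm_mul, Complex.norm_exp_ofReal_mul_I, one_mul]
  have step1 : ∀ k : ℝ × ℝ, ∫ p, Complex.exp (ξ * (Zf a b (p, k) : ℂ) * Complex.I) ∂((ν.prod ν).prod μ) =
      (∫ y, V k.1 y ∂ν) * ((∫ w, e' w ∂ν) * e k.2) := by
    intro k
    rw [integral_prod]
    swap
    · refine Integrable.of_bound (C := 1) (by unfold Zf; fun_prop) (.of_forall fun p => ?_)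
      rw [← Complex.ofReal_mul, Complex.norm_exp_ofReal_mul_I]
    have : ∀ q : ℝ × ℝ, ∫ x, Complex.exp (ξ * (Zf a b ((q, x), k) : ℂ) * Complex.I) ∂μ =
        V k.1 q.1 * e' q.2 * e k.2 := by
      intro q
      rw [hV, mul_assoc]
      simp only
      rw [← integral_mul_const]
      congr 1; ext x
      rw [he, he']; simp only
      rw [← Complex.exp_add, ← Complex.exp_add]; congr 1; unfold Zf; push_cast; ring
    simp_rw [this]
    rw [integral_mul_const, integral_prod_mul (fun y => V k.1 y) e', mul_assoc]
  simp_rw [step1]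
  have e2 : ∫ k : ℝ × ℝ, (∫ y, V k.1 y ∂ν) * ((∫ w, e' w ∂ν) * e k.2) ∂(ν.prod ν) =
      (∫ y', ∫ y, V y' y ∂ν ∂ν) * (∫ w, (∫ w, e' w ∂ν) * e w ∂ν) :=
    integral_prod_mul (fun y' => ∫ y, V y' y ∂ν) (fun w' => (∫ w, e' w ∂ν) * e w')
  rw [e2, integral_const_mul]
  have e3 : ∫ w, e w ∂ν = charFun (ν.map (fun y => b * y^2)) ξ := by
    rw [charFun_map' _ _ (by fun_prop)]
  have e4 : ∫ w, e' w ∂ν = (starRingEnd ℂ) (charFun (ν.map (fun y => b * y^2)) ξ) := by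
    rw [← charFun_neg_int, integral_map (by fun_prop) (by fun_prop)]
  rw [e3, e4, norm_mul, norm_mul, RCLike.norm_conj, ← sq]
  gcongr
  refine (norm_integral_le_integral_norm _).trans ?_
  apply integral_mono_of_nonneg (.of_forall fun _ => norm_nonneg _)
  · refine Integrable.of_bound (C := 1) ?_ (.of_forall fun y' => ?_)
    · apply StronglyMeasurable.aestronglyMeasurable
      apply StronglyMeasurable.integral_prod_right
      apply Measurable.stronglyMeasurable
      exact ((meas_charFun μ).comp (by fun_prop)).norm
    · rw [Real.norm_eq_abs, abs_of_nonneg (integral_nonneg fun _ => norm_nonneg _)]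
      have : ∫ y, ‖charFun μ (2*a*ξ*(y - y'))‖ ∂ν ≤ ∫ y, 1 ∂ν :=
        integral_mono_of_nonneg (.of_forall fun _ => norm_nonneg _) (integrable_const _) (.of_forall fun _ => norm_charFun_le_one _)
      simpa using this
  · refine .of_forall fun y' => ?_
    refine (norm_integral_le_integral_norm _).trans ?_
    simp_rw [hVn]
    rfl

lemma A_le_one (μ ν : Measure ℝ) [IsProbabilityMeasure μ] [IsProbabilityMeasure ν] (c : ℝ) :
    ∫ y', ∫ y, ‖charFun μ (c*(y - y'))‖ ∂ν ∂ν ≤ 1 := by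
  have h : ∀ y', ∫ y, ‖charFun μ (c*(y - y'))‖ ∂ν ≤ 1 := fun y' => by
    have : ∫ y, ‖charFun μ (c*(y - y'))‖ ∂ν ≤ ∫ y, 1 ∂ν :=
        integral_mono_of_nonneg (.of_forall fun _ => norm_nonneg _) (integrable_const _) (.of_forall fun _ => norm_charFun_le_one _)
    simpa using this
  have : ∫ y', ∫ y, ‖charFun μ (c*(y - y'))‖ ∂ν ∂ν ≤ ∫ y, 1 ∂ν :=
        integral_mono_of_nonneg (.of_forall fun _ => integral_nonneg fun _ => norm_nonneg _) (integrable_const _) (.of_forall h)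
  simpa using this

lemma A_bound (μ ν : Measure ℝ) [IsProbabilityMeasure μ] [IsProbabilityMeasure ν] (Q : ℝ) (hQ : 1 ≤ Q)
    (hμ : ∀ᵐ x ∂μ, |x| ≤ Q) (hν : ∀ᵐ x ∂ν, |x| ≤ Q) (s₁ s₂ : ℝ) (h1 : 0 ≤ s₁) (h1' : s₁ ≤ 1)
    (h2 : 0 ≤ s₂) (h2' : s₂ ≤ 1) (hF : Fr μ s₁ Q) (hF2 : Fr ν s₂ Q)
    (lam L s : ℝ) (hL : 1 ≤ L) (hl : L ≤ |lam|) (hs : 2 * s ≤ s₁ + s₂) (hs' : 1/2 < s) :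
    ∫ y', ∫ y, ‖charFun μ (lam*(y - y'))‖ ∂ν ∂ν ≤ 400 * Q^2 * L ^ (-(s-1/2)) := by
  have hm : ∀ y', Measurable fun y => ‖charFun μ (lam*(y - y'))‖ := fun y' =>
    ((meas_charFun μ).comp (show Measurable fun y => lam * (y - y') by fun_prop)).norm
  have hL0 : 0 < L := by linarith
  have h : ∀ y', |y'| ≤ Q → ∫ y, ‖charFun μ (lam*(y - y'))‖ ∂ν ≤ 400 * Q^2 * L ^ (-(s-1/2)) := by
    intro y' hy'
    have k := D_bound μ ν Q hQ hμ hν s₁ s₂ h1 h1' h2 h2' hF hF2 y' hy' lam (hL.trans hl)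
    have k2 := sq_integral_le' ν (fun y => ‖charFun μ (lam*(y - y'))‖)
      (Integrable.of_bound (C := 1) (hm y').aestronglyMeasurable (.of_forall fun y => by
        rw [norm_norm]; exact norm_charFun_le_one _))
      (Integrable.of_bound (C := 1) ((hm y').pow_const 2).aestronglyMeasurable (.of_forall fun y => by
        rw [Real.norm_eq_abs, abs_of_nonneg (by positivity)]; exact pow_le_one₀ (norm_nonneg _) (norm_charFun_le_one _)))
    apply le_of_sq_le_sq _ (by positivity)
    refine k2.trans (k.trans ?_)
    have e : (L ^ (-(s-1/2)))^2 = L ^ (1-2*s) := by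
      rw [← Real.rpow_natCast, ← Real.rpow_mul hL0.le]; congr 1; push_cast; ring
    have e2 : |lam| ^ (1-s₁-s₂) ≤ L ^ (1-2*s) := by
      calc |lam| ^ (1-s₁-s₂) ≤ |lam| ^ (1-2*s) := Real.rpow_le_rpow_of_exponent_le (hL.trans hl) (by linarith)
        _ ≤ _ := Real.rpow_le_rpow_of_nonpos hL0 hl (by linarith)
    calc _ ≤ 100000 * Q^4 * L ^ (1-2*s) := by gcongr
      _ ≤ 160000 * Q^4 * L ^ (1-2*s) := by gcongr; norm_num
      _ = _ := by rw [mul_pow, e]; ring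
  have : ∫ y', ∫ y, ‖charFun μ (lam*(y - y'))‖ ∂ν ∂ν ≤ ∫ y, 400 * Q^2 * L ^ (-(s-1/2)) ∂ν := by
    apply integral_mono_of_nonneg (.of_forall fun _ => integral_nonneg fun _ => norm_nonneg _) (integrable_const _)
    filter_upwards [hν] with y hy using h y hy
  simpa using this

/-- concentration via the Gaussian -/
lemma conc (Z : Measure ℝ) [IsFiniteMeasure Z] (d : ℝ) (hd : 0 < d) (v : NNReal) (hv : (v:ℝ) = 1/d^2) :
    Z.real {z | |z| ≤ d} ≤ 2 * ∫ u, ‖charFun Z u‖ ∂(gaussianReal 0 v) := by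
  have hm : MeasurableSet {z : ℝ | |z| ≤ d} := measurableSet_le (by fun_prop) (by fun_prop)
  have e3 : Real.exp (1/2) ≤ 2 := by
      have := Real.exp_one_lt_d9
      have h4 : Real.exp (1/2) * Real.exp (1/2) = Real.exp 1 := by rw [← Real.exp_add]; norm_num
      nlinarith [Real.exp_pos (1/2:ℝ)]
  have h1 : Z.real {z | |z| ≤ d} ≤ ∫ z, 2 * Real.exp (-(v*z^2)/2) ∂Z := by
    rw [← integral_indicator_one hm]
    apply integral_mono_of_nonneg (.of_forall fun x => Set.indicator_nonneg (fun _ _ => by simp) _)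
    · refine Integrable.of_bound (C := 2) (by fun_prop) (.of_forall fun p => ?_)
      rw [Real.norm_eq_abs, abs_of_nonneg (by positivity)]
      have : Real.exp (-(v*p^2)/2) ≤ 1 := by
        rw [Real.exp_le_one_iff]
        have : 0 ≤ (v:ℝ) * p^2 := by positivity
        linarith
      linarith
    · refine .of_forall fun z => ?_
      beta_reduce
      by_cases hz : z ∈ {z : ℝ | |z| ≤ d}
      · rw [Set.indicator_of_mem hz]
        simp only [Set.mem_ofPred_eq] at hz
        have h5 : (v:ℝ) * z^2 ≤ 1 := by
          rw [hv, one_div_mul_eq_div, div_le_one (by positivity), ← sq_abs z]; gcongr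
        have h6 : Real.exp (-(1/2)) ≤ Real.exp (-(v*z^2)/2) := Real.exp_le_exp.2 (by linarith)
        have h7 : Real.exp (1/2) * Real.exp (-(1/2)) = 1 := by rw [← Real.exp_add]; simp
        simp only [Pi.one_apply]
        nlinarith [Real.exp_pos (-(1/2):ℝ)]
      · rw [Set.indicator_of_notMem hz]; positivity
  rw [integral_const_mul] at h1
  refine h1.trans ?_
  gcongr
  have := charFun_gauss Z v
  calc _ = ‖((∫ z, Real.exp (-(v*z^2)/2) ∂Z : ℝ) : ℂ)‖ := by
        rw [Complex.norm_real, Real.norm_eq_abs, abs_of_nonneg (integral_nonneg fun _ => by positivity)]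
    _ = ‖∫ g, charFun Z g ∂(gaussianReal 0 v)‖ := by rw [this]
    _ ≤ _ := norm_integral_le_integral_norm _

lemma gauss_small (d M : ℝ) (hd : 0 < d) (hM : 0 ≤ M) (v : NNReal) (hv : (v:ℝ) = 1/d^2) :
    (gaussianReal 0 v).real {u | |u| < M} ≤ 2 * M * d := by
  have hv0 : v ≠ 0 := by
    intro h; rw [h] at hv
    have : 0 < 1/d^2 := by positivity
    rw [← hv] at this; simp at this
  apply ENNReal.toReal_le_of_le_ofReal (by positivity)
  rw [gaussianReal_apply _ hv0]
  have hs : {u : ℝ | |u| < M} = Set.Ioo (-M) M := by ext u; simp [abs_lt]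
  rw [hs]
  calc _ ≤ ∫⁻ x in Set.Ioo (-M) M, ENNReal.ofReal d := by
        apply lintegral_mono fun u => ?_
        unfold gaussianPDF
        apply ENNReal.ofReal_le_ofReal
        unfold gaussianPDFReal
        rw [hv]
        have hpi := Real.pi_gt_three
        have e1 : (√(2*π*(1/d^2)))⁻¹ ≤ d := by
          rw [inv_le_comm₀ (by positivity) (by positivity)]
          apply Real.le_sqrt_of_sq_le
          rw [inv_pow, ← one_div]
          have : 0 < 1/d^2 := by positivity
          nlinarith
        have e2 : Real.exp (-(u-0)^2/(2*(1/d^2))) ≤ 1 := by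
          rw [Real.exp_le_one_iff]
          apply div_nonpos_of_nonpos_of_nonneg (by nlinarith [sq_nonneg (u-0)]) (by positivity)
        calc _ ≤ d * 1 := by gcongr
          _ = d := by ring
    _ = _ := by
        rw [lintegral_const, Measure.restrict_apply_univ, Real.volume_Ioo, ← ENNReal.ofReal_mul hd.le]
        congr 1; ring

lemma J_bound (μ ν : Measure ℝ) [IsProbabilityMeasure μ] [IsProbabilityMeasure ν] (Q : ℝ) (hQ : 1 ≤ Q)
    (hμ : ∀ᵐ x ∂μ, |x| ≤ Q) (hν : ∀ᵐ x ∂ν, |x| ≤ Q) (hν' : ∀ᵐ x ∂ν, 1/Q ≤ |x|)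
    (s₁ s₂ : ℝ) (h1 : 0 ≤ s₁) (h1' : s₁ ≤ 1)
    (h2 : 0 ≤ s₂) (h2' : s₂ ≤ 1) (hF : Fr μ s₁ Q) (hF2 : Fr ν s₂ Q)
    (L s : ℝ) (hL : 1 ≤ L) (hs : 2 * s ≤ s₁ + s₂) (hs' : 1/2 < s)
    (a b : ℝ) (ha : a ≠ 0) (hb : b ≠ 0) (d : ℝ) (hd : 0 < d) :
    (((ν.prod ν).prod μ).prod (ν.prod ν)) {p | |Zf a b p| ≤ d} ≤
      ENNReal.ofReal (2 * (2 * (L / (2*|a|)) * d +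
        (400 * Q^2 * L ^ (-(s-1/2))) * (32 * Q^2 * max 1 (1/|b|) * d ^ s₂))) := by
  obtain ⟨v, hv⟩ : ∃ v : NNReal, (v:ℝ) = 1/d^2 := ⟨⟨1/d^2, by positivity⟩, rfl⟩
  have ha0 : 0 < |a| := by positivity
  have : IsProbabilityMeasure (ν.map (fun y => b * y^2)) := Measure.isProbabilityMeasure_map (by fun_prop)
  set Z := (((ν.prod ν).prod μ).prod (ν.prod ν)).map (Zf a b) with hZ
  have : IsProbabilityMeasure Z := Measure.isProbabilityMeasure_map (meas_Zf a b).aemeasurable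
  have hm : MeasurableSet {z : ℝ | |z| ≤ d} := measurableSet_le (by fun_prop) (by fun_prop)
  have e0 : (((ν.prod ν).prod μ).prod (ν.prod ν)) {p | |Zf a b p| ≤ d} = Z {z | |z| ≤ d} := by
    rw [hZ, Measure.map_apply (meas_Zf a b) hm]; rfl
  rw [e0, ← ofReal_measureReal]
  apply ENNReal.ofReal_le_ofReal
  refine (conc Z d hd v hv).trans ?_
  gcongr
  have hM : MeasurableSet {u : ℝ | |u| < L/(2*|a|)} := measurableSet_lt (by fun_prop) (by fun_prop)
  set al := 400 * Q^2 * L ^ (-(s-1/2)) with hal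
  have hal0 : 0 ≤ al := by positivity
  have key : ∀ u, ‖charFun Z u‖ ≤ Set.indicator {u : ℝ | |u| < L/(2*|a|)} (fun _ => (1:ℝ)) u +
      al * ‖charFun (ν.map (fun y => b * y^2)) u‖^2 := by
    intro u
    by_cases hu : |u| < L/(2*|a|)
    · rw [Set.indicator_of_mem (by exact hu)]
      have := norm_charFun_le_one (μ := Z) u
      have : 0 ≤ al * ‖charFun (ν.map (fun y => b * y^2)) u‖^2 := by positivity
      linarith
    · rw [Set.indicator_of_notMem (by exact hu), zero_add]
      refine (charFun_Z μ ν a b u).trans ?_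
      gcongr
      refine A_bound μ ν Q hQ hμ hν s₁ s₂ h1 h1' h2 h2' hF hF2 (2*a*u) L s hL ?_ hs hs'
      push Not at hu
      rw [div_le_iff₀ (by positivity)] at hu
      rw [abs_mul, abs_mul, abs_two]; linarith
  have i1 : Integrable (Set.indicator {u : ℝ | |u| < L/(2*|a|)} (fun _ => (1:ℝ))) (gaussianReal 0 v) :=
    (integrable_const _).indicator hM
  have i2 := (integrable_charFun_sq (ν.map (fun y => b * y^2)) (gaussianReal 0 v)).const_mul al
  calc _ ≤ ∫ u, (Set.indicator {u : ℝ | |u| < L/(2*|a|)} (fun _ => (1:ℝ)) u +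
      al * ‖charFun (ν.map (fun y => b * y^2)) u‖^2) ∂(gaussianReal 0 v) :=
        integral_mono_of_nonneg (.of_forall fun _ => norm_nonneg _) (i1.add i2) (.of_forall key)
    _ = (gaussianReal 0 v).real {u : ℝ | |u| < L/(2*|a|)} +
        al * ∫ u, ‖charFun (ν.map (fun y => b * y^2)) u‖^2 ∂(gaussianReal 0 v) := by
        rw [integral_add i1 i2, integral_const_mul, integral_indicator_const _ hM]; simp
    _ ≤ _ := by
        gcongr
        · exact gauss_small d _ hd (by positivity) v hv
        · exact psi_bound ν Q hQ hν' s₂ h2 h2' hF2 b hb d hd v hv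

/-- discretisation map -/
noncomputable def Th (N a b : ℝ) (p : (ℝ × ℝ) × ℝ) : ℤ × ℤ :=
  (⌊N * (p.2 + p.1.1)⌋, ⌊N * (a * p.2^2 + b * p.1.2^2)⌋)

lemma meas_Th (N a b : ℝ) : Measurable (Th N a b) := by
  unfold Th
  exact (Int.measurable_floor.comp (by fun_prop)).prodMk (Int.measurable_floor.comp (by fun_prop))

lemma floor_close (N u u' : ℝ) (hN : 0 < N) (h : ⌊N*u⌋ = ⌊N*u'⌋) : |u - u'| ≤ 1/N := by
  have := (Int.abs_sub_lt_one_of_floor_eq_floor h).le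
  rw [← mul_sub, abs_mul, abs_of_pos hN] at this
  rw [le_div_iff₀ hN]; linarith

lemma S_bound (μ ν : Measure ℝ) [IsProbabilityMeasure μ] [IsProbabilityMeasure ν] (Q : ℝ) (hQ : 1 ≤ Q)
    (hμ : ∀ᵐ x ∂μ, |x| ≤ Q) (s₁ : ℝ) (hF : Fr μ s₁ Q) (N a b : ℝ) (hN : 1 ≤ N) :
    ∑' k : ℤ × ℤ, (((ν.prod ν).prod μ) (Th N a b ⁻¹' {k}))^2 ≤ ENNReal.ofReal (Q * (2/N)^s₁) *
      (((ν.prod ν).prod μ).prod (ν.prod ν)) {p | |Zf a b p| ≤ (1 + 3*Q*|a|)/N} := by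
  have hN0 : 0 < N := by linarith
  set m := (ν.prod ν).prod μ with hm
  set T : Set (((ℝ × ℝ) × ℝ) × ((ℝ × ℝ) × ℝ)) :=
    {q | |q.2.2 - (q.1.2 + q.1.1.1 - q.2.1.1)| ≤ 1/N ∧ |Zf a b (q.1, q.2.1)| ≤ (1 + 3*Q*|a|)/N} with hT
  have hTm : MeasurableSet T := by
    have hT1 : MeasurableSet {q : ((ℝ × ℝ) × ℝ) × ((ℝ × ℝ) × ℝ) |
        |q.2.2 - (q.1.2 + q.1.1.1 - q.2.1.1)| ≤ 1/N} :=
      measurableSet_le (by fun_prop) (by fun_prop)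
    have hT2 : MeasurableSet {q : ((ℝ × ℝ) × ℝ) × ((ℝ × ℝ) × ℝ) |
        |Zf a b (q.1, q.2.1)| ≤ (1 + 3*Q*|a|)/N} :=
      measurableSet_le (by unfold Zf; fun_prop) (by fun_prop)
    exact hT1.inter hT2
  have hBm : MeasurableSet {p | |Zf a b p| ≤ (1 + 3*Q*|a|)/N} := by
    refine measurableSet_le ?_ (by fun_prop)
    unfold Zf; fun_prop
  have step1 : ∑' k : ℤ × ℤ, (m (Th N a b ⁻¹' {k}))^2 ≤ (m.prod m) T := by
    calc ∑' k : ℤ × ℤ, (m (Th N a b ⁻¹' {k}))^2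
        = ∑' k : ℤ × ℤ, (m.prod m) ((Th N a b ⁻¹' {k}) ×ˢ (Th N a b ⁻¹' {k})) := by
          congr 1; ext k; rw [Measure.prod_prod, sq]
      _ = (m.prod m) (⋃ k, (Th N a b ⁻¹' {k}) ×ˢ (Th N a b ⁻¹' {k})) := by
          rw [measure_iUnion]
          · intro k k' hkk
            rw [Function.onFun, Set.disjoint_left]
            rintro ⟨p, p'⟩ ⟨h1, _⟩ ⟨h2, _⟩
            apply hkk
            simp only [Set.mem_preimage, Set.mem_singleton_iff] at h1 h2
            rw [← h1, ← h2]
          · intro k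
            have := meas_Th N a b (measurableSet_singleton k)
            exact this.prod this
      _ ≤ (m.prod m) T := by
          apply measure_mono_ae
          have hae : ∀ᵐ q ∂(m.prod m), |q.2.2| ≤ Q := by
            have h1 : ∀ᵐ p ∂m, |p.2| ≤ Q := Measure.quasiMeasurePreserving_snd.ae hμ
            exact Measure.quasiMeasurePreserving_snd.ae h1
          filter_upwards [hae] with q hq hmem
          obtain ⟨k, hk⟩ := Set.mem_iUnion.1 hmem
          obtain ⟨⟨⟨y, w⟩, x⟩, ⟨⟨y', w'⟩, x'⟩⟩ := q
          simp only at hq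
          obtain ⟨h1, h2⟩ := hk
          simp only [Set.mem_preimage, Set.mem_singleton_iff] at h1 h2
          have h3 := h1.trans h2.symm
          simp only [Th, Prod.mk.injEq] at h3
          have g1 := floor_close _ _ _ hN0 h3.1
          have g2 := floor_close _ _ _ hN0 h3.2
          have hd1 : 1/N ≤ 1 := by rw [div_le_one hN0]; exact hN
          have hd0 : 0 < 1/N := by positivity
          change |x' - (x + y - y')| ≤ 1/N ∧ |Zf a b (((y,w),x),(y',w'))| ≤ _
          have g3 : |x' - (x + y - y')| ≤ 1/N := by
            rw [← abs_neg]; convert g1 using 2; ring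
          refine ⟨g3, ?_⟩
          set e := x' - (x + y - y') with he
          have e1 : Zf a b (((y,w),x),(y',w')) = -((a*x^2 + b*w^2) - (a*x'^2+b*w'^2)) + -(a * (e * (2*x' - e))) := by
            simp only [Zf, he]; ring
          rw [e1]
          refine (abs_add_le _ _).trans ?_
          rw [abs_neg, abs_neg, abs_mul, abs_mul]
          have e2 : |2*x' - e| ≤ 3*Q := by
            refine (abs_sub _ _).trans ?_
            rw [abs_mul, abs_two]; linarith
          have e3 : |e| * |2*x'-e| ≤ 1/N * (3*Q) := by gcongr
          calc _ ≤ 1/N + |a| * (1/N * (3*Q)) := by gcongr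
            _ = _ := by ring
  refine step1.trans ?_
  rw [Measure.prod_apply hTm, Measure.prod_apply hBm, ← lintegral_const_mul' _ _ ENNReal.ofReal_ne_top]
  refine lintegral_mono fun p => ?_
  rw [hm, Measure.prod_apply (measurable_prodMk_left hTm)]
  rw [← lintegral_indicator_one (measurable_prodMk_left hBm), ← lintegral_const_mul' _ _ ENNReal.ofReal_ne_top]
  refine lintegral_mono fun k => ?_
  by_cases hk : |Zf a b (p, k)| ≤ (1 + 3*Q*|a|)/N
  · rw [Set.indicator_of_mem (by exact hk)]
    simp only [Pi.one_apply, mul_one]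
    refine le_trans (measure_mono ?_) (hF (p.2 + p.1.1 - k.1) (2/N) (by positivity))
    intro x' hx'
    have : |x' - (p.2 + p.1.1 - k.1)| ≤ 1/N := hx'.1
    rw [Metric.mem_ball, Real.dist_eq]
    refine this.trans_lt ?_
    gcongr; norm_num
  · rw [Set.indicator_of_notMem (by exact hk)]
    simp only [mul_zero, nonpos_iff_eq_zero]
    convert measure_empty (μ := μ)
    ext x'
    simp only [Set.mem_preimage, Set.mem_empty_iff_false, iff_false]
    exact fun h => hk h.2

/-- entropy lemma -/
lemma ent_joint {ι κ : Type*} (I : Finset ι) (J : Finset κ) (r : ι → κ → ℝ) (p : ι → ℝ) (q : κ → ℝ)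
    (hr : ∀ i j, 0 ≤ r i j) (hp : ∀ i ∈ I, p i = ∑ j ∈ J, r i j) (hq : ∀ j ∈ J, q j = ∑ i ∈ I, r i j)
    (h1 : ∑ i ∈ I, ∑ j ∈ J, r i j = 1) (S : ℝ) (hS : 0 < S) (h2 : ∑ i ∈ I, ∑ j ∈ J, (r i j)^2 ≤ S) :
    -Real.log S ≤ ∑ i ∈ I, -(p i * Real.log (p i)) + ∑ j ∈ J, -(q j * Real.log (q j)) := by
  have hpq : (∑ i ∈ I, p i) = 1 := by rw [← h1]; exact Finset.sum_congr rfl hp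
  have hqq : (∑ j ∈ J, q j) = 1 := by rw [← h1, Finset.sum_comm]; exact Finset.sum_congr rfl hq
  have e1 : ∑ i ∈ I, -(p i * Real.log (p i)) = ∑ i ∈ I, ∑ j ∈ J, -(r i j * Real.log (p i)) := by
    refine Finset.sum_congr rfl fun i hi => ?_
    rw [Finset.sum_neg_distrib, ← Finset.sum_mul, ← hp i hi]
  have e2 : ∑ j ∈ J, -(q j * Real.log (q j)) = ∑ i ∈ I, ∑ j ∈ J, -(r i j * Real.log (q j)) := by
    rw [Finset.sum_comm]
    refine Finset.sum_congr rfl fun j hj => ?_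
    rw [Finset.sum_neg_distrib, ← Finset.sum_mul, ← hq j hj]
  have e3 : Real.log S = ∑ i ∈ I, ∑ j ∈ J, r i j * Real.log S := by
    simp_rw [← Finset.sum_mul]; rw [h1, one_mul]
  have key : ∀ i ∈ I, ∀ j ∈ J, 2 * r i j - p i * q j - (r i j)^2/S ≤
      r i j * Real.log S + -(r i j * Real.log (p i)) + -(r i j * Real.log (q j)) := by
    intro i hi j hj
    have hpr : r i j ≤ p i := by
      rw [hp i hi]; exact Finset.single_le_sum (f := fun j => r i j) (fun j _ => hr i j) hj
    have hqr : r i j ≤ q j := by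
      rw [hq j hj]; exact Finset.single_le_sum (f := fun i => r i j) (fun i _ => hr i j) hi
    rcases (hr i j).eq_or_lt with h0 | h0
    · rw [← h0] at hpr hqr ⊢
      have := mul_nonneg hpr hqr
      simp; linarith
    · have hp0 : 0 < p i := h0.trans_le hpr
      have hq0 : 0 < q j := h0.trans_le hqr
      have l1 := Real.log_le_sub_one_of_pos (show 0 < p i * q j / r i j by positivity)
      have l2 := Real.log_le_sub_one_of_pos (show 0 < r i j / S by positivity)
      rw [Real.log_div (by positivity) (by positivity), Real.log_mul (by positivity) (by positivity)] at l1
      rw [Real.log_div (by positivity) (by positivity)] at l2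
      have l3 := mul_le_mul_of_nonneg_left (add_le_add l1 l2) h0.le
      have l4 : r i j * (p i * q j / r i j - 1 + (r i j / S - 1)) = p i * q j + (r i j)^2/S - 2 * r i j := by
        field_simp; ring
      rw [l4] at l3
      nlinarith
  have sum := Finset.sum_le_sum fun i hi => Finset.sum_le_sum fun j hj => key i hi j hj
  simp only [Finset.sum_add_distrib, Finset.sum_sub_distrib] at sum
  rw [← e1, ← e2, ← e3] at sum
  have t1 : ∑ i ∈ I, ∑ j ∈ J, 2 * r i j = 2 := by
    simp_rw [← Finset.mul_sum]; rw [h1]; norm_num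
  have t2 : ∑ i ∈ I, ∑ j ∈ J, p i * q j = 1 := by
    rw [← Finset.sum_mul_sum, hpq, hqq]; norm_num
  have t3 : ∑ i ∈ I, ∑ j ∈ J, (r i j)^2/S ≤ 1 := by
    simp_rw [← Finset.sum_div]; rw [div_le_one hS]; exact h2
  linarith

lemma Hn_eq_s11 {Ω : Type*} [MeasurableSpace Ω] (P : Measure Ω) (n : ℕ) (f : Ω → ℝ) (I : Finset ℤ)
    (hI : ∀ᵐ ω ∂P, ⌊(2:ℝ)^n * f ω⌋ ∈ I) :
    Hn P n f * Real.log 2 = ∑ k ∈ I, -(P.real ((fun ω => ⌊(2:ℝ)^n * f ω⌋) ⁻¹' {k}) *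
      Real.log (P.real ((fun ω => ⌊(2:ℝ)^n * f ω⌋) ⁻¹' {k}))) := by
  have h2 : (2:ℝ)^n ≠ 0 := by positivity
  have hinj : Function.Injective (fun k : ℤ => (k:ℝ)/(2:ℝ)^n) := by
    intro k l h
    have h' : (k:ℝ)/(2:ℝ)^n = (l:ℝ)/(2:ℝ)^n := h
    rw [div_left_inj' h2] at h'
    exact_mod_cast h'
  have hpre : ∀ k : ℤ, (fun ω => Dn n (f ω)) ⁻¹' {(k:ℝ)/(2:ℝ)^n} = (fun ω => ⌊(2:ℝ)^n * f ω⌋) ⁻¹' {k} := by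
    intro k; ext ω
    simp only [Set.mem_preimage, Set.mem_singleton_iff, Dn]
    exact hinj.eq_iff
  unfold Hn entOf
  rw [tsum_eq_sum (s := I.image (fun k : ℤ => (k:ℝ)/(2:ℝ)^n)), Finset.sum_image (fun x _ y _ h => hinj h),
    Finset.sum_mul]
  · refine Finset.sum_congr rfl fun k _ => ?_
    rw [hpre k, Measure.real, Real.logb]
    have : Real.log 2 ≠ 0 := (Real.log_pos (by norm_num)).ne'
    field_simp
  · intro x hx
    have : P ((fun ω => Dn n (f ω)) ⁻¹' {x}) = 0 := by
      rw [← nonpos_iff_eq_zero]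
      refine le_trans (measure_mono ?_) (le_of_eq (ae_iff.1 hI))
      intro ω hω hI'
      apply hx
      rw [Finset.mem_image]
      exact ⟨_, hI', hω⟩
    simp [this]

lemma floor_mem (N f M : ℝ) (hN : 0 ≤ N) (h : |f| ≤ M) : ⌊N * f⌋ ∈ Finset.Icc ⌊-(N*M)⌋ ⌊N*M⌋ := by
  have := abs_le.1 h
  rw [Finset.mem_Icc]
  constructor
  · apply Int.floor_le_floor; nlinarith
  · apply Int.floor_le_floor; nlinarith

lemma fin_marg {τ : Measure (ℤ × ℤ)} [IsProbabilityMeasure τ] (J : Finset ℤ) (h : ∀ᵐ k ∂τ, k.2 ∈ J) (i : ℤ) :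
    (τ.map Prod.fst).real {i} = ∑ j ∈ J, τ.real {(i,j)} := by
  rw [map_measureReal_apply measurable_fst (measurableSet_singleton _),
    ← measureReal_biUnion_finset (f := fun j => {((i,j) : ℤ × ℤ)})]
  · apply measureReal_congr
    filter_upwards [h] with k hk
    apply propext
    change k.1 = i ↔ k ∈ (⋃ j ∈ J, {((i,j) : ℤ × ℤ)} : Set (ℤ × ℤ))
    simp only [Set.mem_iUnion, Set.mem_singleton_iff]
    constructor
    · intro h; exact ⟨k.2, hk, by rw [← h]⟩
    · rintro ⟨j, _, hj⟩; rw [hj]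
  · intro j _ j' _ hjj
    simpa [Function.onFun] using hjj
  · intro j _; exact measurableSet_singleton _

lemma fin_marg2 {τ : Measure (ℤ × ℤ)} [IsProbabilityMeasure τ] (I : Finset ℤ) (h : ∀ᵐ k ∂τ, k.1 ∈ I) (j : ℤ) :
    (τ.map Prod.snd).real {j} = ∑ i ∈ I, τ.real {(i,j)} := by
  rw [map_measureReal_apply measurable_snd (measurableSet_singleton _),
    ← measureReal_biUnion_finset (f := fun i => {((i,j) : ℤ × ℤ)})]
  · apply measureReal_congr
    filter_upwards [h] with k hk
    apply propext
    change k.2 = j ↔ k ∈ (⋃ i ∈ I, {((i,j) : ℤ × ℤ)} : Set (ℤ × ℤ))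
    simp only [Set.mem_iUnion, Set.mem_singleton_iff]
    constructor
    · intro h; exact ⟨k.1, hk, by rw [← h]⟩
    · rintro ⟨j, _, hj⟩; rw [hj]
  · intro j _ j' _ hjj
    simpa [Function.onFun] using hjj
  · intro j _; exact measurableSet_singleton _

lemma tau_ent (τ : Measure (ℤ × ℤ)) [IsProbabilityMeasure τ] (I J : Finset ℤ)
    (hI : ∀ᵐ k ∂(τ.map Prod.fst), k ∈ I) (hJ : ∀ᵐ k ∂(τ.map Prod.snd), k ∈ J) (S : ℝ) (hS : 0 < S)
    (h : ∑' k : ℤ × ℤ, (τ {k})^2 ≤ ENNReal.ofReal S) :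
    -Real.log S ≤ ∑ i ∈ I, -((τ.map Prod.fst).real {i} * Real.log ((τ.map Prod.fst).real {i})) +
      ∑ j ∈ J, -((τ.map Prod.snd).real {j} * Real.log ((τ.map Prod.snd).real {j})) := by
  have hI' : ∀ᵐ k ∂τ, k.1 ∈ I := ae_of_ae_map measurable_fst.aemeasurable hI
  have hJ' : ∀ᵐ k ∂τ, k.2 ∈ J := ae_of_ae_map measurable_snd.aemeasurable hJ
  refine ent_joint I J (fun i j => τ.real {(i,j)}) _ _ (fun _ _ => measureReal_nonneg)
    (fun i _ => fin_marg J hJ' i) (fun j _ => fin_marg2 I hI' j) ?_ S hS ?_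
  · have := fun i => fin_marg (τ := τ) J hJ' i
    simp_rw [← this]
    have hp : IsProbabilityMeasure (τ.map Prod.fst) := Measure.isProbabilityMeasure_map measurable_fst.aemeasurable
    rw [sum_measureReal_singleton]
    rw [← probReal_univ (μ := τ.map Prod.fst)]
    apply measureReal_congr
    filter_upwards [hI] with k hk
    exact propext ⟨fun _ => trivial, fun _ => hk⟩
  · rw [← Finset.sum_product (s := I) (t := J) (f := fun k => τ.real {k}^2)]
    rw [← ENNReal.ofReal_le_ofReal_iff hS.le, ENNReal.ofReal_sum_of_nonneg (fun _ _ => by positivity)]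
    refine le_trans ?_ h
    refine le_trans (le_of_eq ?_) (ENNReal.sum_le_tsum (I ×ˢ J))
    refine Finset.sum_congr rfl fun k _ => ?_
    rw [ENNReal.ofReal_pow measureReal_nonneg, ofReal_measureReal]

lemma law_marg {Ω : Type*} [MeasurableSpace Ω] (P : Measure Ω) [IsProbabilityMeasure P] (X Y : Ω → ℝ)
    (hX : Measurable X) (hY : Measurable Y) (hi : IndepFun X Y P) (N a b : ℝ) :
    ((((P.map Y).prod (P.map Y)).prod (P.map X)).map (Th N a b)).map Prod.fst =
      P.map (fun ω => ⌊N * (X ω + Y ω)⌋) ∧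
    ((((P.map Y).prod (P.map Y)).prod (P.map X)).map (Th N a b)).map Prod.snd =
      P.map (fun ω => ⌊N * (a * X ω ^ 2 + b * Y ω ^ 2)⌋) := by
  have p1 : IsProbabilityMeasure (P.map X) := Measure.isProbabilityMeasure_map hX.aemeasurable
  have p2 : IsProbabilityMeasure (P.map Y) := Measure.isProbabilityMeasure_map hY.aemeasurable
  have hj : P.map (fun ω => (Y ω, X ω)) = (P.map Y).prod (P.map X) :=
    (indepFun_iff_map_prod_eq_prod_map_map hY.aemeasurable hX.aemeasurable).1 hi.symm
  have q1 : (((P.map Y).prod (P.map Y)).prod (P.map X)).map (Prod.map Prod.fst id) =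
      (P.map Y).prod (P.map X) :=
    (measurePreserving_fst.prod (MeasurePreserving.id _)).map_eq
  have q2 : (((P.map Y).prod (P.map Y)).prod (P.map X)).map (Prod.map Prod.snd id) =
      (P.map Y).prod (P.map X) :=
    (measurePreserving_snd.prod (MeasurePreserving.id _)).map_eq
  have g1 : Measurable (fun p : ℝ × ℝ => ⌊N * (p.2 + p.1)⌋) := Int.measurable_floor.comp (by fun_prop)
  have g2 : Measurable (fun p : ℝ × ℝ => ⌊N * (a * p.2^2 + b * p.1^2)⌋) :=
    Int.measurable_floor.comp (by fun_prop)
  constructor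
  · rw [Measure.map_map measurable_fst (meas_Th N a b)]
    have : (Prod.fst ∘ Th N a b) = (fun p : ℝ × ℝ => ⌊N * (p.2 + p.1)⌋) ∘ (Prod.map Prod.fst id) := by
      ext p; simp [Th]
    rw [this, ← Measure.map_map g1 (by fun_prop), q1, ← hj, Measure.map_map g1 (by fun_prop)]
    rfl
  · rw [Measure.map_map measurable_snd (meas_Th N a b)]
    have : (Prod.snd ∘ Th N a b) = (fun p : ℝ × ℝ => ⌊N * (a * p.2^2 + b * p.1^2)⌋) ∘ (Prod.map Prod.snd id) := by
      ext p; simp [Th]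
    rw [this, ← Measure.map_map g2 (by fun_prop), q2, ← hj, Measure.map_map g2 (by fun_prop)]
    rfl

lemma two_ent {Ω : Type*} [MeasurableSpace Ω] (P : Measure Ω) [IsProbabilityMeasure P] (X Y : Ω → ℝ)
    (hX : Measurable X) (hY : Measurable Y) (hi : IndepFun X Y P) (a b : ℝ) (n : ℕ) (Q : ℝ)
    (hXQ : ∀ᵐ ω ∂P, |X ω| ≤ Q) (hYQ : ∀ᵐ ω ∂P, |Y ω| ≤ Q) (S : ℝ) (hS : 0 < S)
    (h : ∑' k : ℤ × ℤ, ((((P.map Y).prod (P.map Y)).prod (P.map X)) (Th (2^n) a b ⁻¹' {k}))^2 ≤ ENNReal.ofReal S) :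
    -Real.log S ≤ (Hn P n (fun ω => X ω + Y ω) + Hn P n (fun ω => a * X ω ^ 2 + b * Y ω ^ 2)) * Real.log 2 := by
  have p1 : IsProbabilityMeasure (P.map X) := Measure.isProbabilityMeasure_map hX.aemeasurable
  have p2 : IsProbabilityMeasure (P.map Y) := Measure.isProbabilityMeasure_map hY.aemeasurable
  have hf1 : ∀ᵐ ω ∂P, ⌊(2:ℝ)^n * (X ω + Y ω)⌋ ∈ Finset.Icc ⌊-((2:ℝ)^n*(Q+Q))⌋ ⌊(2:ℝ)^n*(Q+Q)⌋ := by
    filter_upwards [hXQ, hYQ] with ω h1 h2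
    exact floor_mem _ _ _ (by positivity) ((abs_add_le _ _).trans (add_le_add h1 h2))
  have hf2 : ∀ᵐ ω ∂P, ⌊(2:ℝ)^n * (a * X ω^2 + b * Y ω^2)⌋ ∈
      Finset.Icc ⌊-((2:ℝ)^n*(|a| *Q^2+|b| *Q^2))⌋ ⌊(2:ℝ)^n*(|a| *Q^2+|b| *Q^2)⌋ := by
    filter_upwards [hXQ, hYQ] with ω h1 h2
    refine floor_mem _ _ _ (by positivity) ((abs_add_le _ _).trans ?_)
    rw [abs_mul, abs_mul, abs_pow, abs_pow]
    gcongr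
  have g1 : Measurable (fun ω => ⌊(2:ℝ)^n * (X ω + Y ω)⌋) := Int.measurable_floor.comp (by fun_prop)
  have g2 : Measurable (fun ω => ⌊(2:ℝ)^n * (a * X ω^2 + b * Y ω^2)⌋) := Int.measurable_floor.comp (by fun_prop)
  rw [add_mul, Hn_eq_s11 P n _ _ hf1, Hn_eq_s11 P n _ _ hf2]
  obtain ⟨l1, l2⟩ := law_marg P X Y hX hY hi (2^n) a b
  have hpt := Measure.isProbabilityMeasure_map (μ := ((P.map Y).prod (P.map Y)).prod (P.map X)) (meas_Th (2^n) a b).aemeasurable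
  have := tau_ent ((((P.map Y).prod (P.map Y)).prod (P.map X)).map (Th (2^n) a b))
    (Finset.Icc ⌊-((2:ℝ)^n*(Q+Q))⌋ ⌊(2:ℝ)^n*(Q+Q)⌋)
    (Finset.Icc ⌊-((2:ℝ)^n*(|a| *Q^2+|b| *Q^2))⌋ ⌊(2:ℝ)^n*(|a| *Q^2+|b| *Q^2)⌋)
    (by rw [l1]; exact (ae_map_iff g1.aemeasurable (Set.toFinite _).measurableSet).2 hf1)
    (by rw [l2]; exact (ae_map_iff g2.aemeasurable (Set.toFinite _).measurableSet).2 hf2) S hS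
    (by
      refine le_trans (le_of_eq ?_) h
      congr 1; ext k
      rw [Measure.map_apply (meas_Th _ _ _) (measurableSet_singleton _)])
  rw [l1, l2] at this
  simp only [map_measureReal_apply g1 (measurableSet_singleton _),
    map_measureReal_apply g2 (measurableSet_singleton _)] at this
  exact this

lemma S_num (Q M N a b s s₁ s₂ : ℝ) (hQ : 1 ≤ Q) (hM : M = 1 + |a| + 1/|a| + 1/|b|) (ha : a ≠ 0) (hb : b ≠ 0)
    (hN : 1 ≤ N) (hs : 1/2 < s) (hs1 : s < 1) (h1 : 0 ≤ s₁) (h1' : s₁ ≤ 1) (h2 : 0 ≤ s₂) (h2' : s₂ ≤ 1)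
    (h12 : 2*s ≤ s₁ + s₂) (hc : s - (1-s)/4 ≤ s₁) :
    (Q * (2/N)^s₁) * (2 * (2 * (N^((1-s)/2) / (2*|a|)) * ((1 + 3*Q*|a|)/N) +
        (400 * Q^2 * (N^((1-s)/2)) ^ (-(s-1/2))) * (32 * Q^2 * max 1 (1/|b|) * ((1 + 3*Q*|a|)/N) ^ s₂)))
      ≤ 409600 * Q^6 * M^2 * N^(-(2*(s + (s-1/2)*(1-s)/4))) := by
  have hN0 : 0 < N := by linarith
  have ha0 : 0 < |a| := by positivity
  have hb0 : 0 < |b| := by positivity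
  have ha1 : 0 < 1/|a| := by positivity
  have hb1 : 0 < 1/|b| := by positivity
  have hM1 : 1 ≤ M := by linarith
  have hQ0 : 0 < Q := by linarith
  have hM0 : 0 < M := by linarith
  have b1 : (2/N)^s₁ ≤ 2 * N^(-s₁) := by
    rw [div_rpow (by norm_num) hN0.le, rpow_neg hN0.le, div_eq_mul_inv]
    gcongr
    calc (2:ℝ)^s₁ ≤ 2^(1:ℝ) := by apply rpow_le_rpow_of_exponent_le <;> linarith
      _ = 2 := rpow_one _
  have b2 : (1 + 3*Q*|a|) ≤ 4*Q*M := by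
    have : 1 ≤ Q * M := by nlinarith
    have : Q * |a| ≤ Q * M := by gcongr; linarith
    linarith
  have b3 : ((1 + 3*Q*|a|)/N)^s₂ ≤ 4*Q*M * N^(-s₂) := by
    rw [div_rpow (by positivity) hN0.le, rpow_neg hN0.le, div_eq_mul_inv]
    gcongr
    calc (1 + 3*Q*|a|)^s₂ ≤ (1 + 3*Q*|a|)^(1:ℝ) := by
          apply rpow_le_rpow_of_exponent_le _ h2'
          have : 0 ≤ 3*Q*|a| := by positivity
          linarith
      _ = (1 + 3*Q*|a|) := rpow_one _
      _ ≤ _ := b2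
  have b4 : max 1 (1/|b|) ≤ M := by
    apply max_le <;> linarith
  have b5 : (N^((1-s)/2) / (2*|a|)) ≤ M * N^((1-s)/2) := by
    have : N^((1-s)/2) / (2*|a|) = (1/2*(1/|a|)) * N^((1-s)/2) := by field_simp
    rw [this]
    gcongr; linarith
  have b6 : (N^((1-s)/2)) ^ (-(s-1/2)) = N^(-((s-1/2)*(1-s)/2)) := by
    rw [← rpow_mul hN0.le]; congr 1; ring
  rw [b6]
  set ε := (s-1/2)*(1-s)/4 with hε
  have hε8 : ε ≤ (1-s)/8 := by rw [hε]; nlinarith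
  have b7 : N^(-s₁) * (N^((1-s)/2) * N⁻¹) ≤ N^(-(2*(s+ε))) := by
    rw [← rpow_neg_one, ← rpow_add hN0, ← rpow_add hN0]
    apply rpow_le_rpow_of_exponent_le hN
    linarith
  have b8 : N^(-s₁) * (N^(-((s-1/2)*(1-s)/2)) * N^(-s₂)) ≤ N^(-(2*(s+ε))) := by
    rw [← rpow_add hN0, ← rpow_add hN0]
    apply rpow_le_rpow_of_exponent_le hN
    rw [hε]; linarith
  calc _ ≤ (Q * (2 * N^(-s₁))) * (2 * (2 * (M * N^((1-s)/2)) * ((4*Q*M)/N) +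
        (400 * Q^2 * N^(-((s-1/2)*(1-s)/2))) * (32 * Q^2 * M * (4*Q*M * N^(-s₂))))) := by
        gcongr
    _ = 32 * Q^2 * M^2 * (N^(-s₁) * (N^((1-s)/2) * N⁻¹)) +
        204800 * Q^6 * M^2 * (N^(-s₁) * (N^(-((s-1/2)*(1-s)/2)) * N^(-s₂))) := by
        rw [div_eq_mul_inv]; ring
    _ ≤ 204800 * Q^6 * M^2 * N^(-(2*(s+ε))) + 204800 * Q^6 * M^2 * N^(-(2*(s+ε))) := by
        have : 32 * Q^2 ≤ 204800 * Q^6 := by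
          have := pow_le_pow_right₀ hQ (show 2 ≤ 6 by norm_num)
          nlinarith [pow_pos hQ0 6]
        gcongr
    _ = _ := by ring

lemma S_total (μ ν : Measure ℝ) [IsProbabilityMeasure μ] [IsProbabilityMeasure ν] (Q : ℝ) (hQ : 1 ≤ Q)
    (hμ : ∀ᵐ x ∂μ, |x| ≤ Q) (hν : ∀ᵐ x ∂ν, |x| ≤ Q) (hν' : ∀ᵐ x ∂ν, 1/Q ≤ |x|)
    (M N a b s s₁ s₂ : ℝ) (hM : M = 1 + |a| + 1/|a| + 1/|b|) (ha : a ≠ 0) (hb : b ≠ 0)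
    (hN : 1 ≤ N) (hs : 1/2 < s) (hs1 : s < 1) (h1 : 0 ≤ s₁) (h1' : s₁ ≤ 1) (h2 : 0 ≤ s₂) (h2' : s₂ ≤ 1)
    (h12 : 2*s ≤ s₁ + s₂) (hc : s - (1-s)/4 ≤ s₁) (hF : Fr μ s₁ Q) (hF2 : Fr ν s₂ Q) :
    ∑' k : ℤ × ℤ, (((ν.prod ν).prod μ) (Th N a b ⁻¹' {k}))^2 ≤
      ENNReal.ofReal (409600 * Q^6 * M^2 * N^(-(2*(s + (s-1/2)*(1-s)/4)))) := by
  have hN0 : 0 < N := by linarith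
  have hQ0 : 0 < Q := by linarith
  refine (S_bound μ ν Q hQ hμ s₁ hF N a b hN).trans ?_
  refine (mul_le_mul_right (J_bound μ ν Q hQ hμ hν hν' s₁ s₂ h1 h1' h2 h2' hF hF2 (N^((1-s)/2)) s
    (one_le_rpow hN (by linarith)) h12 hs a b ha hb ((1 + 3*Q*|a|)/N) (by positivity)) _).trans ?_
  rw [← ENNReal.ofReal_mul (by positivity)]
  exact ENNReal.ofReal_le_ofReal (S_num Q M N a b s s₁ s₂ hQ hM ha hb hN hs hs1 h1 h1' h2 h2' h12 hc)

lemma one_ent {Ω : Type*} [MeasurableSpace Ω] (P : Measure Ω) [IsProbabilityMeasure P] (X Y : Ω → ℝ)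
    (hX : Measurable X) (hY : Measurable Y) (hi : IndepFun X Y P) (n : ℕ) (Q s₂ : ℝ) (hQ : 1 ≤ Q)
    (h2 : 0 ≤ s₂) (h2' : s₂ ≤ 1)
    (hXQ : ∀ᵐ ω ∂P, |X ω| ≤ Q) (hYQ : ∀ᵐ ω ∂P, |Y ω| ≤ Q) (hF : Fr (P.map Y) s₂ Q) :
    n * s₂ * Real.log 2 - Real.log 2 - Real.log Q ≤ Hn P n (fun ω => X ω + Y ω) * Real.log 2 := by
  have p1 : IsProbabilityMeasure (P.map X) := Measure.isProbabilityMeasure_map hX.aemeasurable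
  have p2 : IsProbabilityMeasure (P.map Y) := Measure.isProbabilityMeasure_map hY.aemeasurable
  have hj : P.map (fun ω => (Y ω, X ω)) = (P.map Y).prod (P.map X) :=
    (indepFun_iff_map_prod_eq_prod_map_map hY.aemeasurable hX.aemeasurable).1 hi.symm
  have hf1 : ∀ᵐ ω ∂P, ⌊(2:ℝ)^n * (X ω + Y ω)⌋ ∈ Finset.Icc ⌊-((2:ℝ)^n*(Q+Q))⌋ ⌊(2:ℝ)^n*(Q+Q)⌋ := by
    filter_upwards [hXQ, hYQ] with ω h1 h2
    exact floor_mem _ _ _ (by positivity) ((abs_add_le _ _).trans (add_le_add h1 h2))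
  have g1 : Measurable (fun ω => ⌊(2:ℝ)^n * (X ω + Y ω)⌋) := Int.measurable_floor.comp (by fun_prop)
  have g0 : Measurable (fun p : ℝ × ℝ => ⌊(2:ℝ)^n * (p.2 + p.1)⌋) := Int.measurable_floor.comp (by fun_prop)
  have hN0 : (0:ℝ) < 2^n := by positivity
  have hQ0 : 0 < Q := by linarith
  set I := Finset.Icc ⌊-((2:ℝ)^n*(Q+Q))⌋ ⌊(2:ℝ)^n*(Q+Q)⌋ with hIdef
  rw [Hn_eq_s11 P n _ _ hf1]
  set p : ℤ → ℝ := fun k => P.real ((fun ω => ⌊(2:ℝ)^n * (X ω + Y ω)⌋) ⁻¹' {k}) with hp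
  have hsum : ∑ k ∈ I, p k = 1 := by
    have hpr : IsProbabilityMeasure (P.map (fun ω => ⌊(2:ℝ)^n * (X ω + Y ω)⌋)) :=
      Measure.isProbabilityMeasure_map g1.aemeasurable
    have : ∀ k, p k = (P.map (fun ω => ⌊(2:ℝ)^n * (X ω + Y ω)⌋)).real {k} := by
      intro k; rw [map_measureReal_apply g1 (measurableSet_singleton _)]
    simp_rw [this]
    rw [sum_measureReal_singleton, ← probReal_univ (μ := P.map (fun ω => ⌊(2:ℝ)^n * (X ω + Y ω)⌋))]
    apply measureReal_congr
    filter_upwards [(ae_map_iff g1.aemeasurable (p := fun k => k ∈ I) (Set.toFinite _).measurableSet).2 hf1] with k hk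
    exact propext ⟨fun _ => trivial, fun _ => hk⟩
  have hbd : ∀ k, p k ≤ Q * (2/(2:ℝ)^n)^s₂ := by
    intro k
    apply ENNReal.toReal_le_of_le_ofReal (by positivity)
    have : P ((fun ω => ⌊(2:ℝ)^n * (X ω + Y ω)⌋) ⁻¹' {k}) =
        ((P.map Y).prod (P.map X)) ((fun p : ℝ × ℝ => ⌊(2:ℝ)^n * (p.2 + p.1)⌋) ⁻¹' {k}) := by
      rw [← hj, Measure.map_apply (by fun_prop) (g0 (measurableSet_singleton _))]
      rfl
    rw [this, Measure.prod_apply_symm (g0 (measurableSet_singleton _))]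
    calc _ ≤ ∫⁻ x, ENNReal.ofReal (Q * (2/(2:ℝ)^n)^s₂) ∂(P.map X) := by
          refine lintegral_mono fun x => ?_
          refine le_trans (measure_mono ?_) (hF (k/2^n - x) (2/2^n) (by positivity))
          intro y hy
          have hy' : ⌊(2:ℝ)^n * (x + y)⌋ = k := hy
          rw [Int.floor_eq_iff] at hy'
          rw [Metric.mem_ball, Real.dist_eq]
          have e : y - ((k:ℝ)/2^n - x) = ((2:ℝ)^n * (x+y) - k)/2^n := by field_simp; ring
          rw [e, abs_div, abs_of_pos hN0]
          gcongr
          rw [abs_lt]; constructor <;> linarith [hy'.1, hy'.2]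
      _ = _ := by simp
  have hlog : Real.log (Q * (2/(2:ℝ)^n)^s₂) ≤ -(n * s₂ * Real.log 2 - Real.log 2 - Real.log Q) := by
    rw [Real.log_mul (by positivity) (by positivity), Real.log_rpow (by positivity),
      Real.log_div (by norm_num) (by positivity), Real.log_pow]
    have : 0 < Real.log 2 := Real.log_pos (by norm_num)
    nlinarith
  calc _ ≤ -Real.log (Q * (2/(2:ℝ)^n)^s₂) := by linarith
    _ = ∑ k ∈ I, -(p k * Real.log (Q * (2/(2:ℝ)^n)^s₂)) := by
        rw [Finset.sum_neg_distrib, ← Finset.sum_mul, hsum, one_mul]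
    _ ≤ _ := by
        refine Finset.sum_le_sum fun k _ => ?_
        rcases (measureReal_nonneg (μ := P) (s := ((fun ω => ⌊(2:ℝ)^n * (X ω + Y ω)⌋) ⁻¹' {k}))).eq_or_lt with h | h
        · have : p k = 0 := h.symm
          change -(p k * _) ≤ -(p k * Real.log (p k))
          rw [this]; simp
        · have hk : 0 < p k := h
          have := Real.log_le_log hk (hbd k)
          have := mul_le_mul_of_nonneg_left this hk.le
          linarith

lemma main_Q {Ω : Type*} [MeasurableSpace Ω] (P : Measure Ω) [IsProbabilityMeasure P] (X Y : Ω → ℝ)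
    (hX : Measurable X) (hY : Measurable Y) (hi : IndepFun X Y P) (n : ℕ) (Q : ℝ) (hQ : 1 ≤ Q)
    (M a b s s₁ s₂ : ℝ) (hM : M = 1 + |a| + 1/|a| + 1/|b|) (ha : a ≠ 0) (hb : b ≠ 0)
    (hs : 1/2 < s) (hs1 : s < 1) (h1 : 0 ≤ s₁) (h1' : s₁ ≤ 1) (h2 : 0 ≤ s₂) (h2' : s₂ ≤ 1)
    (h12 : 2*s ≤ s₁ + s₂)
    (hXQ : ∀ᵐ ω ∂P, |X ω| ≤ Q) (hYQ : ∀ᵐ ω ∂P, |Y ω| ≤ Q) (hYQ' : ∀ᵐ ω ∂P, 1/Q ≤ |Y ω|)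
    (hF : Fr (P.map X) s₁ Q) (hF2 : Fr (P.map Y) s₂ Q) :
    n * (s + (s-1/2)*(1-s)/4) - 10 - 3 * Real.logb 2 Q - Real.logb 2 M ≤
      max (Hn P n (fun ω => X ω + Y ω)) (Hn P n (fun ω => a * X ω ^ 2 + b * Y ω ^ 2)) := by
  have p1 : IsProbabilityMeasure (P.map X) := Measure.isProbabilityMeasure_map hX.aemeasurable
  have p2 : IsProbabilityMeasure (P.map Y) := Measure.isProbabilityMeasure_map hY.aemeasurable
  have hl : 0 < Real.log 2 := Real.log_pos (by norm_num)
  have hM1 : 1 ≤ M := by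
    have : 0 ≤ |a| + 1/|a| + 1/|b| := by positivity
    linarith
  have hlQ : 0 ≤ Real.logb 2 Q := Real.logb_nonneg (by norm_num) hQ
  have hlM : 0 ≤ Real.logb 2 M := Real.logb_nonneg (by norm_num) hM1
  have hQe : Real.log Q = Real.logb 2 Q * Real.log 2 := by rw [Real.logb]; field_simp
  have hMe : Real.log M = Real.logb 2 M * Real.log 2 := by rw [Real.logb]; field_simp
  set ε := (s-1/2)*(1-s)/4 with hε
  have hε8 : ε ≤ (1-s)/8 := by rw [hε]; nlinarith
  by_cases hc : s - (1-s)/4 ≤ s₁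
  · have hN : (1:ℝ) ≤ 2^n := one_le_pow₀ (by norm_num)
    have hS := S_total (P.map X) (P.map Y) Q hQ
      ((ae_map_iff hX.aemeasurable (measurableSet_le (by fun_prop) (by fun_prop))).2 hXQ)
      ((ae_map_iff hY.aemeasurable (measurableSet_le (by fun_prop) (by fun_prop))).2 hYQ)
      ((ae_map_iff hY.aemeasurable (measurableSet_le (by fun_prop) (by fun_prop))).2 hYQ')
      M (2^n) a b s s₁ s₂ hM ha hb hN hs hs1 h1 h1' h2 h2' h12 hc hF hF2
    have := two_ent P X Y hX hY hi a b n Q hXQ hYQ _ (by positivity) hS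
    rw [Real.log_mul (by positivity) (by positivity), Real.log_mul (by positivity) (by positivity),
      Real.log_mul (by positivity) (by positivity), Real.log_rpow (by positivity), Real.log_pow,
      Real.log_pow, Real.log_pow, hQe, hMe, ← hε] at this
    have h4 : Real.log 409600 ≤ 20 * Real.log 2 := by
      have : (20:ℝ) * Real.log 2 = Real.log (2^20) := by rw [Real.log_pow]; norm_num
      rw [this]
      apply Real.log_le_log <;> norm_num
    have m1 := le_max_left (Hn P n (fun ω => X ω + Y ω)) (Hn P n (fun ω => a * X ω ^ 2 + b * Y ω ^ 2))
    have m2 := le_max_right (Hn P n (fun ω => X ω + Y ω)) (Hn P n (fun ω => a * X ω ^ 2 + b * Y ω ^ 2))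
    set H := max (Hn P n (fun ω => X ω + Y ω)) (Hn P n (fun ω => a * X ω ^ 2 + b * Y ω ^ 2))
    push_cast at this
    have h5 : (n * (s + ε) - 10 - 3 * Real.logb 2 Q - Real.logb 2 M) * 2 * Real.log 2 ≤
      (Hn P n (fun ω => X ω + Y ω) + Hn P n (fun ω => a * X ω ^ 2 + b * Y ω ^ 2)) * Real.log 2 := by
      linarith
    have h6 := le_of_mul_le_mul_right h5 hl
    linarith
  · push Not at hc
    have := one_ent P X Y hX hY hi n Q s₂ hQ h2 h2' hXQ hYQ hF2
    rw [hQe] at this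
    have h5 : (n * s₂ - 1 - Real.logb 2 Q) * Real.log 2 ≤ Hn P n (fun ω => X ω + Y ω) * Real.log 2 := by
      linarith
    have h6 := le_of_mul_le_mul_right h5 hl
    refine le_trans ?_ (le_max_left _ _)
    have h7 : (n:ℝ) * (s+ε) ≤ n * s₂ := by gcongr; linarith
    linarith

lemma logPlus_one_le (x : ℝ) : logPlus x = Real.logb 2 (max x 1) ∨ x ≤ 0 := by
  rcases le_or_gt x 0 with h | h
  · exact Or.inr h
  left
  unfold logPlus
  rcases le_total x 1 with h1 | h1
  · rw [max_eq_right h1, Real.logb_one, max_eq_right (Real.logb_nonpos (by norm_num) h.le h1)]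
  · rw [max_eq_left h1, max_eq_left (Real.logb_nonneg (by norm_num) h1)]

lemma logPlus_eq {x : ℝ} (h : 0 < x) : Real.logb 2 (max x 1) = logPlus x := by
  rcases logPlus_one_le x with h' | h'
  · exact h'.symm
  · linarith

lemma frost_lower {Ω : Type*} [MeasurableSpace Ω] (P : Measure Ω) [IsProbabilityMeasure P] (X : Ω → ℝ)
    (s C c : ℝ) (hC : 0 < C) (hc : 0 < c) (hs : 0 ≤ s) (hs' : s ≤ 1) (h : ∀ᵐ ω ∂P, |X ω| ≤ c)
    (hF : Frostman P X s C) : -Real.logb 2 C ≤ 1 + logPlus c := by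
  have h1 : P (X ⁻¹' Metric.ball 0 (2*c)) = 1 := by
    rw [← measure_univ (μ := P)]
    apply measure_congr
    filter_upwards [h] with ω hω
    refine propext ⟨fun _ => trivial, fun _ => ?_⟩
    change X ω ∈ Metric.ball 0 (2*c)
    rw [Metric.mem_ball, Real.dist_eq, sub_zero]; linarith
  have h2 := hF 0 (2*c) (by positivity)
  rw [h1] at h2
  have h3 : (2*c)^s ≤ 2 * max c 1 := by
    have hm : 1 ≤ max c 1 := le_max_right _ _
    calc (2*c)^s ≤ (2 * max c 1)^s := by gcongr; exact le_max_left _ _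
      _ ≤ (2 * max c 1)^(1:ℝ) := rpow_le_rpow_of_exponent_le (by linarith) hs'
      _ = _ := rpow_one _
  have h4 : 1 ≤ C * (2 * max c 1) := by
    calc (1:ℝ) ≤ C * (2*c)^s := by simpa using h2
      _ ≤ _ := by gcongr
  have hm0 : 0 < max c 1 := lt_max_of_lt_right one_pos
  have h5 := Real.logb_nonneg (b := 2) (by norm_num) h4
  rw [Real.logb_mul hC.ne' (by positivity), Real.logb_mul (by norm_num) (by positivity),
    Real.logb_self_eq_one (by norm_num), logPlus_eq hc] at h5
  linarith

lemma frost_Fr {Ω : Type*} [MeasurableSpace Ω] (P : Measure Ω) [IsProbabilityMeasure P] (X : Ω → ℝ)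
    (hX : Measurable X) (s C Q : ℝ) (hCQ : C ≤ Q) (hF : Frostman P X s C) : Fr (P.map X) s Q := by
  intro z r hr
  rw [Measure.map_apply hX measurableSet_ball]
  rw [← ENNReal.ofReal_toReal (measure_ne_top P _)]
  apply ENNReal.ofReal_le_ofReal
  refine (hF z r hr).trans ?_
  gcongr


/-- Lemma (diagonal forms with independent random variables): there is an absolute `A > 0`
such that for each `1/2 < s < 1` there is `ε₁ = ε₁(s) > 0`, and for each pair of nonzero
reals `α, β` a constant `B = B(α,β,s) > 0`, such that: whenever `C₁, C₂ > 0`,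
`0 < c₂ < c₁`, `X, Y` are independent with essential ranges in `[-c₁,-c₂] ∪ [c₂,c₁]`,
`X` is `(s₁,C₁)`-Frostman, `Y` is `(s₂,C₂)`-Frostman, `0 ≤ s₁,s₂ ≤ 1`, `s₁+s₂ ≥ 2s`, then
for all `n`, `max{Hₙ(X+Y), Hₙ(αX²+βY²)} ≥ n(s+ε₁) − A(log₊(C₁C₂)+log₊c₁+log₊(1/c₂)) − B`. -/
theorem diagonal_indep_entropy :
    ∃ A : ℝ, 0 < A ∧
      ∀ s : ℝ, 1 / 2 < s → s < 1 →
        ∃ ε₁ : ℝ, 0 < ε₁ ∧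
          ∀ (a b : ℝ), a ≠ 0 → b ≠ 0 →
            ∃ B : ℝ, 0 < B ∧
              ∀ (C₁ C₂ c₁ c₂ : ℝ), 0 < C₁ → 0 < C₂ → 0 < c₂ → c₂ < c₁ →
                ∀ (Ω : Type) (mΩ : MeasurableSpace Ω) (P : Measure Ω),
                  IsProbabilityMeasure P →
                  ∀ (X Y : Ω → ℝ), Measurable X → Measurable Y →
                    IndepFun X Y P →
                    (∀ᵐ ω ∂P,
                      X ω ∈ Set.Icc (-c₁) (-c₂) ∪ Set.Icc c₂ c₁ ∧
                      Y ω ∈ Set.Icc (-c₁) (-c₂) ∪ Set.Icc c₂ c₁) →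
                    ∀ (s₁ s₂ : ℝ), 0 ≤ s₁ → s₁ ≤ 1 → 0 ≤ s₂ → s₂ ≤ 1 → 2 * s ≤ s₁ + s₂ →
                      Frostman P X s₁ C₁ → Frostman P Y s₂ C₂ →
                      ∀ n : ℕ,
                        (n : ℝ) * (s + ε₁) -
                            A * (logPlus (C₁ * C₂) + logPlus c₁ + logPlus (1 / c₂)) - B ≤
                          max (Hn P n (fun ω => X ω + Y ω))
                            (Hn P n (fun ω => a * X ω ^ 2 + b * Y ω ^ 2)) := by
  refine ⟨9, by norm_num, fun s hs hs1 => ⟨(s-1/2)*(1-s)/4, ?_, fun a b ha hb => ?_⟩⟩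
  · have : 0 < (s-1/2)*(1-s) := mul_pos (by linarith) (by linarith)
    linarith
  have hM1 : 1 ≤ 1 + |a| + 1/|a| + 1/|b| := by
    have : 0 ≤ |a| + 1/|a| + 1/|b| := by positivity
    linarith
  have hlM := Real.logb_nonneg (b := 2) (by norm_num) hM1
  refine ⟨16 + Real.logb 2 (1 + |a| + 1/|a| + 1/|b|), by linarith, ?_⟩
  intro C₁ C₂ c₁ c₂ hC₁ hC₂ hc₂ hc Ω mΩ P hP X Y hX hY hi hae s₁ s₂ h1 h1' h2 h2' h12 hF1 hF2 n
  have hc₁ : 0 < c₁ := hc₂.trans hc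
  have habs : ∀ x : ℝ, x ∈ Set.Icc (-c₁) (-c₂) ∪ Set.Icc c₂ c₁ → |x| ≤ c₁ ∧ c₂ ≤ |x| := by
    rintro x (⟨hx, hx'⟩ | ⟨hx, hx'⟩)
    · rw [abs_of_neg (by linarith)]; constructor <;> linarith
    · rw [abs_of_pos (by linarith)]; constructor <;> linarith
  have aX : ∀ᵐ ω ∂P, |X ω| ≤ c₁ := by
    filter_upwards [hae] with ω h using (habs _ h.1).1
  have aY : ∀ᵐ ω ∂P, |Y ω| ≤ c₁ := by
    filter_upwards [hae] with ω h using (habs _ h.2).1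
  have aY' : ∀ᵐ ω ∂P, c₂ ≤ |Y ω| := by
    filter_upwards [hae] with ω h using (habs _ h.2).2
  have k1 := frost_lower P X s₁ C₁ c₁ hC₁ hc₁ h1 h1' aX hF1
  have k2 := frost_lower P Y s₂ C₂ c₁ hC₂ hc₁ h2 h2' aY hF2
  have u1 : 1 ≤ max C₁ 1 := le_max_right _ _
  have u2 : 1 ≤ max C₂ 1 := le_max_right _ _
  have u3 : 1 ≤ max c₁ 1 := le_max_right _ _
  have u4 : 1 ≤ max (1/c₂) 1 := le_max_right _ _
  have v12 : 1 ≤ max C₁ 1 * max C₂ 1 := one_le_mul_of_one_le_of_one_le u1 u2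
  have v34 : 1 ≤ max c₁ 1 * max (1/c₂) 1 := one_le_mul_of_one_le_of_one_le u3 u4
  obtain ⟨Q, hQdef⟩ : ∃ Q, Q = (max C₁ 1 * max C₂ 1) * (max c₁ 1 * max (1/c₂) 1) := ⟨_, rfl⟩
  have hQ : 1 ≤ Q := by rw [hQdef]; exact one_le_mul_of_one_le_of_one_le v12 v34
  have w12 : max C₁ 1 * max C₂ 1 ≤ Q := by rw [hQdef]; exact le_mul_of_one_le_right (by linarith) v34
  have w34 : max c₁ 1 * max (1/c₂) 1 ≤ Q := by rw [hQdef]; exact le_mul_of_one_le_left (by linarith) v12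
  have q1 : C₁ ≤ Q := (le_max_left _ _).trans ((le_mul_of_one_le_right (by linarith) u2).trans w12)
  have q2 : C₂ ≤ Q := (le_max_left _ _).trans ((le_mul_of_one_le_left (by linarith) u1).trans w12)
  have q3 : c₁ ≤ Q := (le_max_left _ _).trans ((le_mul_of_one_le_right (by linarith) u4).trans w34)
  have q4 : 1/c₂ ≤ Q := (le_max_left _ _).trans ((le_mul_of_one_le_left (by linarith) u3).trans w34)
  have q5 : 1/Q ≤ c₂ := by
    rw [div_le_iff₀ (by linarith)]
    rw [div_le_iff₀ hc₂] at q4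
    linarith
  have main := main_Q P X Y hX hY hi n Q hQ _ a b s s₁ s₂ rfl ha hb hs hs1 h1 h1' h2 h2' h12
    (by filter_upwards [aX] with ω h using h.trans q3)
    (by filter_upwards [aY] with ω h using h.trans q3)
    (by filter_upwards [aY'] with ω h using q5.trans h)
    (frost_Fr P X hX s₁ C₁ Q q1 hF1) (frost_Fr P Y hY s₂ C₂ Q q2 hF2)
  refine le_trans ?_ main
  have hlQ : Real.logb 2 Q = logPlus C₁ + logPlus C₂ + (logPlus c₁ + logPlus (1/c₂)) := by
    rw [hQdef, Real.logb_mul (by positivity) (by positivity), Real.logb_mul (by positivity) (by positivity),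
      Real.logb_mul (by positivity) (by positivity), logPlus_eq hC₁, logPlus_eq hC₂, logPlus_eq hc₁,
      logPlus_eq (by positivity)]
  have np : ∀ x, 0 ≤ logPlus x := fun x => le_max_right _ _
  have e12 : Real.logb 2 (C₁ * C₂) ≤ logPlus (C₁*C₂) := le_max_left _ _
  rw [Real.logb_mul hC₁.ne' hC₂.ne'] at e12
  have n12 := np (C₁*C₂)
  have n3 := np c₁
  have n4 := np (1/c₂)
  have l1 : logPlus C₁ ≤ logPlus (C₁*C₂) + logPlus c₁ + 1 := max_le (by linarith) (by linarith)
  have l2 : logPlus C₂ ≤ logPlus (C₁*C₂) + logPlus c₁ + 1 := max_le (by linarith) (by linarith)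
  rw [hlQ]
  linarith
end
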